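/- arXiv:2309.03782 — 5 statements merged into one kernel-verified Lean document; each statement's English description precedes it below -/
import Mathlib

section
/- Let g̃_n be random positive continuous functions on [0,A] such that sup_{t∈[0,A]} |log g̃_n(t) − log g₀(t)| → 0 almost surely. Then for every fixed γ∈Γ, the criterion Q̃_n(γ) = (1/n)·Σ_{i=1}^n (yᵢ − log g̃_n(zᵢ) − log(1+γxᵢ))² converges almost surely, as n→∞, to σ²/(1−φ²) + (1/Δ)·∫₀^Δ [log(1+γ₀x(w)) − log(1+γx(w))]² dw. -/
open MeasureTheory ProbabilityTheory Filter Set Topology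

/-- The updated criterion `Q̃ₙ(γ)(ω)` in which the nonparametric component is replaced by
a given estimate `lg` of `log g`. -/
noncomputable def Qupd {Ω : Type*} (Δ γ₀ : ℝ) (x z g₀ : ℝ → ℝ) (ε : ℤ → Ω → ℝ)
    (lg : ℝ → ℝ) (n : ℕ) (γ : ℝ) (ω : Ω) : ℝ :=
  (1 / (n : ℝ)) * ∑ i ∈ Finset.Icc 1 n,
    ((Real.log (1 + γ₀ * x ((i : ℝ) * Δ / n)) + Real.log (g₀ (z ((i : ℝ) * Δ / n))) +
        ε (i : ℤ) ω)
      - lg (z ((i : ℝ) * Δ / n)) - Real.log (1 + γ * x ((i : ℝ) * Δ / n))) ^ 2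

lemma ae_tendsto_zero_of_summable {Ω : Type*} [MeasurableSpace Ω] {μ : Measure Ω}
    (f : ℕ → Ω → ℝ) (hf : ∀ m, Integrable (f m) μ) (h0 : ∀ m ω, 0 ≤ f m ω)
    (b : ℕ → ℝ) (hb : Summable b) (hfb : ∀ m, ∫ ω, f m ω ∂μ ≤ b m) :
    ∀ᵐ ω ∂μ, Tendsto (fun m => f m ω) atTop (𝓝 0) := by
  have hb0 : ∀ m, 0 ≤ b m := fun m => (integral_nonneg (h0 m)).trans (hfb m)
  have h1 : ∫⁻ ω, ∑' m, ENNReal.ofReal (f m ω) ∂μ ≠ ⊤ := by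
    rw [lintegral_tsum (fun m => (hf m).aestronglyMeasurable.aemeasurable.ennreal_ofReal)]
    have : ∀ m, ∫⁻ ω, ENNReal.ofReal (f m ω) ∂μ ≤ ENNReal.ofReal (b m) := by
      intro m
      rw [← ofReal_integral_eq_lintegral_ofReal (hf m) (Eventually.of_forall (h0 m))]
      exact ENNReal.ofReal_le_ofReal (hfb m)
    refine ne_top_of_le_ne_top ?_ (ENNReal.tsum_le_tsum this)
    exact hb.tsum_ofReal_ne_top
  have h2 := ae_lt_top' (AEMeasurable.tsum
    (fun m => (hf m).aestronglyMeasurable.aemeasurable.ennreal_ofReal)) h1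
  filter_upwards [h2] with ω hω
  have h3 := ENNReal.tendsto_atTop_zero_of_tsum_ne_top hω.ne
  have h4 := (ENNReal.tendsto_toReal ENNReal.zero_ne_top).comp h3
  simpa [Function.comp_def, ENNReal.toReal_ofReal, h0] using h4

lemma rajchman {Ω : Type*} [MeasurableSpace Ω] {μ : Measure Ω}
    (X : ℕ → Ω → ℝ) (C : ℝ) (hX : ∀ i, MemLp (X i) 2 μ)
    (horth : ∀ i j, i < j → ∫ ω, X i ω * X j ω ∂μ = 0)
    (hC : ∀ i, ∫ ω, X i ω ^ 2 ∂μ ≤ C) :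
    ∀ᵐ ω ∂μ, Tendsto (fun n : ℕ => (∑ i ∈ Finset.range n, X i ω) / n) atTop (𝓝 0) := by
  have hC0 : 0 ≤ C := (integral_nonneg (fun ω => sq_nonneg (X 0 ω))).trans (hC 0)
  have hint : ∀ i j, Integrable (fun ω => X i ω * X j ω) μ :=
    fun i j => (hX i).integrable_mul (hX j)
  have horth' : ∀ i j, i ≠ j → ∫ ω, X i ω * X j ω ∂μ = 0 := by
    intro i j hij
    rcases lt_or_gt_of_ne hij with h | h
    · exact horth i j h
    · rw [← horth j i h]; simp_rw [mul_comm]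
  have hS : ∀ n : ℕ, ∫ ω, (∑ i ∈ Finset.range n, X i ω) ^ 2 ∂μ ≤ n * C := by
    intro n
    simp_rw [sq, Finset.sum_mul_sum]
    rw [integral_finsetSum _ (fun i _ => integrable_finsetSum _ (fun j _ => hint i j))]
    calc _ ≤ ∑ i ∈ Finset.range n, C := by
          refine Finset.sum_le_sum fun i hi => ?_
          rw [integral_finsetSum _ (fun j _ => hint i j),
            Finset.sum_eq_single_of_mem i hi (fun j _ hj => horth' i j hj.symm)]
          simpa [sq] using hC i
      _ = _ := by simp
  have hSi : ∀ n : ℕ, Integrable (fun ω => (∑ i ∈ Finset.range n, X i ω) ^ 2) μ :=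
    fun n => (memLp_finsetSum _ (fun i _ => hX i)).integrable_sq
  have hDi : ∀ s : Finset ℕ, Integrable (fun ω => (∑ i ∈ s, |X i ω|) ^ 2) μ :=
    fun n => (memLp_finsetSum _ (fun i _ => (hX i).abs)).integrable_sq
  have hD : ∀ s : Finset ℕ, ∫ ω, (∑ i ∈ s, |X i ω|) ^ 2 ∂μ ≤ s.card * (s.card * C) := by
    intro s
    calc _ ≤ ∫ ω, s.card * ∑ i ∈ s, X i ω ^ 2 ∂μ := by
          refine integral_mono (hDi s) ?_ ?_
          · exact (integrable_finsetSum _ (fun i _ => (hX i).integrable_sq)).const_mul _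
          · intro ω
            simpa using sq_sum_le_card_mul_sum_sq (s := s) (f := fun i => |X i ω|)
      _ ≤ _ := by
          rw [integral_const_mul, integral_finsetSum _ (fun i _ => (hX i).integrable_sq)]
          gcongr
          calc _ ≤ ∑ i ∈ s, C := Finset.sum_le_sum fun i _ => hC i
            _ = _ := by simp
  have key := ae_tendsto_zero_of_summable (μ := μ)
    (fun m ω => ((∑ i ∈ Finset.range (m^2), X i ω) ^ 2
      + (∑ i ∈ Finset.Ico (m^2) ((m+1)^2), |X i ω|) ^ 2) / (m:ℝ)^4)
    (fun m => ((hSi _).add (hDi _)).div_const _) (fun m ω => by positivity)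
    (fun m => (10 * C) * (1 / (m:ℝ)^2)) (Summable.mul_left _ (by simp))
    (by
      intro m
      rw [integral_div, integral_add (hSi _) (hDi _)]
      rcases Nat.eq_zero_or_pos m with rfl | hm
      · simp
      have hm' : (1:ℝ) ≤ m := by exact_mod_cast hm
      have e1 := hS (m^2)
      have e2 := hD (Finset.Ico (m^2) ((m+1)^2))
      have e3 : ((Finset.Ico (m^2) ((m+1)^2)).card : ℝ) = 2 * m + 1 := by
        rw [Nat.card_Ico, Nat.cast_sub (by gcongr; omega)]; push_cast; ring
      rw [e3] at e2
      push_cast at e1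
      rw [div_le_iff₀ (by positivity)]
      have e4 : 10 * C * (1 / (m:ℝ)^2) * (m:ℝ)^4 = 10 * C * m^2 := by field_simp
      rw [e4]
      have e5 : (2 * (m:ℝ) + 1) * ((2 * m + 1) * C) ≤ 9 * m^2 * C := by
        rw [← mul_assoc]; exact mul_le_mul_of_nonneg_right (by nlinarith) hC0
      linarith)
  filter_upwards [key] with ω hω
  have hsq : Tendsto Nat.sqrt atTop atTop := by
    refine tendsto_atTop.2 fun b => ?_
    filter_upwards [eventually_ge_atTop (b*b)] with n hn using Nat.le_sqrt.2 hn
  have h1 := (hω.const_mul 2).sqrt.comp hsq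
  simp only [mul_zero, Real.sqrt_zero] at h1
  refine squeeze_zero_norm' ?_ h1
  filter_upwards [eventually_ge_atTop 1] with n hn
  set m := Nat.sqrt n with hm
  have hm1 : 1 ≤ m := Nat.le_sqrt.2 (by simpa using hn)
  have hm0 : (0:ℝ) < m := by exact_mod_cast hm1
  have hmn : m^2 ≤ n := Nat.sqrt_le' n
  have hnm : n < (m+1)^2 := Nat.lt_succ_sqrt' n
  have hn' : (m:ℝ)^2 ≤ n := by exact_mod_cast hmn
  simp only [Function.comp_def]
  rw [← hm]
  apply Real.le_sqrt_of_sq_le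
  set a := ∑ i ∈ Finset.range (m^2), X i ω
  set d := ∑ i ∈ Finset.Ico (m^2) ((m+1)^2), |X i ω|
  have hd : 0 ≤ d := Finset.sum_nonneg fun i _ => abs_nonneg _
  have hb : |∑ i ∈ Finset.range n, X i ω| ≤ |a| + d := by
    rw [← Finset.sum_range_add_sum_Ico _ hmn]
    refine (abs_add_le _ _).trans ?_
    gcongr
    refine (Finset.abs_sum_le_sum_abs _ _).trans ?_
    exact Finset.sum_le_sum_of_subset_of_nonneg (Finset.Ico_subset_Ico_right hnm.le)
      (fun i _ _ => abs_nonneg _)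
  rw [norm_div, Real.norm_eq_abs, Real.norm_natCast]
  calc (|∑ i ∈ Finset.range n, X i ω| / n)^2 ≤ ((|a| + d) / (m:ℝ)^2)^2 := by gcongr
    _ = (|a| + d)^2 / (m:ℝ)^4 := by rw [div_pow]; ring
    _ ≤ (2 * (a^2 + d^2)) / (m:ℝ)^4 := by
      gcongr
      nlinarith [sq_nonneg (|a| - d), sq_abs a]
    _ = _ := by ring

lemma abel_range (f b : ℕ → ℝ) (n : ℕ) :
    ∑ i ∈ Finset.range n, f i * b i = f n * ∑ i ∈ Finset.range n, b i
      - ∑ i ∈ Finset.range n, (f (i+1) - f i) * ∑ k ∈ Finset.range (i+1), b k := by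
  induction n with
  | zero => simp
  | succ n ih =>
    rw [Finset.sum_range_succ, ih, Finset.sum_range_succ (fun i => (f (i+1) - f i) * _),
      Finset.sum_range_succ b n]
    ring

lemma poly_lip (p : Polynomial ℝ) (a b : ℝ) : ∃ L : ℝ, 0 ≤ L ∧ ∀ u ∈ Icc a b, ∀ v ∈ Icc a b,
    |p.eval u - p.eval v| ≤ L * |u - v| := by
  obtain ⟨M, hM⟩ := (isCompact_Icc (a := a) (b := b)).exists_bound_of_continuousOn
    (f := fun t => p.derivative.eval t) p.derivative.continuous.continuousOn
  refine ⟨max M 0, le_max_right _ _, fun u hu v hv => ?_⟩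
  refine Convex.norm_image_sub_le_of_norm_deriv_le (f := fun t => p.eval t) (s := Icc a b)
    (fun t _ => p.differentiableAt) (fun t ht => ?_) (convex_Icc a b) hv hu
  rw [Polynomial.deriv]
  exact (hM t ht).trans (le_max_left _ _)

lemma grid_mem {Δ : ℝ} (hΔ : 0 < Δ) {i n : ℕ} (hi : i < n) :
    ((i + 1 : ℕ) : ℝ) * Δ / n ∈ Icc 0 Δ := by
  have hn : (0:ℝ) < n := by exact_mod_cast (by omega : 0 < n)
  have : ((i + 1 : ℕ) : ℝ) ≤ n := by exact_mod_cast hi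
  refine ⟨by positivity, ?_⟩
  rw [div_le_iff₀ hn, mul_comm]
  gcongr

lemma weighted_poly (Δ : ℝ) (hΔ : 0 < Δ) (p : Polynomial ℝ) (b : ℕ → ℝ)
    (hb : Tendsto (fun n : ℕ => (∑ i ∈ Finset.range n, b i) / n) atTop (𝓝 0)) :
    Tendsto (fun n : ℕ => (∑ i ∈ Finset.range n, p.eval (((i + 1 : ℕ) : ℝ) * Δ / n) * b i) / n)
      atTop (𝓝 0) := by
  obtain ⟨L, hL0, hL⟩ := poly_lip p 0 (2 * Δ)
  obtain ⟨M, hM⟩ := (isCompact_Icc (a := (0:ℝ)) (b := 2 * Δ)).exists_bound_of_continuousOn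
    (f := fun t => p.eval t) p.continuous.continuousOn
  set S : ℕ → ℝ := fun n => ∑ i ∈ Finset.range n, b i with hS
  have h1 : Tendsto (fun n : ℕ => |S n / n|) atTop (𝓝 0) := by simpa using hb.abs
  have h2 := ((tendsto_add_atTop_iff_nat 1).2 h1).cesaro
  have h3 := (h1.const_mul M).add (h2.const_mul (L * Δ))
  simp only [mul_zero, add_zero] at h3
  refine squeeze_zero_norm' ?_ h3
  filter_upwards [eventually_ge_atTop 1] with n hn
  have hn0 : (0:ℝ) < n := by exact_mod_cast hn
  have hg : ∀ i ≤ n, ((i + 1 : ℕ) : ℝ) * Δ / n ∈ Icc 0 (2 * Δ) := by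
    intro i hi
    have : ((i + 1 : ℕ) : ℝ) ≤ 2 * n := by exact_mod_cast (by omega)
    refine ⟨by positivity, ?_⟩
    rw [div_le_iff₀ hn0]
    nlinarith
  rw [abel_range, Real.norm_eq_abs, sub_div]
  refine (abs_sub _ _).trans (add_le_add ?_ ?_)
  · rw [mul_div_assoc, abs_mul]
    gcongr
    exact hM _ (hg n le_rfl)
  · rw [abs_div, abs_of_pos hn0, div_eq_inv_mul, mul_left_comm]
    gcongr
    rw [Finset.mul_sum]
    refine (Finset.abs_sum_le_sum_abs _ _).trans (Finset.sum_le_sum fun i hi => ?_)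
    have hi' := Finset.mem_range.1 hi
    rw [abs_mul]
    have e1 := hL _ (hg (i+1) hi') _ (hg i hi'.le)
    have e2 : ((i + 1 + 1 : ℕ) : ℝ) * Δ / n - ((i + 1 : ℕ) : ℝ) * Δ / n = Δ / n := by
      push_cast; ring
    rw [e2, abs_of_pos (a := Δ / n) (by positivity)] at e1
    have e3 : (0:ℝ) < ((i + 1 : ℕ) : ℝ) := by positivity
    have e4 : ((i + 1 : ℕ) : ℝ) ≤ n := by exact_mod_cast hi'
    calc _ ≤ (L * (Δ / n)) * |S (i+1)| := by gcongr
      _ = L * Δ * (|S (i+1)| / n) := by ring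
      _ ≤ L * Δ * (|S (i+1)| / ((i + 1 : ℕ) : ℝ)) := by gcongr
      _ = _ := by rw [abs_div, abs_of_pos e3]

lemma weighted_cont (Δ : ℝ) (hΔ : 0 < Δ) (h : ℝ → ℝ) (hh : ContinuousOn h (Icc 0 Δ)) (b : ℕ → ℝ)
    (hb : Tendsto (fun n : ℕ => (∑ i ∈ Finset.range n, b i) / n) atTop (𝓝 0))
    (M : ℝ) (hM : ∀ᶠ n : ℕ in atTop, (∑ i ∈ Finset.range n, |b i|) / n ≤ M) :
    Tendsto (fun n : ℕ => (∑ i ∈ Finset.range n, h (((i + 1 : ℕ) : ℝ) * Δ / n) * b i) / n)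
      atTop (𝓝 0) := by
  rw [Metric.tendsto_nhds]
  intro e he
  have hM1 : 0 < |M| + 1 := by positivity
  obtain ⟨p, hp⟩ := exists_polynomial_near_of_continuousOn 0 Δ h hh (e / 2 / (|M| + 1))
    (by positivity)
  have h1 := (Metric.tendsto_nhds.1 (weighted_poly Δ hΔ p b hb)) (e / 2) (by positivity)
  filter_upwards [h1, hM, eventually_ge_atTop 1] with n h1 h2 hn
  have hn0 : (0:ℝ) < n := by exact_mod_cast hn
  rw [Real.dist_eq, sub_zero] at h1 ⊢
  set P := (∑ i ∈ Finset.range n, p.eval (((i + 1 : ℕ) : ℝ) * Δ / n) * b i) / n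
  have h3 : |(∑ i ∈ Finset.range n, h (((i + 1 : ℕ) : ℝ) * Δ / n) * b i) / n - P| ≤ e / 2 := by
    rw [← sub_div, ← Finset.sum_sub_distrib, abs_div, abs_of_pos hn0]
    calc _ ≤ (∑ i ∈ Finset.range n, (e / 2 / (|M| + 1)) * |b i|) / n := by
          gcongr
          refine (Finset.abs_sum_le_sum_abs _ _).trans (Finset.sum_le_sum fun i hi => ?_)
          rw [← sub_mul, abs_mul, abs_sub_comm]
          gcongr
          exact (hp _ (grid_mem hΔ (Finset.mem_range.1 hi))).le
      _ = (e / 2 / (|M| + 1)) * ((∑ i ∈ Finset.range n, |b i|) / n) := by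
          rw [← Finset.mul_sum, mul_div_assoc]
      _ ≤ (e / 2 / (|M| + 1)) * (|M| + 1) := by
          gcongr
          linarith [le_abs_self M]
      _ = e / 2 := by field_simp
  have := abs_sub_abs_le_abs_sub ((∑ i ∈ Finset.range n, h (((i + 1 : ℕ) : ℝ) * Δ / n) * b i) / n) P
  linarith

lemma riemann_cont (Δ : ℝ) (hΔ : 0 < Δ) (f : ℝ → ℝ) (hf : ContinuousOn f (Icc 0 Δ)) :
    Tendsto (fun n : ℕ => (∑ i ∈ Finset.range n, f (((i + 1 : ℕ) : ℝ) * Δ / n)) / n)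
      atTop (𝓝 ((1 / Δ) * ∫ w in (0:ℝ)..Δ, f w)) := by
  rw [Metric.tendsto_nhds]
  intro e he
  obtain ⟨δ, hδ, hu⟩ := Metric.uniformContinuousOn_iff.1
    (isCompact_Icc.uniformContinuousOn_of_continuous hf) (e / 2) (by positivity)
  have h0 : Tendsto (fun n : ℕ => Δ / n) atTop (𝓝 0) := tendsto_const_div_atTop_nhds_zero_nat Δ
  filter_upwards [h0.eventually_lt_const hδ, eventually_ge_atTop 1] with n hnδ hn
  have hn0 : (0:ℝ) < n := by exact_mod_cast hn
  set a : ℕ → ℝ := fun i => (i : ℝ) * Δ / n with ha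
  have ha1 : ∀ i, a i ≤ a (i+1) := by
    intro i; simp only [ha]; gcongr; omega
  have ha2 : ∀ i, a (i+1) - a i = Δ / n := by
    intro i; simp only [ha]; push_cast; ring
  have hmem : ∀ i ≤ n, a i ∈ Icc 0 Δ := by
    intro i hi
    have : (i:ℝ) ≤ n := by exact_mod_cast hi
    refine ⟨by positivity, ?_⟩
    simp only [ha]
    rw [div_le_iff₀ hn0, mul_comm]
    gcongr
  have hint : ∀ i < n, IntervalIntegrable f volume (a i) (a (i+1)) := by
    intro i hi
    apply ContinuousOn.intervalIntegrable
    rw [uIcc_of_le (ha1 i)]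
    exact hf.mono (Icc_subset_Icc (hmem i hi.le).1 (hmem (i+1) hi).2)
  have hsum := intervalIntegral.sum_integral_adjacent_intervals hint
  have e0 : a 0 = 0 := by simp [ha]
  have en : a n = Δ := by simp only [ha]; field_simp
  rw [e0, en] at hsum
  have key : ∀ i < n, |f (a (i+1)) * (Δ / n) - ∫ w in a i..a (i+1), f w| ≤ e / 2 * (Δ / n) := by
    intro i hi
    have : f (a (i+1)) * (Δ / n) = ∫ w in a i..a (i+1), f (a (i+1)) := by
      rw [intervalIntegral.integral_const, ha2, smul_eq_mul, mul_comm]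
    rw [this, ← intervalIntegral.integral_sub (by simp) (hint i hi)]
    have := intervalIntegral.norm_integral_le_of_norm_le_const (a := a i) (b := a (i+1))
      (f := fun w => f (a (i+1)) - f w) (C := e / 2) (by
        intro w hw
        rw [uIoc_of_le (ha1 i)] at hw
        refine (hu _ (hmem (i+1) hi) w ⟨(hmem i hi.le).1.trans hw.1.le, hw.2.trans (hmem (i+1) hi).2⟩ ?_).le
        rw [Real.dist_eq, abs_of_nonneg (by linarith [hw.2])]
        linarith [hw.1, ha2 i])
    rwa [ha2, abs_of_pos (by positivity)] at this
  rw [Real.dist_eq, ← hsum]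
  have : (∑ i ∈ Finset.range n, f (((i + 1 : ℕ) : ℝ) * Δ / n)) / n
      - 1 / Δ * ∑ i ∈ Finset.range n, ∫ w in a i..a (i+1), f w
      = 1 / Δ * ∑ i ∈ Finset.range n, (f (a (i+1)) * (Δ / n) - ∫ w in a i..a (i+1), f w) := by
    rw [Finset.sum_sub_distrib, ← Finset.sum_mul, mul_sub]
    congr 1
    field_simp
    simp [ha]
  rw [this, abs_mul, abs_of_pos (by positivity)]
  calc _ ≤ 1 / Δ * ∑ i ∈ Finset.range n, e / 2 * (Δ / n) := by
        gcongr
        refine (Finset.abs_sum_le_sum_abs _ _).trans (Finset.sum_le_sum fun i hi => ?_)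
        exact key i (Finset.mem_range.1 hi)
    _ = e / 2 := by simp; field_simp
    _ < e := by linarith

lemma contract_tendsto (q : ℝ) (hq0 : 0 ≤ q) (hq : q < 1) (w c : ℕ → ℝ) (hw : ∀ n, 0 ≤ w n)
    (hwc : ∀ n, w (n+1) ≤ q * w n + c n) (hc : Tendsto c atTop (𝓝 0)) :
    Tendsto w atTop (𝓝 0) := by
  rw [Metric.tendsto_nhds]
  intro e he
  have hq' : 0 < 1 - q := by linarith
  obtain ⟨N, hN⟩ := eventually_atTop.1
    (hc.eventually_lt_const (show 0 < e / 2 * (1 - q) by positivity))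
  have h1 : ∀ k, w (N + k) ≤ e / 2 + q ^ k * |w N - e / 2| := by
    intro k
    induction k with
    | zero => simp only [add_zero, pow_zero, one_mul]; linarith [le_abs_self (w N - e / 2)]
    | succ k ih =>
      have a1 := hwc (N + k)
      have a2 := hN (N + k) (by omega)
      have a3 := mul_le_mul_of_nonneg_left ih hq0
      rw [← add_assoc, pow_succ]
      nlinarith
  have h2 : Tendsto (fun k : ℕ => e / 2 + q ^ k * |w N - e / 2|) atTop (𝓝 (e / 2)) := by
    simpa using ((tendsto_pow_atTop_nhds_zero_of_lt_one hq0 hq).mul_const |w N - e / 2|).const_add (e / 2)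
  obtain ⟨K, hK⟩ := eventually_atTop.1 (h2.eventually_lt_const (show e / 2 < e by linarith))
  filter_upwards [eventually_ge_atTop (N + K)] with n hn
  obtain ⟨k, rfl⟩ := Nat.exists_eq_add_of_le (show N ≤ n by omega)
  rw [Real.dist_eq, sub_zero, abs_of_nonneg (hw _)]
  exact (h1 k).trans_lt (hK k (by omega))

/-- Deterministic limits for an AR(1) path driven by `u`. -/
lemma ar_det (φ s : ℝ) (hφ : |φ| < 1) (ε e u : ℕ → ℝ)
    (hε : ∀ k, ε (k+1) = φ * ε k + u (k+1))
    (he0 : e 0 = 0) (he : ∀ k, e (k+1) = φ * e k + u (k+1))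
    (h1 : Tendsto (fun n : ℕ => (∑ i ∈ Finset.range n, u (i+1)) / n) atTop (𝓝 0))
    (h2 : Tendsto (fun n : ℕ => (∑ i ∈ Finset.range n, u (i+1) ^ 2) / n) atTop (𝓝 s))
    (h3 : Tendsto (fun n : ℕ => (∑ i ∈ Finset.range n, e i * u (i+1)) / n) atTop (𝓝 0)) :
    Tendsto (fun n : ℕ => (∑ i ∈ Finset.range n, ε (i+1)) / n) atTop (𝓝 0) ∧
    Tendsto (fun n : ℕ => (∑ i ∈ Finset.range n, ε (i+1) ^ 2) / n) atTop (𝓝 (s / (1 - φ ^ 2))) := by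
  have hφ2 : φ ^ 2 < 1 := (sq_lt_one_iff_abs_lt_one φ).2 hφ
  have hφ1 : 1 - φ ≠ 0 := by have := (abs_lt.1 hφ).2; linarith
  have hεe : ∀ k, ε k = e k + φ ^ k * ε 0 := by
    intro k
    induction k with
    | zero => simp [he0]
    | succ k ih => rw [hε, he, ih]; ring
  have hinv : Tendsto (fun n : ℕ => (1:ℝ) / n) atTop (𝓝 0) := tendsto_const_div_atTop_nhds_zero_nat 1
  -- `u (n+1)^2 / (n+1) → 0`
  have hu2 : Tendsto (fun n : ℕ => u (n+1) ^ 2 / ((n+1 : ℕ) : ℝ)) atTop (𝓝 0) := by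
    have a1 := (tendsto_add_atTop_iff_nat 1).2 h2
    have a2 : Tendsto (fun n : ℕ => (n:ℝ) / ((n+1 : ℕ) : ℝ)) atTop (𝓝 1) := by
      simpa using tendsto_natCast_div_add_atTop (1:ℝ)
    have a3 := a1.sub (h2.mul a2)
    rw [mul_one, sub_self] at a3
    refine a3.congr' ?_
    filter_upwards [eventually_ge_atTop 1] with n hn
    have hn0 : (n:ℝ) ≠ 0 := by positivity
    rw [Finset.sum_range_succ]
    field_simp
    ring
  -- `ε n ^ 2 / n → 0`
  have hε2 : Tendsto (fun n : ℕ => ε n ^ 2 / n) atTop (𝓝 0) := by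
    have hq : 0 < 1 - |φ| := by linarith
    refine (tendsto_add_atTop_iff_nat 1).1 ?_
    have hu3 := ((tendsto_add_atTop_iff_nat 1).2 hu2).const_mul (1 / (1 - |φ|))
    rw [mul_zero] at hu3
    refine contract_tendsto |φ| (abs_nonneg _) hφ _ _ (fun n => by positivity) (fun n => ?_) hu3
    have c0 : (0:ℝ) < ((n+1:ℕ):ℝ) := by positivity
    have c1 : (0:ℝ) < ((n+1+1:ℕ):ℝ) := by positivity
    have c2 : ((n+1:ℕ):ℝ) ≤ ((n+1+1:ℕ):ℝ) := by push_cast; linarith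
    have c3 : ε (n+1+1) ^ 2 ≤ |φ| * ε (n+1) ^ 2 + 1 / (1 - |φ|) * u (n+1+1) ^ 2 := by
      rw [hε (n+1)]
      have : |φ| * ε (n+1) ^ 2 + 1 / (1 - |φ|) * u (n+1+1) ^ 2
          - (φ * ε (n+1) + u (n+1+1)) ^ 2
          = (|φ| - |φ|^2) * ε (n+1) ^ 2 - 2 * φ * ε (n+1) * u (n+1+1)
            + |φ| / (1 - |φ|) * u (n+1+1) ^ 2 := by
        rw [sq_abs]; field_simp; ring
      have h5 : (|φ| - |φ|^2) * ε (n+1) ^ 2 - 2 * φ * ε (n+1) * u (n+1+1)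
            + |φ| / (1 - |φ|) * u (n+1+1) ^ 2 ≥ 0 := by
        have h6 : 2 * φ * ε (n+1) * u (n+1+1) ≤ |φ| * (2 * |ε (n+1)| * |u (n+1+1)|) := by
          refine (le_abs_self _).trans (le_of_eq ?_)
          simp only [abs_mul, abs_two]; ring
        have h7 : (|φ| - |φ|^2) * ε (n+1) ^ 2 - |φ| * (2 * |ε (n+1)| * |u (n+1+1)|)
            + |φ| / (1 - |φ|) * u (n+1+1) ^ 2
            = |φ| / (1 - |φ|) * ((1 - |φ|) * |ε (n+1)| - |u (n+1+1)|) ^ 2 := by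
          rw [← sq_abs (ε (n+1)), ← sq_abs (u (n+1+1))]; field_simp; ring
        have h8 : 0 ≤ |φ| / (1 - |φ|) * ((1 - |φ|) * |ε (n+1)| - |u (n+1+1)|) ^ 2 := by
          positivity
        linarith
      linarith
    calc ε (n+1+1) ^ 2 / ((n+1+1:ℕ):ℝ)
        ≤ (|φ| * ε (n+1) ^ 2 + 1 / (1 - |φ|) * u (n+1+1) ^ 2) / ((n+1+1:ℕ):ℝ) := by gcongr
      _ = |φ| * (ε (n+1) ^ 2 / ((n+1+1:ℕ):ℝ)) + 1 / (1 - |φ|) * (u (n+1+1) ^ 2 / ((n+1+1:ℕ):ℝ)) := by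
          ring
      _ ≤ |φ| * (ε (n+1) ^ 2 / ((n+1:ℕ):ℝ)) + 1 / (1 - |φ|) * (u (n+1+1) ^ 2 / ((n+1+1:ℕ):ℝ)) := by
          gcongr
  -- `φ^i u_{i+1} → 0`
  have hφu : Tendsto (fun n : ℕ => φ ^ n * u (n+1)) atTop (𝓝 0) := by
    have a1 : Tendsto (fun n : ℕ => (n:ℝ) * φ ^ n) atTop (𝓝 0) :=
      tendsto_self_mul_const_pow_of_abs_lt_one hφ
    have a2 := (a1.add (tendsto_pow_atTop_nhds_zero_of_abs_lt_one hφ)).abs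
    have a3 := a2.mul (hu2.add_const 1)
    simp only [add_zero, zero_add, abs_zero, zero_mul] at a3
    refine squeeze_zero_norm (fun n => ?_) a3
    have hn : (0:ℝ) < ((n+1:ℕ):ℝ) := by positivity
    have b1 : (n:ℝ) * φ ^ n + φ ^ n = ((n+1:ℕ):ℝ) * φ ^ n := by push_cast; ring
    rw [b1, norm_mul, abs_mul, abs_of_pos hn, Real.norm_eq_abs, Real.norm_eq_abs]
    have b2 : ((n+1:ℕ):ℝ) * |φ ^ n| * (u (n+1) ^ 2 / ((n+1:ℕ):ℝ) + 1)
       = |φ ^ n| * (u (n+1) ^ 2 + ((n+1:ℕ):ℝ)) := by field_simp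
    rw [b2]
    gcongr
    have : (1:ℝ) ≤ ((n+1:ℕ):ℝ) := by push_cast; linarith [(Nat.cast_nonneg n : (0:ℝ) ≤ n)]
    nlinarith [sq_nonneg (|u (n+1)| - 1), sq_abs (u (n+1))]
  have hεu : Tendsto (fun n : ℕ => (∑ i ∈ Finset.range n, ε i * u (i+1)) / n) atTop (𝓝 0) := by
    have a1 := h3.add (hφu.cesaro.const_mul (ε 0))
    simp only [mul_zero, add_zero] at a1
    refine a1.congr fun n => ?_
    have : ∀ i, ε i * u (i+1) = e i * u (i+1) + ε 0 * (φ ^ i * u (i+1)) := by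
      intro i; rw [hεe i]; ring
    simp_rw [this]
    rw [Finset.sum_add_distrib, ← Finset.mul_sum]
    ring
  have hε1 : Tendsto (fun n : ℕ => ε n / n) atTop (𝓝 0) := by
    have a3 := hε2.add hinv
    rw [add_zero] at a3
    refine squeeze_zero_norm (fun n => ?_) a3
    rw [← add_div, norm_div, Real.norm_natCast, Real.norm_eq_abs]
    gcongr
    nlinarith [sq_nonneg (|ε n| - 1), sq_abs (ε n)]
  constructor
  · have a1 := ((h1.add ((hinv.const_mul (ε 0)).const_mul φ)).sub (hε1.const_mul φ)).const_mul (1 / (1 - φ))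
    simp only [mul_zero, add_zero, sub_zero] at a1
    refine a1.congr fun n => ?_
    have : ∀ n, (1 - φ) * ∑ i ∈ Finset.range n, ε (i+1) = (∑ i ∈ Finset.range n, u (i+1))
        + φ * ε 0 - φ * ε n := by
      intro n
      induction n with
      | zero => simp
      | succ n ih =>
        rw [Finset.sum_range_succ, mul_add, ih, Finset.sum_range_succ, hε n]; ring
    have h := this n
    have h' : ∑ i ∈ Finset.range n, ε (i+1) = 1 / (1 - φ) * ((∑ i ∈ Finset.range n, u (i+1))
        + φ * ε 0 - φ * ε n) := by rw [← h]; field_simp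
    rw [h']; ring
  · have hne : 1 - φ^2 ≠ 0 := by linarith
    have a1 := (((h2.add (hεu.const_mul (2 * φ))).add
      ((hinv.const_mul (ε 0 ^ 2)).const_mul (φ^2))).sub (hε2.const_mul (φ^2))).const_mul (1 / (1 - φ^2))
    simp only [mul_zero, add_zero, sub_zero] at a1
    rw [one_div_mul_eq_div] at a1
    refine a1.congr fun n => ?_
    have : ∀ n, (1 - φ^2) * ∑ i ∈ Finset.range n, ε (i+1) ^ 2 = (∑ i ∈ Finset.range n, u (i+1) ^ 2)
        + 2 * φ * (∑ i ∈ Finset.range n, ε i * u (i+1)) + φ^2 * ε 0 ^ 2 - φ^2 * ε n ^ 2 := by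
      intro n
      induction n with
      | zero => simp
      | succ n ih =>
        rw [Finset.sum_range_succ, mul_add, ih, Finset.sum_range_succ, Finset.sum_range_succ, hε n]; ring
    have h := this n
    have h' : ∑ i ∈ Finset.range n, ε (i+1) ^ 2 = 1 / (1 - φ^2) * ((∑ i ∈ Finset.range n, u (i+1) ^ 2)
        + 2 * φ * (∑ i ∈ Finset.range n, ε i * u (i+1)) + φ^2 * ε 0 ^ 2 - φ^2 * ε n ^ 2) := by
      rw [← h]; field_simp
    rw [h']; ring

/-- The AR(1) process started at zero. -/
noncomputable def arZero {Ω : Type*} (φ : ℝ) (u : ℕ → Ω → ℝ) : ℕ → Ω → ℝ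
  | 0 => fun _ => 0
  | (k+1) => fun ω => φ * arZero φ u k ω + u (k+1) ω

lemma ar_prob {Ω : Type*} [MeasurableSpace Ω] (μ : Measure Ω) [IsProbabilityMeasure μ]
    (u : ℕ → Ω → ℝ) (hum : ∀ j, Measurable (u j)) (hui : iIndepFun u μ) (s φ : ℝ) (hφ : |φ| < 1)
    (hu2 : ∀ j, MemLp (u j) 2 μ) (hu0 : ∀ j, ∫ ω, u j ω ∂μ = 0)
    (hus : ∀ j, ∫ ω, u j ω ^ 2 ∂μ = s) :
    ∀ᵐ ω ∂μ, Tendsto (fun n : ℕ => (∑ i ∈ Finset.range n, arZero φ u i ω * u (i+1) ω) / n)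
      atTop (𝓝 0) := by
  have hφ2 : φ ^ 2 < 1 := (sq_lt_one_iff_abs_lt_one φ).2 hφ
  have hs0 : 0 ≤ s := by rw [← hus 0]; exact integral_nonneg fun ω => sq_nonneg _
  have hsm : ∀ j, StronglyMeasurable (u j) := fun j => (hum j).stronglyMeasurable
  let F := Filtration.natural u hsm
  have huF : ∀ i j, i ≤ j → Measurable[F j] (u i) := fun i j hij =>
    ((Filtration.stronglyAdapted_natural hsm i).mono (F.mono hij)).measurable
  have heF : ∀ i j, i ≤ j → Measurable[F j] (arZero φ u i) := by
    intro i
    induction i with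
    | zero => intro j _; exact measurable_const
    | succ i ih =>
      intro j hj
      exact ((ih j (by omega)).const_mul φ).add (huF (i+1) j hj)
  have hind : ∀ (f : Ω → ℝ) (j : ℕ), Measurable[F j] f → IndepFun f (u (j+1)) μ := by
    intro f j hf
    rw [IndepFun_iff_Indep]
    exact indep_of_indep_of_le_left (hui.indep_comap_natural_of_lt hsm (Nat.lt_succ_self j)).symm
      hf.comap_le
  have hem : ∀ i, Measurable (arZero φ u i) := fun i => (heF i i le_rfl).mono (F.le i) le_rfl
  have he2 : ∀ i, MemLp (arZero φ u i) 2 μ := by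
    intro i
    induction i with
    | zero => exact memLp_const 0
    | succ i ih => exact (ih.const_mul φ).add (hu2 (i+1))
  have hcross : ∀ (f : Ω → ℝ) (j : ℕ), Measurable[F j] f → ∫ ω, f ω * u (j+1) ω ∂μ = 0 := by
    intro f j hf
    have := (hind f j hf).integral_fun_mul_eq_mul_integral
      (hf.mono (F.le j) le_rfl).aestronglyMeasurable (hum (j+1)).aestronglyMeasurable
    rw [this, hu0, mul_zero]
  have heb : ∀ i, ∫ ω, arZero φ u i ω ^ 2 ∂μ ≤ s / (1 - φ^2) := by
    have hq : 0 < 1 - φ^2 := by linarith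
    intro i
    induction i with
    | zero => simp [arZero]; positivity
    | succ i ih =>
      have : ∀ ω, arZero φ u (i+1) ω ^ 2 = φ^2 * arZero φ u i ω ^ 2
          + 2 * φ * (arZero φ u i ω * u (i+1) ω) + u (i+1) ω ^ 2 := by
        intro ω; simp only [arZero]; ring
      simp_rw [this]
      have i1 := ((he2 i).integrable_sq.const_mul (φ^2))
      have i2 := (((he2 i).integrable_mul (hu2 (i+1))).const_mul (2 * φ))
      have i3 := (hu2 (i+1)).integrable_sq
      simp only [Pi.mul_apply] at i2
      have i12 : Integrable (fun ω => φ^2 * arZero φ u i ω ^ 2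
          + 2 * φ * (arZero φ u i ω * u (i+1) ω)) μ := i1.add i2
      rw [integral_add i12 i3, integral_add i1 i2, integral_const_mul, integral_const_mul,
        hcross _ i (heF i i le_rfl), hus]
      have h1 : s / (1 - φ^2) = φ^2 * (s / (1 - φ^2)) + s := by field_simp; ring
      rw [h1]
      have := mul_le_mul_of_nonneg_left ih (sq_nonneg φ)
      linarith
  have hsqind : ∀ i, IndepFun (fun ω => arZero φ u i ω ^ 2) (fun ω => u (i+1) ω ^ 2) μ := fun i =>
    (hind _ i (heF i i le_rfl)).comp (measurable_id.pow_const 2) (measurable_id.pow_const 2)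
  refine rajchman (fun i ω => arZero φ u i ω * u (i+1) ω) (s / (1 - φ^2) * s) ?_ ?_ ?_
  · intro i
    refine (memLp_two_iff_integrable_sq ((hem i).mul (hum (i+1))).aestronglyMeasurable).2 ?_
    have := (hsqind i).integrable_mul (he2 i).integrable_sq (hu2 (i+1)).integrable_sq
    refine this.congr (Eventually.of_forall fun ω => ?_)
    simp [mul_pow]
  · intro i j hij
    have := hcross (fun ω => arZero φ u i ω * u (i+1) ω * arZero φ u j ω) j
      (((heF i j hij.le).mul (huF (i+1) j hij)).mul (heF j j le_rfl))
    rw [← this]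
    simp only [mul_assoc]
  · intro i
    simp_rw [mul_pow]
    rw [(hsqind i).integral_fun_mul_eq_mul_integral ((hem i).pow_const 2).aestronglyMeasurable
      ((hum (i+1)).pow_const 2).aestronglyMeasurable, hus]
    exact mul_le_mul_of_nonneg_right (heb i) hs0

lemma crit_det (H V : ℝ) (h ε : ℕ → ℕ → ℝ) (r : ℕ → ℕ → ℝ)
    (h1 : Tendsto (fun n : ℕ => (∑ i ∈ Finset.range n, h n i ^ 2) / n) atTop (𝓝 H))
    (h2 : Tendsto (fun n : ℕ => (∑ i ∈ Finset.range n, h n i * ε n i) / n) atTop (𝓝 0))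
    (h3 : Tendsto (fun n : ℕ => (∑ i ∈ Finset.range n, ε n i ^ 2) / n) atTop (𝓝 V))
    (hr : ∀ e > (0:ℝ), ∃ N : ℕ, ∀ n ≥ N, ∀ i < n, |r n i| < e) :
    Tendsto (fun n : ℕ => (1 / (n:ℝ)) * ∑ i ∈ Finset.range n, (h n i + ε n i + r n i) ^ 2)
      atTop (𝓝 (V + H)) := by
  have hB : Tendsto (fun n : ℕ => (∑ i ∈ Finset.range n, (h n i + ε n i) ^ 2) / n)
      atTop (𝓝 (V + H)) := by
    have := (h3.add h1).add (h2.const_mul 2)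
    rw [mul_zero, add_zero] at this
    refine this.congr fun n => ?_
    rw [← add_div, ← mul_div_assoc, ← add_div, Finset.mul_sum, ← Finset.sum_add_distrib,
      ← Finset.sum_add_distrib]
    congr 1
    exact Finset.sum_congr rfl fun i _ => by ring
  have hd : Tendsto (fun n : ℕ => (1 / (n:ℝ)) * ∑ i ∈ Finset.range n, (h n i + ε n i + r n i) ^ 2
      - (∑ i ∈ Finset.range n, (h n i + ε n i) ^ 2) / n) atTop (𝓝 0) := by
    rw [Metric.tendsto_nhds]
    intro e he
    have hK : 0 < |V + H| + 4 := by positivity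
    obtain ⟨N, hN⟩ := hr (min 1 (e / (|V + H| + 4))) (by positivity)
    filter_upwards [hB.eventually_lt_const (lt_add_one (V + H)), eventually_ge_atTop N,
      eventually_ge_atTop 1] with n hb hn hn1
    have hn0 : (0:ℝ) < n := by exact_mod_cast hn1
    rw [Real.dist_eq, sub_zero, one_div_mul_eq_div, ← sub_div, ← Finset.sum_sub_distrib, abs_div,
      abs_of_pos hn0]
    set d := min 1 (e / (|V + H| + 4)) with hd
    have d0 : 0 < d := by positivity
    have d1 : d ≤ 1 := min_le_left _ _
    have d2 : d * (|V + H| + 4) ≤ e := by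
      rw [← le_div_iff₀ hK]; exact min_le_right _ _
    calc _ ≤ (∑ i ∈ Finset.range n, d * ((h n i + ε n i) ^ 2 + 2)) / (n:ℝ) := by
          gcongr
          refine (Finset.abs_sum_le_sum_abs _ _).trans (Finset.sum_le_sum fun i hi => ?_)
          have hr1 := (hN n hn i (Finset.mem_range.1 hi)).le
          have : (h n i + ε n i + r n i) ^ 2 - (h n i + ε n i) ^ 2
            = r n i * (2 * (h n i + ε n i) + r n i) := by ring
          rw [this, abs_mul]
          have h5 : |2 * (h n i + ε n i) + r n i| ≤ (h n i + ε n i) ^ 2 + 2 := by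
            have := abs_le.1 (hr1.trans d1)
            rw [abs_le]
            constructor <;> nlinarith [sq_nonneg (h n i + ε n i - 1), sq_nonneg (h n i + ε n i + 1)]
          exact mul_le_mul hr1 h5 (abs_nonneg _) d0.le
      _ = d * ((∑ i ∈ Finset.range n, (h n i + ε n i) ^ 2) / n + 2) := by
          rw [← Finset.mul_sum, Finset.sum_add_distrib]
          simp
          field_simp
      _ < e := by
          have := le_abs_self (V + H)
          nlinarith
  simpa using hd.add hB

/-- if `sup_{t∈[0,A]} |log g̃ₙ(t) - log g₀(t)| → 0` almost surely, then for
every fixed `γ ∈ Γ` the criterion `Q̃ₙ(γ)` converges almost surely to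
`σ²/(1-φ²) + (1/Δ)∫₀^Δ (log(1+γ₀x(w)) - log(1+γx(w)))² dw`. -/
theorem stmt10
    {Ω : Type*} [MeasurableSpace Ω] (μ : Measure Ω) [IsProbabilityMeasure μ]
    (Δ A xm xM : ℝ) (hΔ : 0 < Δ) (hA : 0 < A) (hxm : 0 < xm) (hxM : 0 < xM)
    (x z : ℝ → ℝ)
    (hxcont : ContinuousOn x (Icc 0 Δ))
    (hxrange : ∀ w ∈ Icc (0 : ℝ) Δ, x w ∈ Ioo (-xm) xM)
    (hzcont : ContinuousOn z (Icc 0 Δ))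
    (hzrange : ∀ w ∈ Icc (0 : ℝ) Δ, z w ∈ Icc 0 A)
    (hzmono : StrictMonoOn z (Icc 0 Δ))
    (U : ℤ → Ω → ℝ) (hUmeas : ∀ j, Measurable (U j))
    (hUindep : iIndepFun U μ)
    (hUident : ∀ j, μ.map (U j) = μ.map (U 0))
    (σ : ℝ) (hσ : 0 < σ)
    (hUmean : ∫ ω, U 0 ω ∂μ = 0)
    (hUvar : ∫ ω, (U 0 ω) ^ 2 ∂μ = σ ^ 2)
    (hU8 : Integrable (fun ω => (U 0 ω) ^ 8) μ)
    (φ : ℝ) (hφ0 : φ ≠ 0) (hφ1 : |φ| < 1)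
    (ε : ℤ → Ω → ℝ) (hεmeas : ∀ i, Measurable (ε i))
    (hεsum : ∀ᵐ ω ∂μ, ∀ i : ℤ, HasSum (fun j : ℕ => φ ^ j * U (i - (j : ℤ)) ω) (ε i ω))
    (γ₀ : ℝ) (hγ₀ : γ₀ ∈ Ioo (-(1 / xM)) (1 / xm))
    (g₀ : ℝ → ℝ) (c : ℝ) (hc : 0 < c)
    (hg₀lb : ∀ t ∈ Icc (0 : ℝ) A, c ≤ g₀ t)
    (hg₀cont : ContinuousOn g₀ (Icc 0 A))
    (hg₀anti : AntitoneOn g₀ (Icc 0 A))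
    (gtil : ℕ → Ω → ℝ → ℝ)
    (hgtilpos : ∀ n ω, ∀ t ∈ Icc (0 : ℝ) A, 0 < gtil n ω t)
    (hgtilcont : ∀ n ω, ContinuousOn (gtil n ω) (Icc 0 A))
    (hgtilconv : ∀ᵐ ω ∂μ, ∀ e > (0 : ℝ), ∃ N : ℕ, ∀ n ≥ N, ∀ t ∈ Icc (0 : ℝ) A,
      |Real.log (gtil n ω t) - Real.log (g₀ t)| < e)
    (γ : ℝ) (hγ : γ ∈ Icc (-(1 / xM)) (1 / xm)) :
    ∀ᵐ ω ∂μ, Tendsto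
      (fun n : ℕ => Qupd Δ γ₀ x z g₀ ε (fun t => Real.log (gtil n ω t)) n γ ω)
      atTop
      (𝓝 (σ ^ 2 / (1 - φ ^ 2) +
        (1 / Δ) * ∫ w in (0 : ℝ)..Δ,
          (Real.log (1 + γ₀ * x w) - Real.log (1 + γ * x w)) ^ 2)) := by
  have hident : ∀ j, IdentDistrib (U j) (U 0) μ μ := fun j =>
    ⟨(hUmeas j).aemeasurable, (hUmeas 0).aemeasurable, hUident j⟩
  have hU2i : Integrable (fun ω => U 0 ω ^ 2) μ := by
    refine ((integrable_const (1:ℝ)).add hU8).mono'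
      ((hUmeas 0).pow_const 2).aestronglyMeasurable (Eventually.of_forall fun ω => ?_)
    simp only [Pi.add_apply, norm_pow, Real.norm_eq_abs, sq_abs]
    nlinarith [sq_nonneg (U 0 ω ^ 2), sq_nonneg (U 0 ω ^ 4 - U 0 ω ^ 2),
      sq_nonneg (U 0 ω ^ 4 - 1), sq_nonneg (U 0 ω ^ 2 - 1)]
  have hU2 : MemLp (U 0) 2 μ :=
    (memLp_two_iff_integrable_sq (hUmeas 0).aestronglyMeasurable).2 hU2i
  set u : ℕ → Ω → ℝ := fun k => U (k:ℤ) with hu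
  have hum : ∀ k, Measurable (u k) := fun k => hUmeas _
  have hui : iIndepFun u μ := hUindep.precomp (g := fun k : ℕ => (k:ℤ)) Nat.cast_injective
  have hu2 : ∀ k, MemLp (u k) 2 μ := fun k => (hident k).symm.memLp_iff.1 hU2
  have hu0 : ∀ k, ∫ ω, u k ω ∂μ = 0 := fun k => by rw [← hUmean]; exact (hident k).integral_eq
  have hidsq : ∀ j : ℤ, IdentDistrib (fun ω => U j ω ^ 2) (fun ω => U 0 ω ^ 2) μ μ := fun j =>
    (hident j).comp (measurable_id.pow_const 2)
  have hus : ∀ k, ∫ ω, u k ω ^ 2 ∂μ = σ ^ 2 := fun k => by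
    rw [← hUvar]; exact (hidsq k).integral_eq
  have hA1 := strong_law_ae_real (μ := μ) (fun i => u (i+1)) ((hu2 1).integrable (by norm_num))
    (fun i j hij => hui.indepFun (by omega : i + 1 ≠ j + 1))
    (fun i => (hident _).trans (hident _).symm)
  have hA2 := strong_law_ae_real (μ := μ) (fun i ω => u (i+1) ω ^ 2) (hu2 1).integrable_sq
    (fun i j hij => (hui.indepFun (by omega : i + 1 ≠ j + 1)).comp
      (measurable_id.pow_const 2) (measurable_id.pow_const 2))
    (fun i => (hidsq _).trans (hidsq _).symm)
  have hA3 := ar_prob μ u hum hui (σ^2) φ hφ1 hu2 hu0 hus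
  have hpos : ∀ a ∈ Icc (-(1 / xM)) (1 / xm), ∀ w ∈ Icc (0:ℝ) Δ, 1 + a * x w ≠ 0 := by
    intro a ha w hw
    obtain ⟨h1, h2⟩ := hxrange w hw
    have b1 : -1 ≤ a * xM := by
      have := mul_le_mul_of_nonneg_right ha.1 hxM.le
      have e : -(1 / xM) * xM = -1 := by field_simp
      linarith
    have b2 : a * xm ≤ 1 := by
      have := mul_le_mul_of_nonneg_right ha.2 hxm.le
      have e : (1 / xm) * xm = 1 := by field_simp
      linarith
    apply ne_of_gt
    rcases lt_trichotomy a 0 with h | h | h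
    · nlinarith
    · subst h; simp
    · nlinarith
  have hlogc : ∀ a ∈ Icc (-(1 / xM)) (1 / xm),
      ContinuousOn (fun w => Real.log (1 + a * x w)) (Icc 0 Δ) := fun a ha =>
    ContinuousOn.log (continuousOn_const.add (continuousOn_const.mul hxcont)) (hpos a ha)
  set h : ℝ → ℝ := fun w => Real.log (1 + γ₀ * x w) - Real.log (1 + γ * x w) with hh
  have hhc : ContinuousOn h (Icc 0 Δ) := (hlogc γ₀ ⟨hγ₀.1.le, hγ₀.2.le⟩).sub (hlogc γ hγ)
  have hR := riemann_cont Δ hΔ (fun w => h w ^ 2) (hhc.pow 2)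
  filter_upwards [hA1, hA2, hA3, hεsum, hgtilconv] with ω h1 h2 h3 hε hg
  have hrec : ∀ k : ℕ, ε ((k+1 : ℕ) : ℤ) ω = φ * ε (k:ℤ) ω + u (k+1) ω := by
    intro k
    have a1 := (hε k).mul_left φ
    have a2 := (hasSum_nat_add_iff' 1).2 (hε ((k+1 : ℕ) : ℤ))
    have a3 : (fun j : ℕ => φ * (φ ^ j * U ((k:ℤ) - (j:ℤ)) ω))
        = fun j : ℕ => φ ^ (j+1) * U (((k+1 : ℕ) : ℤ) - ((j+1 : ℕ) : ℤ)) ω := by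
      funext j
      have : ((k+1 : ℕ) : ℤ) - ((j+1 : ℕ) : ℤ) = (k:ℤ) - (j:ℤ) := by push_cast; ring
      rw [this, pow_succ]; ring
    rw [a3] at a1
    have a4 := a1.unique a2
    simp only [Finset.sum_range_one, pow_zero, one_mul, Nat.cast_zero, sub_zero] at a4
    simp only [hu]
    linarith
  simp only [hu0] at h1
  rw [hus] at h2
  obtain ⟨hE1, hE2⟩ := ar_det φ (σ^2) hφ1 (fun k => ε (k:ℤ) ω) (fun k => arZero φ u k ω)
    (fun k => u k ω) hrec rfl (fun k => rfl) h1 h2 h3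
  have hW := weighted_cont Δ hΔ h hhc (fun i => ε ((i+1 : ℕ) : ℤ) ω) hE1
    (σ^2 / (1 - φ^2) + 1 + 1) (by
      filter_upwards [hE2.eventually_lt_const (lt_add_one _), eventually_ge_atTop 1] with n hn hn1
      have hn0 : (0:ℝ) < n := by exact_mod_cast hn1
      calc (∑ i ∈ Finset.range n, |ε ((i+1 : ℕ) : ℤ) ω|) / n
          ≤ (∑ i ∈ Finset.range n, (ε ((i+1 : ℕ) : ℤ) ω ^ 2 + 1)) / (n:ℝ) := by
            gcongr with i hi
            nlinarith [sq_nonneg (|ε ((i+1 : ℕ) : ℤ) ω| - 1), sq_abs (ε ((i+1 : ℕ) : ℤ) ω)]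
        _ = (∑ i ∈ Finset.range n, ε ((i+1 : ℕ) : ℤ) ω ^ 2) / (n:ℝ) + 1 := by
            rw [Finset.sum_add_distrib, add_div]
            simp [hn0.ne']
        _ ≤ _ := by linarith)
  have hfin := crit_det _ _ (fun n i => h (((i + 1 : ℕ) : ℝ) * Δ / n))
    (fun n i => ε ((i+1 : ℕ) : ℤ) ω)
    (fun n i => Real.log (g₀ (z (((i + 1 : ℕ) : ℝ) * Δ / n)))
      - Real.log (gtil n ω (z (((i + 1 : ℕ) : ℝ) * Δ / n)))) hR hW hE2 (by
      intro e he
      obtain ⟨N, hN⟩ := hg e he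
      refine ⟨N, fun n hn i hi => ?_⟩
      rw [abs_sub_comm]
      exact hN n hn _ (hzrange _ (grid_mem hΔ hi)))
  refine hfin.congr fun n => ?_
  unfold Qupd
  rw [Finset.range_eq_Ico, Finset.sum_Ico_add' (fun i : ℕ =>
    (h ((i : ℝ) * Δ / n) + ε (i:ℤ) ω + (Real.log (g₀ (z ((i : ℝ) * Δ / n)))
      - Real.log (gtil n ω (z ((i : ℝ) * Δ / n))))) ^ 2) 0 n 1]
  congr 1
  refine Finset.sum_congr ?_ fun i _ => ?_
  · ext i; simp only [Finset.mem_Ico, Finset.mem_Icc]; omega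
  · simp only [hh]; ring
end

section
/- Let (a_{n,i})_{1≤i≤n, n≥1} be a triangular array of random variables on the same probability space such that sup_{1≤i≤n} |a_{n,i}| → 0 almost surely as n→∞. Then (1/n)·Σ_{i=2}^n (ε_i + a_{n,i})² converges to σ²/(1−φ²) almost surely as n→∞. -/
open MeasureTheory ProbabilityTheory Filter Set Topology

lemma aux_contr (e w : ℕ → ℝ) (ρ : ℝ) (h0 : 0 ≤ ρ) (h1 : ρ < 1)
    (h : ∀ n, |e (n+1)| ≤ ρ * |e n| + |w n|)
    (hw : w =o[atTop] (fun n : ℕ => (n : ℝ))) : e =o[atTop] (fun n : ℕ => (n : ℝ)) := by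
  rw [Asymptotics.isLittleO_iff] at hw ⊢
  intro c hc
  have hp : 0 < 1 - ρ := by linarith
  have hd : 0 < c / 2 * (1 - ρ) := by positivity
  obtain ⟨N, hN⟩ := eventually_atTop.1 (hw hd)
  have key : ∀ n ≥ N, |e n| ≤ |e N| + c / 2 * n := by
    intro n hn
    induction n, hn using Nat.le_induction with
    | base => have : (0:ℝ) ≤ c / 2 * N := by positivity
              linarith
    | succ n hn ih =>
      have h2 := hN n hn
      simp only [Real.norm_eq_abs, Nat.abs_cast] at h2
      have h3 := h n
      have h4 := mul_le_mul_of_nonneg_left ih h0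
      have h5 : ρ * |e N| ≤ |e N| := by nlinarith [abs_nonneg (e N)]
      push_cast
      nlinarith
  obtain ⟨M, hM⟩ := exists_nat_gt (|e N| / (c / 2))
  filter_upwards [eventually_ge_atTop N, eventually_ge_atTop M] with n hn hm
  have := key n hn
  simp only [Real.norm_eq_abs, Nat.abs_cast]
  rw [div_lt_iff₀ (by positivity)] at hM
  have hm' : (M : ℝ) ≤ n := by exact_mod_cast hm
  nlinarith

lemma aux_littleO (f : ℕ → ℝ) : f =o[atTop] (fun n : ℕ => (n : ℝ)) ↔
    Tendsto (fun n : ℕ => f n / n) atTop (𝓝 0) := by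
  apply Asymptotics.isLittleO_iff_tendsto'
  filter_upwards [eventually_gt_atTop 0] with n hn h
  have : n = 0 := by exact_mod_cast h
  omega

/-- composition with a slower sequence -/
lemma aux_comp (f : ℕ → ℝ) (hf : f =o[atTop] (fun n : ℕ => (n : ℝ))) (c : ℕ → ℕ)
    (hc : ∀ n, c n ≤ n) (hc' : Tendsto c atTop atTop) :
    (fun n => f (c n)) =o[atTop] (fun n : ℕ => (n : ℝ)) := by
  refine (hf.comp_tendsto hc').trans_isBigO ?_
  apply Asymptotics.IsBigO.of_bound 1
  filter_upwards with n
  simpa using hc n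

lemma aux_residue (f : ℕ → ℝ) (q : ℕ) (hq : 0 < q) (r : ℕ) (hr : r < q) (n : ℕ) :
    ∑ i ∈ Finset.range n, (if i % q = r then f i else 0) =
      ∑ m ∈ Finset.range ((n + q - 1 - r) / q), f (q * m + r) := by
  induction n with
  | zero =>
    have : (0 + q - 1 - r) / q = 0 := Nat.div_eq_of_lt (by omega)
    rw [this]; simp
  | succ n ih =>
    rw [Finset.sum_range_succ, ih]
    obtain ⟨k, s, hs, rfl⟩ : ∃ k s, s < q ∧ n = q * k + s :=
      ⟨n / q, n % q, Nat.mod_lt _ hq, (Nat.div_add_mod n q).symm⟩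
    have e0 : (q * k + s) % q = s := by rw [Nat.mul_add_mod]; exact Nat.mod_eq_of_lt hs
    have e1 : (q * k + s + q - 1 - r) / q = k + (s + q - 1 - r) / q := by
      rw [show q * k + s + q - 1 - r = q * k + (s + q - 1 - r) by omega, Nat.mul_add_div hq]
    have e2 : (q * k + s + 1 + q - 1 - r) / q = k + (s + q - r) / q := by
      rw [show q * k + s + 1 + q - 1 - r = q * k + (s + q - r) by omega, Nat.mul_add_div hq]
    rw [e0, e1, e2]
    rcases lt_trichotomy s r with h | h | h
    · rw [Nat.div_eq_of_lt (show s + q - 1 - r < q by omega),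
        Nat.div_eq_of_lt (show s + q - r < q by omega), if_neg (by omega)]; simp
    · subst h
      rw [Nat.div_eq_of_lt (show s + q - 1 - s < q by omega), show s + q - s = q by omega,
        Nat.div_self hq, if_pos rfl, Finset.sum_range_succ]; simp
    · have a1 : (s + q - 1 - r) / q = 1 := by
        rw [show s + q - 1 - r = q * 1 + (s - 1 - r) by omega, Nat.mul_add_div hq,
          Nat.div_eq_of_lt (by omega)]
      have a2 : (s + q - r) / q = 1 := by
        rw [show s + q - r = q * 1 + (s - r) by omega, Nat.mul_add_div hq,
          Nat.div_eq_of_lt (by omega)]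
      rw [a1, a2, if_neg (by omega)]; simp

lemma aux_avg (f : ℕ → ℝ) (q : ℕ) (hq : 0 < q)
    (h : ∀ r < q, (fun n => ∑ m ∈ Finset.range n, f (q * m + r)) =o[atTop]
      (fun n : ℕ => (n : ℝ))) :
    (fun n => ∑ m ∈ Finset.range n, f m) =o[atTop] (fun n : ℕ => (n : ℝ)) := by
  have e : (fun n => ∑ m ∈ Finset.range n, f m) = fun n => ∑ r ∈ Finset.range q,
      ∑ m ∈ Finset.range ((n + q - 1 - r) / q), f (q * m + r) := by
    funext n
    rw [Finset.sum_congr rfl (fun r hr =>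
      (aux_residue f q hq r (Finset.mem_range.1 hr) n).symm), Finset.sum_comm]
    apply Finset.sum_congr rfl
    intro i _
    rw [Finset.sum_ite_eq, if_pos (Finset.mem_range.2 (Nat.mod_lt _ hq))]
  rw [e]
  apply Asymptotics.IsLittleO.fun_sum
  intro r hr
  have hr := Finset.mem_range.1 hr
  apply aux_comp _ (h r hr) (fun n => (n + q - 1 - r) / q)
  · intro n
    rcases Nat.eq_zero_or_pos n with rfl | hn
    · rw [Nat.div_eq_of_lt (by omega)]
    · apply Nat.div_le_of_le_mul
      have : n + q ≤ q * n + 1 := by nlinarith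
      omega
  · rw [tendsto_atTop]
    intro b
    filter_upwards [eventually_ge_atTop (q * b + q)] with n hn
    rw [Nat.le_div_iff_mul_le hq, mul_comm]
    omega

/-- deterministic part -/
lemma aux_det (v y : ℕ → ℝ) (φ s : ℝ) (hφ : |φ| < 1) (y0 : y 0 = 0)
    (hy : ∀ n, y (n+1) = φ * y n + v n)
    (hq : Tendsto (fun n : ℕ => (∑ j ∈ Finset.range n, v j ^ 2) / n) atTop (𝓝 s))
    (hk : ∀ k, (fun n => ∑ j ∈ Finset.range n, v j * v (j + k + 1)) =o[atTop]
      (fun n : ℕ => (n : ℝ))) :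
    Tendsto (fun n : ℕ => (∑ j ∈ Finset.range n, y j ^ 2) / n) atTop (𝓝 (s / (1 - φ ^ 2))) := by
  have hφ2 : φ ^ 2 < 1 := (sq_lt_one_iff_abs_lt_one φ).2 hφ
  have hyn : ∀ n, y n = ∑ k ∈ Finset.range n, φ ^ k * v (n - 1 - k) := by
    intro n
    induction n with
    | zero => simp [y0]
    | succ n ih =>
      rw [hy, ih, Finset.sum_range_succ', Finset.mul_sum]
      congr 1
      · apply Finset.sum_congr rfl
        intro k hk
        rw [show n + 1 - 1 - (k + 1) = n - 1 - k by omega]; ring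
      · simp
  set R : ℕ → ℕ → ℝ := fun k n => ∑ j ∈ Finset.range (n - 1 - k), v j * v (j + k + 1) with hR
  have hR0 : ∀ k n, n ≤ k + 1 → R k n = 0 := by
    intro k n h
    simp only [hR]
    rw [show n - 1 - k = 0 by omega]; simp
  have hC : ∀ n, ∑ i ∈ Finset.range n, y i * v i = ∑ k ∈ Finset.range n, φ ^ k * R k n := by
    intro n
    induction n with
    | zero => simp
    | succ n ih =>
      rw [Finset.sum_range_succ, ih, Finset.sum_range_succ, hR0 n (n+1) le_rfl, hyn n,
        Finset.sum_mul, ← Finset.sum_add_distrib, mul_zero, add_zero]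
      apply Finset.sum_congr rfl
      intro k hk
      have hk := Finset.mem_range.1 hk
      simp only [hR]
      rw [show n + 1 - 1 - k = (n - 1 - k) + 1 by omega, Finset.sum_range_succ,
        show n - 1 - k + k + 1 = n by omega]
      ring
  have hCt : ∀ n, (∑ i ∈ Finset.range n, y i * v i) / n = ∑' k, φ ^ k * (R k n / n) := by
    intro n
    rw [tsum_eq_sum (s := Finset.range n), hC, Finset.sum_div]
    · apply Finset.sum_congr rfl
      intros; ring
    · intro k hk
      rw [hR0 k n (by simp at hk; omega)]; simp
  have hRb : ∀ k n, |R k n| ≤ ∑ j ∈ Finset.range n, v j ^ 2 := by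
    intro k n
    rcases le_or_gt n (k+1) with h | h
    · rw [hR0 k n h, abs_zero]; positivity
    have b1 : |R k n| ≤ ∑ j ∈ Finset.range (n - 1 - k), (v j ^ 2 / 2 + v (k + 1 + j) ^ 2 / 2) := by
      refine (Finset.abs_sum_le_sum_abs _ _).trans (Finset.sum_le_sum fun j _ => ?_)
      rw [show j + k + 1 = k + 1 + j by ring]
      rw [abs_le]; constructor <;>
        nlinarith [sq_nonneg (v j - v (k + 1 + j)), sq_nonneg (v j + v (k + 1 + j))]
    have b2 : ∑ j ∈ Finset.range (n - 1 - k), v j ^ 2 ≤ ∑ j ∈ Finset.range n, v j ^ 2 :=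
      Finset.sum_le_sum_of_subset_of_nonneg (by intro x; simp; omega) (fun _ _ _ => by positivity)
    have b3 : ∑ j ∈ Finset.range (n - 1 - k), v (k + 1 + j) ^ 2
        ≤ ∑ j ∈ Finset.range n, v j ^ 2 := by
      have : n = (k + 1) + (n - 1 - k) := by omega
      conv_rhs => rw [this, Finset.sum_range_add]
      have : 0 ≤ ∑ j ∈ Finset.range (k+1), v j ^ 2 := by positivity
      linarith
    rw [Finset.sum_add_distrib, ← Finset.sum_div, ← Finset.sum_div] at b1
    linarith
  have hCo : Tendsto (fun n : ℕ => (∑ i ∈ Finset.range n, y i * v i) / n) atTop (𝓝 0) := by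
    simp_rw [hCt]
    rw [show (0:ℝ) = ∑' k : ℕ, (0:ℝ) by simp]
    apply tendsto_tsum_of_dominated_convergence (bound := fun k => |φ| ^ k * (s + 1))
    · exact (summable_geometric_of_lt_one (abs_nonneg _) hφ).mul_right _
    · intro k
      rw [← mul_zero (φ ^ k)]
      apply Tendsto.const_mul
      rw [← aux_littleO]
      apply aux_comp _ (hk k) (fun n => n - 1 - k)
      · intro n; omega
      · rw [tendsto_atTop]
        intro b
        filter_upwards [eventually_ge_atTop (b + 1 + k)] with n hn
        omega
    · filter_upwards [hq.eventually_le_const (show s < s + 1 by linarith)] with n hn k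
      rw [norm_mul, norm_pow, Real.norm_eq_abs, Real.norm_eq_abs, abs_div, Nat.abs_cast]
      refine mul_le_mul_of_nonneg_left (le_trans ?_ hn) (by positivity)
      gcongr
      exact hRb k n
  set L := s / (1 - φ ^ 2) with hL
  have hLs : s = L - φ ^ 2 * L := by
    rw [hL]; field_simp [show (1 - φ ^ 2) ≠ 0 by linarith]
  have hE : (fun n : ℕ => (∑ j ∈ Finset.range n, y j ^ 2) - n * L) =o[atTop]
      (fun n : ℕ => (n : ℝ)) := by
    apply aux_contr _ (fun n => 2 * φ * (∑ i ∈ Finset.range n, y i * v i) +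
      ((∑ j ∈ Finset.range n, v j ^ 2) - n * s) - L) (φ ^ 2) (by positivity) hφ2
    · intro n
      have : (∑ j ∈ Finset.range (n+1), y j ^ 2) - ((n + 1 : ℕ) : ℝ) * L =
          φ ^ 2 * ((∑ j ∈ Finset.range n, y j ^ 2) - n * L) +
          (2 * φ * (∑ i ∈ Finset.range n, y i * v i) +
            ((∑ j ∈ Finset.range n, v j ^ 2) - n * s) - L) := by
        rw [Finset.sum_range_succ', y0]
        have : ∑ j ∈ Finset.range n, y (j+1) ^ 2 = φ ^ 2 * (∑ j ∈ Finset.range n, y j ^ 2)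
          + 2 * φ * (∑ i ∈ Finset.range n, y i * v i) + ∑ j ∈ Finset.range n, v j ^ 2 := by
          simp only [Finset.mul_sum, ← Finset.sum_add_distrib, hy]
          apply Finset.sum_congr rfl
          intros; ring
        rw [this, hLs]
        push_cast
        ring
      rw [this]
      refine (abs_add_le _ _).trans ?_
      rw [abs_mul, abs_of_nonneg (sq_nonneg φ)]
    · refine Asymptotics.IsLittleO.sub (Asymptotics.IsLittleO.add ?_ ?_) ?_
      · exact ((aux_littleO _).2 hCo).const_mul_left _
      · rw [aux_littleO]
        have := hq.sub_const s
        rw [sub_self] at this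
        refine this.congr' ?_
        filter_upwards [eventually_gt_atTop 0] with n hn
        have : (n:ℝ) ≠ 0 := by positivity
        field_simp
      · rw [aux_littleO]
        exact tendsto_const_div_atTop_nhds_zero_nat L
  rw [aux_littleO] at hE
  have := hE.add_const L
  rw [zero_add] at this
  refine this.congr' ?_
  filter_upwards [eventually_gt_atTop 0] with n hn
  have : (n:ℝ) ≠ 0 := by positivity
  field_simp
  ring

lemma aux_final (y b : ℕ → ℕ → ℝ) (L : ℝ)
    (hy : Tendsto (fun n : ℕ => (∑ j ∈ Finset.Icc 2 n, y n j ^ 2) / n) atTop (𝓝 L))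
    (hb : Tendsto (fun n : ℕ => (∑ j ∈ Finset.Icc 2 n, b n j ^ 2) / n) atTop (𝓝 0)) :
    Tendsto (fun n : ℕ => (1 / (n:ℝ)) * (∑ j ∈ Finset.Icc 2 n, (y n j + b n j) ^ 2)) atTop (𝓝 L) := by
  have hc : Tendsto (fun n : ℕ => (∑ j ∈ Finset.Icc 2 n, y n j * b n j) / n) atTop (𝓝 0) := by
    have h := (hy.mul hb).sqrt
    rw [mul_zero, Real.sqrt_zero] at h
    apply squeeze_zero_norm _ h
    intro n
    rw [Real.norm_eq_abs]
    apply Real.abs_le_sqrt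
    rw [div_pow, div_mul_div_comm, ← sq]
    gcongr
    exact Finset.sum_mul_sq_le_sq_mul_sq _ _ _
  have := (hy.add (hc.const_mul 2)).add hb
  simp only [mul_zero, add_zero] at this
  refine this.congr fun n => ?_
  simp only [add_sq, Finset.sum_add_distrib, mul_assoc, ← Finset.mul_sum]
  ring

lemma aux_prob {Ω : Type*} [MeasurableSpace Ω] (μ : Measure Ω) [IsProbabilityMeasure μ]
    (V : ℕ → Ω → ℝ) (hm : ∀ j, Measurable (V j)) (hi : iIndepFun V μ)
    (hid : ∀ i j, IdentDistrib (V i) (V j) μ μ) (hint : ∀ j, Integrable (V j) μ)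
    (hmean : ∀ j, ∫ ω, V j ω ∂μ = 0) (k : ℕ) :
    ∀ᵐ ω ∂μ, (fun n => ∑ j ∈ Finset.range n, V j ω * V (j + k + 1) ω) =o[atTop]
      (fun n : ℕ => (n : ℝ)) := by
  have main : ∀ r, ∀ᵐ ω ∂μ, (fun n => ∑ m ∈ Finset.range n,
      (fun j => V j ω * V (j + k + 1) ω) ((k + 2) * m + r)) =o[atTop] (fun n : ℕ => (n : ℝ)) := by
    intro r
    have hne : ∀ j : ℕ, j ≠ j + k + 1 := by intro j; omega
    have h := strong_law_ae_real (μ := μ)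
      (fun m => V ((k + 2) * m + r) * V ((k + 2) * m + r + k + 1))
      ((hi.indepFun (hne _)).integrable_mul (hint _) (hint _)) ?_ ?_
    · rw [(hi.indepFun (hne _)).integral_mul_eq_mul_integral (hm _).aestronglyMeasurable
        (hm _).aestronglyMeasurable, hmean, zero_mul] at h
      filter_upwards [h] with ω hω
      rw [aux_littleO]
      simpa using hω
    · have hd : ∀ m m' : ℕ, m ≠ m' → (k + 2) * m + r ≠ (k + 2) * m' + r ∧
          (k + 2) * m + r ≠ (k + 2) * m' + r + k + 1 := by
        intro m m' hmm
        rcases lt_or_gt_of_ne hmm with h | h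
        · have : (k + 2) * (m + 1) ≤ (k + 2) * m' := Nat.mul_le_mul_left _ h
          rw [mul_add] at this
          constructor <;> omega
        · have : (k + 2) * (m' + 1) ≤ (k + 2) * m := Nat.mul_le_mul_left _ h
          rw [mul_add] at this
          constructor <;> omega
      intro m m' hmm
      have h1 := hd m m' hmm
      have h2 := hd m' m hmm.symm
      apply hi.indepFun_mul_mul hm
      · exact h1.1
      · exact h1.2
      · exact fun h => h2.2 h.symm
      · intro h; apply h1.1; omega
    · intro m
      exact ((hid _ _).prodMk (hid _ _) (hi.indepFun (hne _)) (hi.indepFun (hne _))).comp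
        (u := fun p : ℝ × ℝ => p.1 * p.2) (by fun_prop)
  filter_upwards [ae_all_iff.2 main] with ω hω
  exact aux_avg (fun j => V j ω * V (j + k + 1) ω) (k + 2) (by omega) (fun r _ => hω r)

/-- If the triangular array `a` satisfies `sup_{1≤i≤n} |a_{n,i}| → 0`
almost surely, then `(1/n) ∑_{i=2}^n (ε_i + a_{n,i})²` converges to `σ²/(1-φ²)`
almost surely. -/
theorem stmt13
    {Ω : Type*} [MeasurableSpace Ω] (μ : Measure Ω) [IsProbabilityMeasure μ]
    (U : ℤ → Ω → ℝ) (hUmeas : ∀ j, Measurable (U j))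
    (hUindep : iIndepFun U μ)
    (hUident : ∀ j, μ.map (U j) = μ.map (U 0))
    (σ : ℝ) (hσ : 0 < σ)
    (hUmean : ∫ ω, U 0 ω ∂μ = 0)
    (hUvar : ∫ ω, (U 0 ω) ^ 2 ∂μ = σ ^ 2)
    (hU8 : Integrable (fun ω => (U 0 ω) ^ 8) μ)
    (φ : ℝ) (hφ0 : φ ≠ 0) (hφ1 : |φ| < 1)
    (ε : ℤ → Ω → ℝ) (hεmeas : ∀ i, Measurable (ε i))
    (hεsum : ∀ᵐ ω ∂μ, ∀ i : ℤ, HasSum (fun j : ℕ => φ ^ j * U (i - (j : ℤ)) ω) (ε i ω))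
    (a : ℕ → ℕ → Ω → ℝ)
    (ha : ∀ᵐ ω ∂μ, ∀ e > (0 : ℝ), ∃ N : ℕ, ∀ n ≥ N, ∀ i ∈ Finset.Icc 1 n, |a n i ω| < e) :
    ∀ᵐ ω ∂μ, Tendsto (fun n : ℕ =>
      (1 / (n : ℝ)) * ∑ i ∈ Finset.Icc 2 n, (ε (i : ℤ) ω + a n i ω) ^ 2)
      atTop (𝓝 (σ ^ 2 / (1 - φ ^ 2))) := by
  have hid0 : ∀ i j, IdentDistrib (U i) (U j) μ μ := fun i j =>
    ⟨(hUmeas i).aemeasurable, (hUmeas j).aemeasurable, by rw [hUident i, hUident j]⟩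
  have hI2 : Integrable (fun ω => U 0 ω ^ 2) μ := by
    apply Integrable.mono' ((integrable_const (1:ℝ)).add hU8) (by fun_prop)
    filter_upwards with ω
    simp only [Real.norm_eq_abs, Pi.add_apply, abs_pow, sq_abs]
    rcases le_total (U 0 ω ^ 2) 1 with h | h
    · have : 0 ≤ U 0 ω ^ 8 := by positivity
      linarith
    · have : U 0 ω ^ 8 = (U 0 ω ^ 2) ^ 4 := by ring
      have h' := le_self_pow₀ h (show 4 ≠ 0 by norm_num)
      linarith
  have hI1 : Integrable (U 0) μ := by
    apply Integrable.mono' ((integrable_const (1:ℝ)).add hI2) (by fun_prop)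
    filter_upwards with ω
    simp only [Real.norm_eq_abs, Pi.add_apply]
    rw [abs_le]; constructor <;> nlinarith [sq_nonneg (U 0 ω + 1), sq_nonneg (U 0 ω - 1)]
  let V : ℕ → Ω → ℝ := fun j => U ((j : ℤ) + 1)
  have hVm : ∀ j, Measurable (V j) := fun j => hUmeas _
  have hVi : iIndepFun V μ := hUindep.precomp (g := fun j : ℕ => (j : ℤ) + 1)
    (fun x y h => by simpa using h)
  have hVid : ∀ i j, IdentDistrib (V i) (V j) μ μ := fun i j => hid0 _ _
  have hVint : ∀ j, Integrable (V j) μ := fun j => (hid0 _ 0).integrable_iff.2 hI1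
  have hVmean : ∀ j, ∫ ω, V j ω ∂μ = 0 := fun j => by
    rw [← hUmean]; exact (hid0 _ 0).integral_eq
  have hsq : ∀ i j, IdentDistrib (fun ω => U i ω ^ 2) (fun ω => U j ω ^ 2) μ μ := fun i j =>
    (hid0 i j).comp (u := fun x : ℝ => x ^ 2) (by fun_prop)
  have hV2 : ∀ᵐ ω ∂μ, Tendsto (fun n : ℕ => (∑ j ∈ Finset.range n, V j ω ^ 2) / n)
      atTop (𝓝 (σ ^ 2)) := by
    have h := strong_law_ae_real (μ := μ) (fun j ω => V j ω ^ 2)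
      ((hsq _ 0).integrable_iff.2 hI2)
      (fun i j hij => (hVi.indepFun hij).comp (φ := fun x : ℝ => x ^ 2) (ψ := fun x : ℝ => x ^ 2)
        (by fun_prop) (by fun_prop)) (fun i => hsq _ _)
    have e : ∫ ω, V 0 ω ^ 2 ∂μ = σ ^ 2 := by rw [← hUvar]; exact (hsq _ 0).integral_eq
    rw [e] at h
    exact h
  filter_upwards [hεsum, ha, hV2, ae_all_iff.2 (aux_prob μ V hVm hVi hVid hVint hVmean)]
    with ω hε haω hq hk
  have hφ2 : φ ^ 2 < 1 := (sq_lt_one_iff_abs_lt_one φ).2 hφ1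
  have hrec : ∀ n : ℕ, ε ((n : ℤ) + 1) ω = φ * ε n ω + V n ω := by
    intro n
    have h1 := (hε n).mul_left φ
    have h2 := (hasSum_nat_add_iff' 1).2 (hε ((n : ℤ) + 1))
    have e : (fun j : ℕ => φ ^ (j + 1) * U ((n : ℤ) + 1 - ((j + 1 : ℕ) : ℤ)) ω) =
        fun j : ℕ => φ * (φ ^ j * U ((n : ℤ) - (j : ℤ)) ω) := by
      funext j
      rw [show (n : ℤ) + 1 - ((j + 1 : ℕ) : ℤ) = (n : ℤ) - j by push_cast; ring]
      ring
    rw [e] at h2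
    have h3 := h2.unique h1
    simp at h3
    change _ = φ * ε n ω + U ((n : ℤ) + 1) ω
    linarith
  let y : ℕ → ℝ := fun n => ε n ω - φ ^ n * ε 0 ω
  have hy0 : y 0 = 0 := by simp [y]
  have hy : ∀ n, y (n + 1) = φ * y n + V n ω := by
    intro n
    simp only [y]
    push_cast
    rw [hrec n]
    ring
  have hS := aux_det (fun j => V j ω) y φ (σ ^ 2) hφ1 hy0 hy hq hk
  have hIcc : ∀ f : ℕ → ℝ, ∀ n, 2 ≤ n → ∑ j ∈ Finset.Icc 2 n, f j =
      ∑ j ∈ Finset.range (n + 1), f j - (f 0 + f 1) := by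
    intro f n hn
    rw [← Finset.sum_range_add_sum_Ico f (show 2 ≤ n + 1 by omega)]
    have : Finset.Icc 2 n = Finset.Ico 2 (n + 1) := by ext; simp
    rw [this]
    simp [Finset.sum_range_succ]
  have hfin := aux_final (fun _ => y) (fun n i => φ ^ i * ε 0 ω + a n i ω) (σ ^ 2 / (1 - φ ^ 2))
    ?_ ?_
  · refine hfin.congr fun n => ?_
    congr 1
    apply Finset.sum_congr rfl
    intro i _
    simp only [y]
    ring
  · have h1 := hS.comp (tendsto_add_atTop_nat 1)
    have h2 : Tendsto (fun n : ℕ => ((n + 1 : ℕ) : ℝ) / n) atTop (𝓝 1) := by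
      have := (tendsto_const_div_atTop_nhds_zero_nat (1:ℝ)).const_add 1
      rw [add_zero] at this
      refine this.congr' ?_
      filter_upwards [eventually_gt_atTop 0] with n hn
      have : (n:ℝ) ≠ 0 := by positivity
      push_cast
      field_simp
    have h3 := (h1.mul h2).sub (tendsto_const_div_atTop_nhds_zero_nat (y 0 ^ 2 + y 1 ^ 2))
    rw [mul_one, sub_zero] at h3
    refine h3.congr' ?_
    filter_upwards [eventually_ge_atTop 2] with n hn
    rw [hIcc _ n hn]
    have : (n:ℝ) ≠ 0 := by positivity
    have : ((n + 1 : ℕ):ℝ) ≠ 0 := by positivity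
    simp only [Function.comp]
    field_simp
  · set C := 2 * ε 0 ω ^ 2 * (1 - φ ^ 2)⁻¹ with hC
    rw [← aux_littleO, Asymptotics.isLittleO_iff]
    intro c hc
    obtain ⟨N, hN⟩ := haω (Real.sqrt (c / 4)) (by positivity)
    obtain ⟨M, hM⟩ := exists_nat_gt (C / (c / 2))
    filter_upwards [eventually_ge_atTop N, eventually_ge_atTop M] with n hn hm
    rw [Real.norm_eq_abs, abs_of_nonneg (by positivity), Real.norm_eq_abs, Nat.abs_cast]
    have b1 : ∑ j ∈ Finset.Icc 2 n, (φ ^ j * ε 0 ω + a n j ω) ^ 2 ≤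
        ∑ j ∈ Finset.Icc 2 n, (2 * ε 0 ω ^ 2 * (φ ^ 2) ^ j + c / 2) := by
      apply Finset.sum_le_sum
      intro j hj
      have h1 := hN n hn j (by simp at hj ⊢; omega)
      have h2 : a n j ω ^ 2 ≤ c / 4 := by
        rw [← sq_abs, ← Real.sq_sqrt (show 0 ≤ c / 4 by positivity)]
        gcongr
      have h3 : (φ ^ 2) ^ j = (φ ^ j) ^ 2 := by ring
      rw [h3]
      nlinarith [sq_nonneg (φ ^ j * ε 0 ω - a n j ω)]
    have b2 : ∑ j ∈ Finset.Icc 2 n, (φ ^ 2) ^ j ≤ (1 - φ ^ 2)⁻¹ := by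
      rw [← tsum_geometric_of_lt_one (by positivity) hφ2]
      exact (summable_geometric_of_lt_one (by positivity) hφ2).sum_le_tsum _
        (fun _ _ => by positivity)
    have b3 : 2 * ε 0 ω ^ 2 * ∑ j ∈ Finset.Icc 2 n, (φ ^ 2) ^ j ≤ C := by
      rw [hC]; gcongr
    rw [Finset.sum_add_distrib, ← Finset.mul_sum, Finset.sum_const, Nat.card_Icc,
      nsmul_eq_mul] at b1
    have b4 : ((n + 1 - 2 : ℕ) : ℝ) ≤ n := by exact_mod_cast (by omega)
    have hm' : (M : ℝ) ≤ n := by exact_mod_cast hm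
    rw [div_lt_iff₀ (by positivity)] at hM
    have b5 : ((n + 1 - 2 : ℕ) : ℝ) * (c / 2) ≤ n * (c / 2) := by gcongr
    have b6 : (M : ℝ) * (c / 2) ≤ n * (c / 2) := by gcongr
    linarith
end

section
/- Let (a_{n,i})_{1≤i≤n, n≥1} be a triangular array of random variables on the same probability space such that sup_{1≤i≤n} |a_{n,i}| → 0 almost surely as n→∞. Then (1/n)·Σ_{i=2}^n (ε_i + a_{n,i})·(ε_{i−1} + a_{n,i−1}) converges to φ·σ²/(1−φ²) almost surely as n→∞. -/
open MeasureTheory ProbabilityTheory Filter Set Topology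

/-- averages along residue classes control the full averages -/
lemma avg_of_residues (d : ℕ) (hd : 0 < d) (v : ℕ → ℝ)
    (h : ∀ r < d, Tendsto (fun n : ℕ => (∑ m ∈ Finset.range n, v (d * m + r)) / (n : ℝ))
      atTop (𝓝 0)) :
    Tendsto (fun n : ℕ => (∑ i ∈ Finset.range n, v i) / (n : ℝ)) atTop (𝓝 0) := by
  let c : ℕ → ℕ → ℕ := fun r n => n / d + if r < n % d then 1 else 0
  have key : ∀ n, ∑ i ∈ Finset.range n, v i
      = ∑ r ∈ Finset.range d, ∑ m ∈ Finset.range (c r n), v (d * m + r) := by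
    intro n
    induction n with
    | zero => simp [c]
    | succ n ih =>
      rw [Finset.sum_range_succ, ih]
      have hn : n % d < d := Nat.mod_lt _ hd
      have hne : d * (n / d) + n % d = n := Nat.div_add_mod n d
      have hc : ∀ r ∈ Finset.range d, ∑ m ∈ Finset.range (c r (n + 1)), v (d * m + r)
          = ∑ m ∈ Finset.range (c r n), v (d * m + r) + if r = n % d then v n else 0 := by
        intro r hr
        have hr : r < d := Finset.mem_range.1 hr
        have hcc : c r (n + 1) = c r n + if r = n % d then 1 else 0 := by
          simp only [c]
          by_cases hlast : n % d + 1 = d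
          · have h1 : n + 1 = d * (n / d + 1) := by rw [Nat.mul_add, mul_one]; omega
            have h2 : (n + 1) / d = n / d + 1 := by
              conv_lhs => rw [h1]
              exact Nat.mul_div_cancel_left _ hd
            have h3 : (n + 1) % d = 0 := by
              conv_lhs => rw [h1]
              exact Nat.mul_mod_right _ _
            rw [h2, h3]
            split_ifs <;> omega
          · have h1 : n + 1 = (n % d + 1) + d * (n / d) := by omega
            have h2 : (n + 1) / d = n / d := by
              conv_lhs => rw [h1]
              rw [Nat.add_mul_div_left _ _ hd, Nat.div_eq_of_lt (by omega), zero_add]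
            have h3 : (n + 1) % d = n % d + 1 := by
              conv_lhs => rw [h1]
              rw [Nat.add_mul_mod_self_left, Nat.mod_eq_of_lt (by omega)]
            rw [h2, h3]
            split_ifs <;> omega
        rw [hcc]
        split_ifs with hrn
        · rw [Finset.sum_range_succ]
          congr 2
          simp only [c]
          rw [if_neg (by omega)]
          rw [hrn]; simpa using hne
        · simp
      rw [Finset.sum_congr rfl hc, Finset.sum_add_distrib]
      simp [hn]
  simp_rw [key, Finset.sum_div]
  rw [show (0 : ℝ) = ∑ r ∈ Finset.range d, (0 : ℝ) by simp]
  refine tendsto_finsetSum _ fun r hr => ?_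
  have hr : r < d := Finset.mem_range.1 hr
  have hct : Tendsto (c r) atTop atTop := by
    refine tendsto_atTop_mono (fun n => Nat.le_add_right (n / d) _) ?_
    exact Nat.tendsto_div_const_atTop hd.ne'
  have hO : (fun n : ℕ => ∑ m ∈ Finset.range n, v (d * m + r)) =o[atTop] (fun n : ℕ => (n : ℝ)) := by
    refine Asymptotics.isLittleO_of_tendsto ?_ (h r hr)
    intro n hn
    have : n = 0 := by exact_mod_cast hn
    simp [this]
  have h2 := hO.comp_tendsto hct
  have h3 : ((fun n : ℕ => (n : ℝ)) ∘ c r) =O[atTop] (fun n : ℕ => (n : ℝ)) := by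
    refine Asymptotics.IsBigO.of_bound 1 (Eventually.of_forall fun n => ?_)
    simp only [Function.comp, Real.norm_natCast, one_mul]
    have : c r n ≤ n := by
      simp only [c]
      have hne : d * (n / d) + n % d = n := Nat.div_add_mod n d
      have : n / d ≤ d * (n / d) := Nat.le_mul_of_pos_left _ hd
      split_ifs <;> omega
    exact_mod_cast this
  simpa only [Function.comp_def, Finset.sum_div] using (h2.trans_isBigO h3).tendsto_div_nhds_zero

lemma lag_slln {Ω : Type*} [MeasurableSpace Ω] (μ : Measure Ω) [IsProbabilityMeasure μ]
    (U : ℤ → Ω → ℝ) (hUmeas : ∀ j, Measurable (U j))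
    (hUindep : iIndepFun U μ)
    (hUident : ∀ j, μ.map (U j) = μ.map (U 0))
    (hUmean : ∫ ω, U 0 ω ∂μ = 0) (hint : Integrable (U 0) μ) (p q : ℤ) (hpq : p ≠ q) :
    ∀ᵐ ω ∂μ, Tendsto (fun n : ℕ => (∑ i ∈ Finset.range n, U (i + p) ω * U (i + q) ω) / (n : ℝ))
      atTop (𝓝 0) := by
  have hid : ∀ i j, IdentDistrib (U i) (U j) μ μ := fun i j =>
    ⟨(hUmeas i).aemeasurable, (hUmeas j).aemeasurable, by rw [hUident i, hUident j]⟩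
  set d : ℕ := (p - q).natAbs + 1 with hd
  have main : ∀ r : ℕ, ∀ᵐ ω ∂μ, Tendsto (fun n : ℕ => (∑ m ∈ Finset.range n,
      U (((d * m + r : ℕ) : ℤ) + p) ω * U (((d * m + r : ℕ) : ℤ) + q) ω) / (n : ℝ))
      atTop (𝓝 0) := by
    intro r
    have hi : ∀ m : ℕ, IndepFun (U (((d * m + r : ℕ) : ℤ) + p)) (U (((d * m + r : ℕ) : ℤ) + q)) μ :=
      fun m => hUindep.indepFun (by omega)
    have hmul : Measurable (fun z : ℝ × ℝ => z.1 * z.2) := by fun_prop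
    have h0 : ∫ ω, U (((d * 0 + r : ℕ) : ℤ) + p) ω * U (((d * 0 + r : ℕ) : ℤ) + q) ω ∂μ = 0 := by
      rw [(hi 0).integral_fun_mul_eq_mul_integral (hUmeas _).aestronglyMeasurable
        (hUmeas _).aestronglyMeasurable, (hid _ 0).integral_eq, hUmean, zero_mul]
    have := strong_law_ae_real (μ := μ) (fun (m : ℕ) ω => U (((d * m + r : ℕ) : ℤ) + p) ω *
      U (((d * m + r : ℕ) : ℤ) + q) ω)
      ((hi 0).integrable_mul ((hid _ 0).integrable_iff.2 hint) ((hid _ 0).integrable_iff.2 hint))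
      (by
        intro m m' hmm
        have hz : ((m : ℤ) - m') ≠ 0 := by omega
        have hbig : (d : ℤ) ≤ |(d : ℤ) * ((m : ℤ) - m')| := by
          rw [abs_mul, abs_of_nonneg (by positivity)]
          exact le_mul_of_one_le_right (by positivity) (Int.one_le_abs hz)
        have hdd : (d : ℤ) = |p - q| + 1 := by rw [hd]; push_cast; simp
        have hd1 : (1:ℤ) ≤ |p - q| := Int.one_le_abs (by omega)
        have e1 : (d : ℤ) * ((m : ℤ) - m') = d * m - d * m' := by ring
        rw [e1, hdd] at hbig
        have := (hUindep.indepFun_prodMk_prodMk hUmeas (((d * m + r : ℕ) : ℤ) + p)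
          (((d * m + r : ℕ) : ℤ) + q) (((d * m' + r : ℕ) : ℤ) + p) (((d * m' + r : ℕ) : ℤ) + q)
          (by push_cast; rw [hdd]; grind) (by push_cast; rw [hdd]; grind) (by push_cast; rw [hdd]; grind) (by push_cast; rw [hdd]; grind)).comp hmul hmul
        exact this)
      (by
        intro m
        have := ((hid (((d * m + r : ℕ) : ℤ) + p) (((d * 0 + r : ℕ) : ℤ) + p)).prodMk
          (hid (((d * m + r : ℕ) : ℤ) + q) (((d * 0 + r : ℕ) : ℤ) + q)) (hi m) (hi 0)).comp hmul
        exact this)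
    rw [h0] at this
    exact this
  have := ae_all_iff.2 main
  filter_upwards [this] with ω hω
  exact avg_of_residues d (by omega) (fun i => U ((i:ℤ) + p) ω * U ((i:ℤ) + q) ω) (fun r _ => hω r)

lemma sq_slln {Ω : Type*} [MeasurableSpace Ω] (μ : Measure Ω) [IsProbabilityMeasure μ]
    (U : ℤ → Ω → ℝ) (hUmeas : ∀ j, Measurable (U j))
    (hUindep : iIndepFun U μ)
    (hUident : ∀ j, μ.map (U j) = μ.map (U 0)) (S : ℝ)
    (hS : ∫ ω, U 0 ω ^ 2 ∂μ = S) (hint : Integrable (fun ω => U 0 ω ^ 2) μ)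
    (f : ℕ → ℤ) (hf : Function.Injective f) :
    ∀ᵐ ω ∂μ, Tendsto (fun n : ℕ => (∑ i ∈ Finset.range n, U (f i) ω ^ 2) / (n : ℝ))
      atTop (𝓝 S) := by
  have hid : ∀ i j, IdentDistrib (fun ω => U i ω ^ 2) (fun ω => U j ω ^ 2) μ μ := fun i j =>
    (IdentDistrib.mk (hUmeas i).aemeasurable (hUmeas j).aemeasurable
      (by rw [hUident i, hUident j])).sq
  have hm : Measurable (fun z : ℝ => z ^ 2) := by fun_prop
  have := strong_law_ae_real (μ := μ) (fun (m : ℕ) ω => U (f m) ω ^ 2)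
    ((hid _ 0).integrable_iff.2 hint)
    (fun m m' h => (hUindep.indepFun (hf.ne h)).comp hm hm) (fun i => hid _ _)
  rw [(hid (f 0) 0).integral_eq, hS] at this
  exact this

lemma lin_bound (F : ℕ → ℝ) (S : ℝ) (h0 : F 0 = 0)
    (h : Tendsto (fun n : ℕ => F n / (n : ℝ)) atTop (𝓝 S)) :
    ∃ C : ℝ, 0 ≤ C ∧ ∀ n : ℕ, F n ≤ C * n := by
  obtain ⟨C, hC⟩ := h.bddAbove_range
  refine ⟨max C 0, le_max_right _ _, fun n => ?_⟩
  rcases Nat.eq_zero_or_pos n with rfl | hn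
  · simp [h0]
  · have h1 : F n / n ≤ C := hC ⟨n, rfl⟩
    have hn' : (0 : ℝ) < n := by exact_mod_cast hn
    rw [div_le_iff₀ hn'] at h1
    exact h1.trans (mul_le_mul_of_nonneg_right (le_max_left _ _) hn'.le)

lemma shift_bound (f : ℤ → ℝ) (hf : ∀ i, 0 ≤ f i) (n j : ℕ) :
    ∑ i ∈ Finset.range n, f (i + 2 - j) ≤
      ∑ i ∈ Finset.range n, f (i + 2) + ∑ i ∈ Finset.range j, f (1 - i) := by
  induction j with
  | zero => simp
  | succ j ih =>
    rw [Finset.sum_range_succ _ j]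
    have h1 : ∑ i ∈ Finset.range n, f ((i : ℤ) + 2 - ((j + 1 : ℕ) : ℤ)) ≤
        ∑ i ∈ Finset.range (n + 1), f ((i : ℤ) + 2 - ((j + 1 : ℕ) : ℤ)) := by
      rw [Finset.sum_range_succ]
      linarith [hf ((n : ℤ) + 2 - ((j + 1 : ℕ) : ℤ))]
    rw [Finset.sum_range_succ'] at h1
    have h2 : ∀ i : ℕ, ((i + 1 : ℕ) : ℤ) + 2 - ((j + 1 : ℕ) : ℤ) = (i : ℤ) + 2 - j := by
      intro i; push_cast; ring
    have h3 : ((0 : ℕ) : ℤ) + 2 - ((j + 1 : ℕ) : ℤ) = 1 - j := by push_cast; ring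
    simp only [h2, h3] at h1
    linarith

lemma det_main (u e : ℤ → ℝ) (φ S : ℝ) (hφ : |φ| < 1)
    (he : ∀ i : ℤ, HasSum (fun j : ℕ => φ ^ j * u (i - (j : ℤ))) (e i))
    (hlim : ∀ p q : ℤ, Tendsto (fun n : ℕ =>
      (∑ i ∈ Finset.range n, u (i + p) * u (i + q)) / (n : ℝ)) atTop
        (𝓝 (if p = q then S else 0)))
    (hback : Tendsto (fun n : ℕ =>
      (∑ i ∈ Finset.range n, u (1 - i) ^ 2) / (n : ℝ)) atTop (𝓝 S)) :
    Tendsto (fun n : ℕ => (∑ i ∈ Finset.range n, e (i + 2) * e (i + 1)) / (n : ℝ)) atTop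
      (𝓝 (φ * S / (1 - φ ^ 2))) := by
  have hF := hlim 2 2
  simp only [if_true, ← sq] at hF
  obtain ⟨C₁, hC₁, hF⟩ := lin_bound _ _ (by simp) hF
  obtain ⟨C₂, hC₂, hG⟩ := lin_bound _ _ (by simp) hback
  have hB : ∀ n j : ℕ, ∑ i ∈ Finset.range n, u (i + 2 - j) ^ 2 ≤ (C₁ + C₂) * (n + j) := by
    intro n j
    have h1 := shift_bound (fun i => u i ^ 2) (fun i => sq_nonneg _) n j
    have h2 := hF n
    have h3 := hG j
    have : (0 : ℝ) ≤ C₁ * j := by positivity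
    have : (0 : ℝ) ≤ C₂ * n := by positivity
    linarith
  set K := C₁ + C₂
  have hK : 0 ≤ K := by positivity
  let f : ℕ → ℕ × ℕ → ℝ := fun n x =>
    (φ ^ x.1 * φ ^ x.2) * ((∑ i ∈ Finset.range n, u (i + (2 - (x.1 : ℤ))) * u (i + (1 - (x.2 : ℤ)))) / n)
  let g : ℕ × ℕ → ℝ := fun x =>
    (φ ^ x.1 * φ ^ x.2) * (if (2 - (x.1 : ℤ)) = 1 - (x.2 : ℤ) then S else 0)
  have hfs : ∀ n, HasSum (f n) ((∑ i ∈ Finset.range n, e (i + 2) * e (i + 1)) / (n : ℝ)) := by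
    intro n
    have h1 : ∀ i ∈ Finset.range n, HasSum (fun x : ℕ × ℕ =>
        (φ ^ x.1 * u ((i : ℤ) + 2 - x.1)) * (φ ^ x.2 * u ((i : ℤ) + 1 - x.2)))
        (e (i + 2) * e (i + 1)) := by
      intro i _
      have k1 := he (i + 2)
      have k2 := he (i + 1)
      have k3 := summable_mul_of_summable_norm k1.summable.norm k2.summable.norm
      exact k1.mul k2 k3
    have h2 := (hasSum_sum h1).div_const (n : ℝ)
    refine (congrArg (fun F => HasSum F _) (funext ?_)).mpr h2
    intro x
    change (φ ^ x.1 * φ ^ x.2) * ((∑ i ∈ Finset.range n,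
      u (i + (2 - (x.1 : ℤ))) * u (i + (1 - (x.2 : ℤ)))) / n) = _
    rw [← mul_div_assoc, Finset.mul_sum]
    congr 1
    refine Finset.sum_congr rfl fun i _ => ?_
    rw [← add_sub_assoc, ← add_sub_assoc]
    ring
  have hgs : HasSum g (φ * S / (1 - φ ^ 2)) := by
    have hinj : Function.Injective (fun k : ℕ => ((k + 1, k) : ℕ × ℕ)) := by
      intro a b h; simpa using h
    rw [← hinj.hasSum_iff]
    · have h2 : |φ ^ 2| < 1 := by
        rw [abs_pow]; exact pow_lt_one₀ (abs_nonneg _) hφ (by norm_num)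
      have := (hasSum_geometric_of_abs_lt_one h2).mul_left (φ * S)
      rw [← div_eq_mul_inv] at this
      refine (congrArg (fun F => HasSum F _) (funext ?_)).mpr this
      intro k
      change (φ ^ (k + 1) * φ ^ k) * (if (2 - ((k + 1 : ℕ) : ℤ)) = 1 - (k : ℤ) then S else 0) = _
      rw [if_pos (by push_cast; ring)]
      rw [← pow_mul]; ring
    · rintro ⟨j, k⟩ hx
      simp only [g]
      rw [if_neg, mul_zero]
      intro h
      exact hx ⟨k, by ext <;> simp; omega⟩
  have hs1 : Summable (fun j : ℕ => |φ| ^ j * ((j : ℝ) + 1)) := by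
    have hn : ‖|φ|‖ < 1 := by simpa using hφ
    have h1 := summable_pow_mul_geometric_of_norm_lt_one 1 hn
    have h0 := summable_pow_mul_geometric_of_norm_lt_one 0 hn
    refine (h1.add h0).congr fun j => ?_
    ring
  have hnn : (0 : ℕ → ℝ) ≤ (fun j : ℕ => |φ| ^ j * ((j : ℝ) + 1)) := fun j => by
    simp only [Pi.zero_apply]; positivity
  have hbs := (hs1.mul_of_nonneg hs1 hnn hnn).mul_left (3 * K)
  have := tendsto_tsum_of_dominated_convergence (𝓕 := atTop) (f := f) (g := g) hbs
    (fun x => (hlim _ _).const_mul _) (by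
      filter_upwards [eventually_ge_atTop 1] with n hn
      rintro ⟨j, k⟩
      have hn' : (1 : ℝ) ≤ n := by exact_mod_cast hn
      simp only [f]
      rw [norm_mul, norm_mul, norm_pow, norm_pow, Real.norm_eq_abs φ, norm_div, Real.norm_natCast]
      have hsum : ‖∑ i ∈ Finset.range n, u (i + (2 - (j : ℤ))) * u (i + (1 - (k : ℤ)))‖
          ≤ 3 * K * ((j + 1) * (k + 1)) * n := by
        have e1 := hB n j
        have e2 := hB n (k + 1)
        have e3 : ‖∑ i ∈ Finset.range n, u (i + (2 - (j : ℤ))) * u (i + (1 - (k : ℤ)))‖ ≤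
            ∑ i ∈ Finset.range n, (u (i + 2 - j) ^ 2 + u (i + 2 - ((k + 1 : ℕ) : ℤ)) ^ 2) / 2 := by
          refine norm_sum_le_of_le _ fun i _ => ?_
          have : (i : ℤ) + 2 - ((k + 1 : ℕ) : ℤ) = i + (1 - (k : ℤ)) := by push_cast; ring
          rw [this, add_sub_assoc, norm_mul, Real.norm_eq_abs, Real.norm_eq_abs]
          have := two_mul_le_add_sq |u (i + (2 - (j : ℤ)))| |u (i + (1 - (k : ℤ)))|
          rw [sq_abs, sq_abs] at this
          linarith
        rw [← Finset.sum_div, Finset.sum_add_distrib] at e3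
        push_cast at e2 e3
        have e4 : (n + j : ℝ) + (n + (k + 1)) ≤ 2 * (3 * ((j + 1) * (k + 1)) * n) := by
          have hj : (0 : ℝ) ≤ j := by positivity
          have hk : (0 : ℝ) ≤ k := by positivity
          have t1 : (j : ℝ) ≤ j * n := le_mul_of_one_le_right hj hn'
          have t2 : (k : ℝ) ≤ k * n := le_mul_of_one_le_right hk hn'
          have t3 : (0 : ℝ) ≤ j * k * n := by positivity
          nlinarith
        have e5 := mul_le_mul_of_nonneg_left e4 hK
        linarith
      have : ‖∑ i ∈ Finset.range n, u (i + (2 - (j : ℤ))) * u (i + (1 - (k : ℤ)))‖ / n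
          ≤ 3 * K * ((j + 1) * (k + 1)) := by
        rw [div_le_iff₀ (by linarith)]; exact hsum
      calc _ ≤ |φ| ^ j * |φ| ^ k * (3 * K * ((j + 1) * (k + 1))) :=
            mul_le_mul_of_nonneg_left this (by positivity)
        _ = _ := by ring)
  rw [hgs.tsum_eq] at this
  exact this.congr fun n => (hfs n).tsum_eq

lemma det_abs (u e : ℤ → ℝ) (φ S : ℝ) (hφ : |φ| < 1)
    (he : ∀ i : ℤ, HasSum (fun j : ℕ => φ ^ j * u (i - (j : ℤ))) (e i))
    (hlim : Tendsto (fun n : ℕ =>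
      (∑ i ∈ Finset.range n, u (i + 1) * u (i + 1)) / (n : ℝ)) atTop (𝓝 S)) :
    ∃ C : ℝ, 0 ≤ C ∧ ∀ n : ℕ, ∑ i ∈ Finset.range n, |e (i + 1)| ≤ C * (n + 1) := by
  obtain ⟨C, hC, hF⟩ := lin_bound _ _ (by simp) hlim
  have hrec : ∀ i : ℤ, e (i + 1) = φ * e i + u (i + 1) := by
    intro i
    have h1 := (hasSum_nat_add_iff' 1).2 (he (i + 1))
    have h2 := (he i).mul_left φ
    have : (fun j : ℕ => φ ^ (j + 1) * u (i + 1 - ((j + 1 : ℕ) : ℤ))) =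
        fun j : ℕ => φ * (φ ^ j * u (i - j)) := by
      funext j
      rw [show i + 1 - ((j + 1 : ℕ) : ℤ) = i - j by push_cast; ring]
      ring
    rw [this] at h1
    have := h1.unique h2
    simp at this
    linarith
  have hind : ∀ n : ℕ, (1 - |φ|) * ∑ i ∈ Finset.range n, |e (i + 1)| + |φ| * |e n| ≤
      |φ| * |e 0| + ∑ i ∈ Finset.range n, (1 + u (i + 1) * u (i + 1)) := by
    intro n
    induction n with
    | zero => simp
    | succ n ih =>
      rw [Finset.sum_range_succ, Finset.sum_range_succ]
      have h1 : |e (n + 1)| ≤ |φ| * |e n| + |u (n + 1)| := by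
        rw [hrec, ← abs_mul]; exact abs_add_le _ _
      have h2 : |u (n + 1)| ≤ 1 + u (n + 1) * u (n + 1) := by
        rw [← abs_mul_abs_self]; nlinarith [sq_nonneg (|u (n + 1)| - 1)]
      push_cast
      linarith
  have hp : 0 < 1 - |φ| := by linarith
  refine ⟨(|φ| * |e 0| + 1 + C) / (1 - |φ|), by positivity, fun n => ?_⟩
  have h1 := hind n
  rw [Finset.sum_add_distrib] at h1
  have h2 := hF n
  simp at h1
  rw [div_mul_eq_mul_div, le_div_iff₀ hp]
  have : 0 ≤ |φ| * |e n| := by positivity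
  have : 0 ≤ |φ| * |e 0| * n := by positivity
  nlinarith

lemma det_final (e : ℤ → ℝ) (L C : ℝ) (hC : 0 ≤ C)
    (hm : Tendsto (fun n : ℕ => (∑ i ∈ Finset.range n, e (i + 2) * e (i + 1)) / (n : ℝ)) atTop
      (𝓝 L))
    (hb : ∀ n : ℕ, ∑ i ∈ Finset.range n, |e (i + 1)| ≤ C * (n + 1))
    (a : ℕ → ℕ → ℝ)
    (ha : ∀ η > (0 : ℝ), ∃ N : ℕ, ∀ n ≥ N, ∀ i ∈ Finset.Icc 1 n, |a n i| < η) :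
    Tendsto (fun n : ℕ =>
      (1 / (n : ℝ)) * ∑ i ∈ Finset.Icc 2 n,
        (e (i : ℤ) + a n i) * (e ((i : ℤ) - 1) + a n (i - 1)))
      atTop (𝓝 L) := by
  rw [← tendsto_add_atTop_iff_nat 1]
  have hre : ∀ n : ℕ, ∑ i ∈ Finset.Icc 2 (n + 1),
        (e (i : ℤ) + a (n + 1) i) * (e ((i : ℤ) - 1) + a (n + 1) (i - 1)) =
      ∑ i ∈ Finset.range n, (e (i + 2) + a (n + 1) (i + 2)) * (e (i + 1) + a (n + 1) (i + 1)) := by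
    intro n
    rw [← Finset.Ico_add_one_right_eq_Icc, Finset.sum_Ico_eq_sum_range]
    refine Finset.sum_congr (by congr 1) fun i _ => ?_
    rw [show 2 + i = i + 2 by ring, show i + 2 - 1 = i + 1 by omega]
    push_cast
    rw [show (i : ℤ) + 2 - 1 = i + 1 by ring]
  simp_rw [hre]
  have h1 : Tendsto (fun n : ℕ => (∑ i ∈ Finset.range n, e (i + 2) * e (i + 1)) / ((n + 1 : ℕ) : ℝ))
      atTop (𝓝 L) := by
    have := hm.mul (tendsto_natCast_div_add_atTop (1 : ℝ))
    rw [mul_one] at this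
    refine this.congr' ?_
    filter_upwards [eventually_ge_atTop 1] with n hn
    have hn' : (n : ℝ) ≠ 0 := by positivity
    push_cast
    field_simp
  have h2 : Tendsto (fun n : ℕ => 1 / ((n + 1 : ℕ) : ℝ) * (∑ i ∈ Finset.range n,
      (e (i + 2) + a (n + 1) (i + 2)) * (e (i + 1) + a (n + 1) (i + 1))) -
      (∑ i ∈ Finset.range n, e (i + 2) * e (i + 1)) / ((n + 1 : ℕ) : ℝ)) atTop (𝓝 0) := by
    rw [Metric.tendsto_atTop]
    intro δ hδ
    set η : ℝ := min 1 (δ / (2 * (3 * C + 1))) with hη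
    have hη0 : 0 < η := by positivity
    have hη1 : η ≤ 1 := min_le_left _ _
    have hη2 : η * (3 * C + 1) < δ := by
      have : η ≤ δ / (2 * (3 * C + 1)) := min_le_right _ _
      rw [le_div_iff₀ (by positivity)] at this
      nlinarith
    obtain ⟨N, hN⟩ := ha η hη0
    refine ⟨N, fun n hn => ?_⟩
    have hsmall : ∀ i ∈ Finset.range n, |a (n + 1) (i + 2)| ≤ η ∧ |a (n + 1) (i + 1)| ≤ η := by
      intro i hi
      have hi := Finset.mem_range.1 hi
      exact ⟨(hN (n + 1) (by omega) (i + 2) (Finset.mem_Icc.2 (by omega))).le,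
        (hN (n + 1) (by omega) (i + 1) (Finset.mem_Icc.2 (by omega))).le⟩
    have hpos : (0 : ℝ) < ((n + 1 : ℕ) : ℝ) := by positivity
    rw [dist_zero_right, one_div_mul_eq_div, ← sub_div, norm_div, Real.norm_natCast,
      div_lt_iff₀ hpos, ← Finset.sum_sub_distrib]
    have h3 : ‖∑ i ∈ Finset.range n, ((e (i + 2) + a (n + 1) (i + 2)) *
        (e (i + 1) + a (n + 1) (i + 1)) - e (i + 2) * e (i + 1))‖ ≤
        ∑ i ∈ Finset.range n, (η * |e (i + 2)| + η * |e (i + 1)| + η) := by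
      refine norm_sum_le_of_le _ fun i hi => ?_
      obtain ⟨s1, s2⟩ := hsmall i hi
      rw [show (e (i + 2) + a (n + 1) (i + 2)) * (e (i + 1) + a (n + 1) (i + 1)) -
        e (i + 2) * e (i + 1) = a (n + 1) (i + 1) * e (i + 2) + a (n + 1) (i + 2) * e (i + 1) +
          a (n + 1) (i + 2) * a (n + 1) (i + 1) by ring]
      refine (norm_add₃_le).trans ?_
      simp only [norm_mul, Real.norm_eq_abs]
      have t3 : |a (n + 1) (i + 2)| * |a (n + 1) (i + 1)| ≤ η * 1 :=
        mul_le_mul s1 (s2.trans hη1) (abs_nonneg _) hη0.le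
      have t1 := mul_le_mul_of_nonneg_right s2 (abs_nonneg (e (i + 2)))
      have t2 := mul_le_mul_of_nonneg_right s1 (abs_nonneg (e (i + 1)))
      linarith
    rw [Finset.sum_add_distrib, Finset.sum_add_distrib, ← Finset.mul_sum, ← Finset.mul_sum] at h3
    have h4 := hb n
    have h5 : ∑ i ∈ Finset.range n, |e (i + 2)| ≤ C * (n + 2) := by
      have := hb (n + 1)
      rw [Finset.sum_range_succ'] at this
      have hh : ∀ i : ℕ, ((i + 1 : ℕ) : ℤ) + 1 = i + 2 := by intro i; push_cast; ring
      simp only [hh] at this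
      push_cast at this
      have := abs_nonneg (e 1)
      linarith
    simp only [Finset.sum_const, Finset.card_range, nsmul_eq_mul] at h3
    have hn0 : (0 : ℝ) ≤ n := by positivity
    have h6 : (∑ i ∈ Finset.range n, |e (i + 2)|) + ∑ i ∈ Finset.range n, |e (i + 1)| + n
        ≤ (3 * C + 1) * (n + 1) := by
      have : 0 ≤ C * n := by positivity
      linarith
    have h7 := mul_le_mul_of_nonneg_left h6 hη0.le
    have h8 := mul_lt_mul_of_pos_right hη2 hpos
    push_cast at h8 ⊢
    linarith
  have := h2.add h1
  simpa using this

/-- If the triangular array `a` satisfies `sup_{1≤i≤n} |a_{n,i}| → 0`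
almost surely, then `(1/n) ∑_{i=2}^n (ε_i + a_{n,i})(ε_{i-1} + a_{n,i-1})` converges to
`φσ²/(1-φ²)` almost surely. -/
theorem stmt14
    {Ω : Type*} [MeasurableSpace Ω] (μ : Measure Ω) [IsProbabilityMeasure μ]
    (U : ℤ → Ω → ℝ) (hUmeas : ∀ j, Measurable (U j))
    (hUindep : iIndepFun U μ)
    (hUident : ∀ j, μ.map (U j) = μ.map (U 0))
    (σ : ℝ) (hσ : 0 < σ)
    (hUmean : ∫ ω, U 0 ω ∂μ = 0)
    (hUvar : ∫ ω, (U 0 ω) ^ 2 ∂μ = σ ^ 2)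
    (hU8 : Integrable (fun ω => (U 0 ω) ^ 8) μ)
    (φ : ℝ) (hφ0 : φ ≠ 0) (hφ1 : |φ| < 1)
    (ε : ℤ → Ω → ℝ) (hεmeas : ∀ i, Measurable (ε i))
    (hεsum : ∀ᵐ ω ∂μ, ∀ i : ℤ, HasSum (fun j : ℕ => φ ^ j * U (i - (j : ℤ)) ω) (ε i ω))
    (a : ℕ → ℕ → Ω → ℝ)
    (ha : ∀ᵐ ω ∂μ, ∀ e > (0 : ℝ), ∃ N : ℕ, ∀ n ≥ N, ∀ i ∈ Finset.Icc 1 n, |a n i ω| < e) :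
    ∀ᵐ ω ∂μ, Tendsto (fun n : ℕ =>
      (1 / (n : ℝ)) * ∑ i ∈ Finset.Icc 2 n,
        (ε (i : ℤ) ω + a n i ω) * (ε ((i : ℤ) - 1) ω + a n (i - 1) ω))
      atTop (𝓝 (φ * σ ^ 2 / (1 - φ ^ 2))) := by
  have hint2 : Integrable (fun ω => U 0 ω ^ 2) μ := by
    by_contra h
    rw [integral_undef h] at hUvar
    have : 0 < σ ^ 2 := by positivity
    linarith
  have hint : Integrable (U 0) μ := by
    refine ((integrable_const (1 : ℝ)).add hint2).mono' (hUmeas 0).aestronglyMeasurable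
      (Eventually.of_forall fun ω => ?_)
    simp only [Real.norm_eq_abs, Pi.add_apply]
    rw [← sq_abs]
    nlinarith [sq_nonneg (|U 0 ω| - 1)]
  have hlim : ∀ᵐ ω ∂μ, ∀ p q : ℤ, Tendsto (fun n : ℕ =>
      (∑ i ∈ Finset.range n, U (i + p) ω * U (i + q) ω) / (n : ℝ)) atTop
        (𝓝 (if p = q then σ ^ 2 else 0)) := by
    rw [ae_all_iff]; intro p
    rw [ae_all_iff]; intro q
    by_cases hpq : p = q
    · subst hpq
      simp only [if_true, ← sq]
      exact sq_slln μ U hUmeas hUindep hUident _ hUvar hint2 (fun i => (i : ℤ) + p)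
        (fun a b h => by simpa using h)
    · simp only [if_neg hpq]
      exact lag_slln μ U hUmeas hUindep hUident hUmean hint p q hpq
  have hback := sq_slln μ U hUmeas hUindep hUident _ hUvar hint2 (fun i => 1 - (i : ℤ))
    (fun a b h => by simpa using h)
  filter_upwards [hεsum, ha, hlim, hback] with ω h1 h2 h3 h4
  have h5 := h3 1 1
  rw [if_pos rfl] at h5
  obtain ⟨C, hC, hb⟩ := det_abs (fun i => U i ω) (fun i => ε i ω) φ _ hφ1 h1 h5
  exact det_final (fun i => ε i ω) _ C hC
    (det_main (fun i => U i ω) (fun i => ε i ω) φ _ hφ1 h1 h3 h4) hb (fun n i => a n i ω) h2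
end

section
/- (Theorem 4(i)) Let γ̃_n be random elements of Γ with γ̃_n → γ₀ almost surely, and let g̃_n be random positive continuous functions on [0,A] with sup_{t∈[0,A]} |log g̃_n(t) − log g₀(t)| → 0 almost surely (as guaranteed by Theorem 3). Define the residuals ε̃ᵢ = yᵢ − log(1+γ̃_n·xᵢ) − log g̃_n(zᵢ) for i=1,…,n, and the estimator φ̃_n = [Σ_{i=2}^n ε̃ᵢ·ε̃ᵢ₋₁] / [Σ_{i=2}^n ε̃ᵢ²]. Then φ̃_n converges to φ almost surely as n→∞. -/
open MeasureTheory ProbabilityTheory Filter Set Topology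

/-- The residual `ε̃ᵢ = yᵢ - log(1+γ̃ xᵢ) - log g̃(zᵢ)`, where
`yᵢ = log(1+γ₀xᵢ) + log g₀(zᵢ) + εᵢ` with `xᵢ = x(iΔ/n)`, `zᵢ = z(iΔ/n)`. -/
noncomputable def resid {Ω : Type*} (Δ γ₀ : ℝ) (x z g₀ : ℝ → ℝ) (ε : ℤ → Ω → ℝ)
    (γt : ℝ) (gt : ℝ → ℝ) (n i : ℕ) (ω : Ω) : ℝ :=
  (Real.log (1 + γ₀ * x ((i : ℝ) * Δ / n)) + Real.log (g₀ (z ((i : ℝ) * Δ / n))) +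
      ε (i : ℤ) ω)
    - Real.log (1 + γt * x ((i : ℝ) * Δ / n)) - Real.log (gt (z ((i : ℝ) * Δ / n)))

/-- The autoregression-coefficient estimator
`φ̃ₙ = (∑_{i=2}^n ε̃ᵢ ε̃ᵢ₋₁) / (∑_{i=2}^n ε̃ᵢ²)`. -/
noncomputable def phiTil {Ω : Type*} (Δ γ₀ : ℝ) (x z g₀ : ℝ → ℝ) (ε : ℤ → Ω → ℝ)
    (γt : ℝ) (gt : ℝ → ℝ) (n : ℕ) (ω : Ω) : ℝ :=
  (∑ i ∈ Finset.Icc 2 n,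
      resid Δ γ₀ x z g₀ ε γt gt n i ω * resid Δ γ₀ x z g₀ ε γt gt n (i - 1) ω) /
    (∑ i ∈ Finset.Icc 2 n, (resid Δ γ₀ x z g₀ ε γt gt n i ω) ^ 2)

/-- A contraction with vanishing forcing tends to zero. -/
lemma contr_tendsto (a : ℝ) (ha0 : 0 ≤ a) (ha : a < 1) (b c : ℕ → ℝ) (hb : ∀ n, 0 ≤ b n)
    (h : ∀ n, b (n+1) ≤ a * b n + c n) (hc : Tendsto c atTop (𝓝 0)) :
    Tendsto b atTop (𝓝 0) := by
  rw [Metric.tendsto_atTop]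
  intro η hη
  obtain ⟨N, hN⟩ := Metric.tendsto_atTop.1 hc (η/2 * (1-a)) (by nlinarith)
  have key : ∀ m, b (N+m) ≤ a^m * b N + η/2 := by
    intro m
    induction m with
    | zero => simp; linarith
    | succ m ih =>
      have h1 := h (N+m)
      have h2 := hN (N+m) (by omega)
      rw [Real.dist_eq, sub_zero] at h2
      have h3 := (abs_lt.1 h2).2
      have h4 : a * b (N+m) ≤ a * (a^m * b N + η/2) := mul_le_mul_of_nonneg_left ih ha0
      calc b (N+(m+1)) ≤ a * b (N+m) + c (N+m) := h1
        _ ≤ a * (a^m * b N + η/2) + η/2*(1-a) := by linarith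
        _ = a^(m+1) * b N + η/2 := by ring
  have hp : Tendsto (fun m : ℕ => a^m * b N) atTop (𝓝 0) := by
    simpa using (tendsto_pow_atTop_nhds_zero_of_lt_one ha0 ha).mul_const (b N)
  obtain ⟨M, hM⟩ := Metric.tendsto_atTop.1 hp (η/2) (by linarith)
  refine ⟨N+M, fun n hn => ?_⟩
  obtain ⟨m, rfl⟩ : ∃ m, n = N + m := ⟨n-N, by omega⟩
  have h2 := hM m (by omega)
  rw [Real.dist_eq, sub_zero] at h2 ⊢
  rw [abs_of_nonneg (hb _)]
  have := key m
  have := (abs_lt.1 h2).2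
  linarith

lemma shift_tendsto (F : ℕ → ℝ) (L : ℝ) (h : Tendsto (fun n : ℕ => F n / n) atTop (𝓝 L)) :
    Tendsto (fun n : ℕ => F (n+1) / n) atTop (𝓝 L) := by
  have h1 := h.comp (tendsto_add_atTop_nat 1)
  have h2 : Tendsto (fun n : ℕ => 1 + 1 / (n:ℝ)) atTop (𝓝 (1+0)) :=
    tendsto_const_nhds.add tendsto_one_div_atTop_nhds_zero_nat
  have h3 := h1.mul h2
  rw [add_zero, mul_one] at h3
  refine h3.congr' ?_
  filter_upwards [eventually_gt_atTop 0] with n hn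
  have : (n:ℝ) ≠ 0 := by positivity
  have : (n:ℝ) + 1 ≠ 0 := by positivity
  simp only [Function.comp]
  push_cast
  field_simp

lemma const_div (c : ℝ) : Tendsto (fun n : ℕ => c / n) atTop (𝓝 0) :=
  tendsto_const_div_atTop_nhds_zero_nat c

/-- last summand is `o(n)` -/
lemma last_tendsto (f : ℕ → ℝ) (L : ℝ)
    (h : Tendsto (fun n : ℕ => (∑ i ∈ Finset.range n, f i) / n) atTop (𝓝 L)) :
    Tendsto (fun n : ℕ => f n / n) atTop (𝓝 0) := by
  have h1 := (shift_tendsto _ L h).sub h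
  rw [sub_self] at h1
  refine h1.congr fun n => ?_
  rw [Finset.sum_range_succ]
  ring

lemma path_lim (φ s : ℝ) (hφ : |φ| < 1) (u e : ℤ → ℝ)
    (hrec : ∀ i, e i = φ * e (i-1) + u i)
    (hV : Tendsto (fun n : ℕ => (∑ i ∈ Finset.range n, (u i)^2) / n) atTop (𝓝 s))
    (hC : ∀ k : ℕ, 1 ≤ k →
      Tendsto (fun n : ℕ => (∑ i ∈ Finset.range n, u i * u (i-k)) / n) atTop (𝓝 0)) :
    Tendsto (fun n : ℕ => (∑ i ∈ Finset.range n, (e i)^2) / n) atTop (𝓝 (s / (1-φ^2))) ∧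
    Tendsto (fun n : ℕ => (∑ i ∈ Finset.range n, (e ((i:ℤ)-1))^2) / n) atTop
      (𝓝 (s / (1-φ^2))) ∧
    Tendsto (fun n : ℕ => (∑ i ∈ Finset.range n, e i * e (i-1)) / n) atTop
      (𝓝 (φ * (s / (1-φ^2)))) := by
  have h1φ : 0 < 1 - |φ| := by linarith
  have hsq : φ^2 < 1 := by rw [← sq_abs]; nlinarith [abs_nonneg φ]
  -- pointwise energy inequality
  have hpt : ∀ i, (e i)^2 ≤ |φ| * (e (i-1))^2 + (u i)^2 / (1-|φ|) := by
    intro i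
    have : |φ| * (e (i-1))^2 + (u i)^2 / (1-|φ|) - (e i)^2
        = (|φ| - φ^2) * (e (i-1))^2 - 2 * φ * e (i-1) * u i
          + |φ| / (1 - |φ|) * (u i)^2 := by
      rw [hrec i]; field_simp; ring
    have h2 : (|φ| - φ^2) * (e (i-1))^2 - 2 * φ * e (i-1) * u i
          + |φ| / (1 - |φ|) * (u i)^2 ≥ 0 := by
      have h3 : (|φ| - φ^2) = |φ| * (1 - |φ|) := by rw [← sq_abs]; ring
      have h4 : φ * e (i-1) * u i ≤ |φ| * (|e (i-1)| * |u i|) := by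
        rw [← abs_mul, ← abs_mul, ← mul_assoc]; exact le_abs_self _
      have h5 : (|φ| * (1 - |φ|)) * (e (i-1))^2 - 2 * (|φ| * (|e (i-1)| * |u i|))
          + |φ| / (1 - |φ|) * (u i)^2
          = |φ| / (1-|φ|) * ((1-|φ|) * |e (i-1)| - |u i|)^2 := by
        rw [← sq_abs (e (i-1)), ← sq_abs (u i)]; field_simp; ring
      have h6 : 0 ≤ |φ| / (1-|φ|) * ((1-|φ|) * |e (i-1)| - |u i|)^2 := by positivity
      rw [h3]; linarith
    linarith
  -- e_n^2 = o(n)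
  have hun : Tendsto (fun n : ℕ => (u n)^2 / n) atTop (𝓝 0) := last_tendsto (fun n => (u n)^2) s hV
  have hen : Tendsto (fun n : ℕ => (e n)^2 / n) atTop (𝓝 0) := by
    rw [← tendsto_add_atTop_iff_nat 1]
    have hc := (hun.comp (tendsto_add_atTop_nat 2)).const_mul (1/(1-|φ|))
    rw [mul_zero] at hc
    refine contr_tendsto |φ| (abs_nonneg _) hφ _ _ (fun n => by positivity) (fun n => ?_) hc
    have h := hpt ((n+1+1 : ℕ) : ℤ)
    have e1 : (((n+1+1 : ℕ) : ℤ) - 1) = ((n+1 : ℕ) : ℤ) := by push_cast; ring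
    rw [e1] at h
    have hle : (e ((n+1:ℕ):ℤ))^2 / ((n+1+1:ℕ):ℝ) ≤ (e ((n+1:ℕ):ℤ))^2 / ((n+1:ℕ):ℝ) := by
      apply div_le_div_of_nonneg_left (by positivity) (by positivity)
      push_cast; linarith
    calc (e ((n+1+1:ℕ):ℤ))^2 / ((n+1+1:ℕ):ℝ)
        ≤ (|φ| * (e ((n+1:ℕ):ℤ))^2 + (u ((n+1+1:ℕ):ℤ))^2 / (1-|φ|)) / ((n+1+1:ℕ):ℝ) := by
          gcongr
      _ = |φ| * ((e ((n+1:ℕ):ℤ))^2 / ((n+1+1:ℕ):ℝ))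
          + 1/(1-|φ|) * ((u ((n+1+1:ℕ):ℤ))^2 / ((n+1+1:ℕ):ℝ)) := by
          ring
      _ ≤ _ := by
          have := mul_le_mul_of_nonneg_left hle (abs_nonneg φ)
          simp only [Function.comp]
          show _ ≤ |φ| * ((e ((n+1:ℕ):ℤ))^2 / ((n+1:ℕ):ℝ)) + 1/(1-|φ|) * ((u ((n+1+1:ℕ):ℤ))^2 / ((n+1+1:ℕ):ℝ))
          linarith
  -- telescoping
  have htel : ∀ n : ℕ, ∑ i ∈ Finset.range n, (e ((i:ℤ)-1))^2
      = ∑ i ∈ Finset.range n, (e i)^2 + (e (-1))^2 - (e ((n:ℤ)-1))^2 := by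
    intro n
    induction n with
    | zero => simp
    | succ n ih =>
      rw [Finset.sum_range_succ, Finset.sum_range_succ, ih]
      push_cast
      rw [show (n:ℤ)+1-1 = n by ring]; ring
  have hen1 : Tendsto (fun n : ℕ => (e ((n:ℤ)-1))^2 / n) atTop (𝓝 0) := by
    rw [← tendsto_add_atTop_iff_nat 1]
    refine squeeze_zero' (Eventually.of_forall fun n => by positivity) ?_ hen
    filter_upwards [eventually_gt_atTop 0] with n hn
    push_cast
    rw [show (n:ℤ)+1-1 = n by ring]
    apply div_le_div_of_nonneg_left (by positivity) (by positivity)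
    linarith
  -- uniform bound
  have hbd : ∃ B : ℝ, 0 ≤ B ∧ ∀ᶠ n : ℕ in atTop, (∑ i ∈ Finset.range n, (e i)^2) / n ≤ B := by
    refine ⟨(|φ| * (e (-1))^2 + (|s|+1) / (1-|φ|)) / (1-|φ|), by positivity, ?_⟩
    filter_upwards [eventually_gt_atTop 0, hV.eventually (gt_mem_nhds (show s < |s|+1 by
      linarith [le_abs_self s]))] with n hn hVn
    have hn' : (1:ℝ) ≤ n := by exact_mod_cast hn
    have hs : ∑ i ∈ Finset.range n, (e i)^2 ≤ |φ| * ∑ i ∈ Finset.range n, (e ((i:ℤ)-1))^2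
        + (∑ i ∈ Finset.range n, (u i)^2) / (1-|φ|) := by
      rw [Finset.mul_sum, Finset.sum_div, ← Finset.sum_add_distrib]
      exact Finset.sum_le_sum fun i _ => hpt i
    rw [htel] at hs
    rw [div_lt_iff₀ (by positivity)] at hVn
    rw [div_le_iff₀ (by positivity), div_mul_eq_mul_div, le_div_iff₀ h1φ]
    have h1 : (∑ i ∈ Finset.range n, (u i)^2) / (1-|φ|) ≤ ((|s|+1) * n) / (1-|φ|) := by
      gcongr
    have h2 : 0 ≤ |φ| * (e ((n:ℤ)-1))^2 := by positivity
    have h3 : |φ| * (e (-1))^2 * 1 ≤ |φ| * (e (-1))^2 * n := by gcongr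
    have h4 : (|s|+1) / (1-|φ|) * n = ((|s|+1) * n) / (1-|φ|) := by ring
    nlinarith
  obtain ⟨B, hB0, hB⟩ := hbd
  -- cross term
  have hcrossK : ∀ K : ℕ, Tendsto (fun n : ℕ => (∑ i ∈ Finset.range n, u i * e (i-1)) / n
      - φ^K * ((∑ i ∈ Finset.range n, u i * e (i-1-K)) / n)) atTop (𝓝 0) := by
    intro K
    induction K with
    | zero => simp
    | succ K ih =>
      have h := ih.add ((hC (K+1) (by omega)).const_mul (φ^K))
      rw [mul_zero, add_zero] at h
      refine h.congr fun n => ?_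
      have : ∑ i ∈ Finset.range n, u i * e ((i:ℤ)-1-K) =
          φ * ∑ i ∈ Finset.range n, u i * e ((i:ℤ)-1-(K+1:ℕ))
          + ∑ i ∈ Finset.range n, u i * u ((i:ℤ)-(K+1:ℕ)) := by
        rw [Finset.mul_sum, ← Finset.sum_add_distrib]
        refine Finset.sum_congr rfl fun i _ => ?_
        rw [hrec ((i:ℤ)-1-K)]
        push_cast
        rw [show (i:ℤ)-1-K-1 = i-1-(K+1) by ring, show (i:ℤ)-1-K = i-(K+1) by ring]
        ring
      rw [this]; ring
  have hshift : ∀ K : ℕ, ∃ D : ℝ, ∀ n : ℕ, ∑ i ∈ Finset.range n, (e ((i:ℤ)-K))^2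
      ≤ ∑ i ∈ Finset.range n, (e i)^2 + D := by
    intro K
    induction K with
    | zero => exact ⟨0, fun n => by simp⟩
    | succ K ih =>
      obtain ⟨D, hD⟩ := ih
      refine ⟨D + (e (0 - (K+1:ℕ)))^2, fun n => ?_⟩
      have h1 : ∑ i ∈ Finset.range (n+1), (e ((i:ℤ)-(K+1:ℕ)))^2
          = ∑ i ∈ Finset.range n, (e ((i:ℤ)-K))^2 + (e (0 - (K+1:ℕ)))^2 := by
        rw [Finset.sum_range_succ']
        congr 1
        refine Finset.sum_congr rfl fun i _ => ?_
        push_cast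
        rw [show (i:ℤ)+1-(K+1) = i-K by ring]
      rw [Finset.sum_range_succ] at h1
      have := hD n
      have : 0 ≤ (e ((n:ℤ)-(K+1:ℕ)))^2 := by positivity
      linarith
  have hcross : Tendsto (fun n : ℕ => (∑ i ∈ Finset.range n, u i * e (i-1)) / n) atTop (𝓝 0) := by
    rw [Metric.tendsto_nhds]
    intro η hη
    have hpow : Tendsto (fun K : ℕ => |φ|^K * (|s|+1+(B+1))) atTop (𝓝 0) := by
      simpa using (tendsto_pow_atTop_nhds_zero_of_lt_one (abs_nonneg φ) hφ).mul_const
        (|s|+1+(B+1))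
    obtain ⟨K, hK⟩ := (hpow.eventually (gt_mem_nhds (show (0:ℝ) < η/2 by linarith))).exists
    obtain ⟨D, hD⟩ := hshift (K+1)
    have hk := (Metric.tendsto_nhds.1 (hcrossK K)) (η/2) (by linarith)
    filter_upwards [eventually_gt_atTop 0, hV.eventually (gt_mem_nhds (show s < |s|+1 by
      linarith [le_abs_self s])), hB, (const_div D).eventually (gt_mem_nhds one_pos), hk]
      with n hn hVn hBn hDn hkn
    have hn' : (0:ℝ) < n := by exact_mod_cast hn
    rw [Real.dist_eq, sub_zero] at hkn ⊢
    have hle : |∑ i ∈ Finset.range n, u i * e ((i:ℤ)-1-K)|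
        ≤ ∑ i ∈ Finset.range n, (u i)^2 + (∑ i ∈ Finset.range n, (e i)^2 + D) := by
      refine le_trans (Finset.abs_sum_le_sum_abs _ _) ?_
      refine le_trans ?_ (add_le_add le_rfl (hD n))
      rw [← Finset.sum_add_distrib]
      refine Finset.sum_le_sum fun i _ => ?_
      rw [show (i:ℤ)-1-K = (i:ℤ)-(K+1:ℕ) by push_cast; ring, abs_mul,
        ← sq_abs (u i), ← sq_abs (e ((i:ℤ)-(K+1:ℕ)))]
      nlinarith [sq_nonneg (|u i| - |e ((i:ℤ)-(K+1:ℕ))|), abs_nonneg (u i),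
        abs_nonneg (e ((i:ℤ)-(K+1:ℕ)))]
    have hle2 : |(∑ i ∈ Finset.range n, u i * e ((i:ℤ)-1-K)) / n| ≤ |s|+1+(B+1) := by
      rw [abs_div, abs_of_pos hn']
      refine le_trans (div_le_div_of_nonneg_right hle hn'.le) ?_
      rw [add_div, add_div]
      linarith
    have hle3 : |φ^K * ((∑ i ∈ Finset.range n, u i * e ((i:ℤ)-1-K)) / n)| < η/2 := by
      rw [abs_mul, abs_pow]
      exact lt_of_le_of_lt (mul_le_mul_of_nonneg_left hle2 (by positivity)) hK
    rw [abs_lt] at hkn hle3 ⊢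
    constructor <;> linarith [hkn.1, hkn.2, hle3.1, hle3.2]
  have hS : Tendsto (fun n : ℕ => (∑ i ∈ Finset.range n, (e i)^2) / n) atTop
      (𝓝 (s / (1-φ^2))) := by
    have h := (((hV.add (hcross.const_mul (2*φ))).add
      (const_div (φ^2 * (e (-1))^2))).sub (hen1.const_mul (φ^2))).div_const (1-φ^2)
    simp only [mul_zero, add_zero, sub_zero] at h
    refine h.congr fun n => ?_
    have h1 : ∑ i ∈ Finset.range n, (e i)^2 = φ^2 * ∑ i ∈ Finset.range n, (e ((i:ℤ)-1))^2
        + 2*φ * ∑ i ∈ Finset.range n, u i * e ((i:ℤ)-1) + ∑ i ∈ Finset.range n, (u i)^2 := by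
      rw [Finset.mul_sum, Finset.mul_sum, ← Finset.sum_add_distrib, ← Finset.sum_add_distrib]
      refine Finset.sum_congr rfl fun i _ => ?_
      rw [hrec i]; ring
    rw [htel] at h1
    have h2 : (1-φ^2) ≠ 0 := by linarith
    rw [div_eq_iff h2]
    have h3 : (∑ i ∈ Finset.range n, (e i)^2) * (1-φ^2) = φ^2 * (e (-1))^2
        - φ^2 * (e ((n:ℤ)-1))^2 + 2*φ * ∑ i ∈ Finset.range n, u i * e ((i:ℤ)-1)
        + ∑ i ∈ Finset.range n, (u i)^2 := by linarith
    rw [div_mul_eq_mul_div, h3]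
    ring
  have hS' : Tendsto (fun n : ℕ => (∑ i ∈ Finset.range n, (e ((i:ℤ)-1))^2) / n) atTop
      (𝓝 (s / (1-φ^2))) := by
    have h := (hS.add (const_div ((e (-1))^2))).sub hen1
    simp only [add_zero, sub_zero] at h
    refine h.congr fun n => ?_
    rw [htel]; ring
  refine ⟨hS, hS', ?_⟩
  have h := (hS'.const_mul φ).add hcross
  rw [add_zero] at h
  refine h.congr fun n => ?_
  have h1 : ∑ i ∈ Finset.range n, e i * e ((i:ℤ)-1) = φ * ∑ i ∈ Finset.range n, (e ((i:ℤ)-1))^2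
        + ∑ i ∈ Finset.range n, u i * e ((i:ℤ)-1) := by
    rw [Finset.mul_sum, ← Finset.sum_add_distrib]
    refine Finset.sum_congr rfl fun i _ => ?_
    rw [hrec i]; ring
  rw [h1]; ring

lemma sum_pert (F : ℕ → ℕ → ℝ) (G w : ℕ → ℝ) (M W : ℝ) (hw : ∀ i, 0 ≤ w i)
    (hF : ∀ η : ℝ, 0 < η → η ≤ 1 → ∀ᶠ n : ℕ in atTop, ∀ i ∈ Finset.Icc 2 n,
      |F n i - G i| ≤ η * w i)
    (hG : Tendsto (fun n : ℕ => (∑ i ∈ Finset.range n, G i) / n) atTop (𝓝 M))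
    (hW : Tendsto (fun n : ℕ => (∑ i ∈ Finset.range n, w i) / n) atTop (𝓝 W)) :
    Tendsto (fun n : ℕ => (∑ i ∈ Finset.Icc 2 n, F n i) / n) atTop (𝓝 M) := by
  have hG' : Tendsto (fun n : ℕ => (∑ i ∈ Finset.Icc 2 n, G i) / n) atTop (𝓝 M) := by
    have h := (shift_tendsto _ M hG).sub (const_div (∑ i ∈ Finset.range 2, G i))
    rw [sub_zero] at h
    refine h.congr' ?_
    filter_upwards [eventually_gt_atTop 0] with n hn
    rw [← sub_div, ← Finset.sum_Ico_eq_sub _ (by omega : 2 ≤ n+1)]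
    rfl
  have hd : Tendsto (fun n : ℕ => (∑ i ∈ Finset.Icc 2 n, F n i) / n
      - (∑ i ∈ Finset.Icc 2 n, G i) / n) atTop (𝓝 0) := by
    rw [Metric.tendsto_nhds]
    intro ρ hρ
    have hW0 : 0 < |W| + 1 := by positivity
    set η := min 1 (ρ / 2 / (|W|+1)) with hη
    have hηpos : 0 < η := by positivity
    filter_upwards [eventually_gt_atTop 0, hF η hηpos (min_le_left _ _),
      (shift_tendsto _ W hW).eventually (gt_mem_nhds (show W < |W|+1 by
        linarith [le_abs_self W]))] with n hn hFn hWn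
    have hn' : (0:ℝ) < n := by exact_mod_cast hn
    rw [Real.dist_eq, sub_zero, ← sub_div, ← Finset.sum_sub_distrib, abs_div, abs_of_pos hn']
    have h1 : |∑ i ∈ Finset.Icc 2 n, (F n i - G i)| ≤ η * ∑ i ∈ Finset.range (n+1), w i := by
      refine le_trans (Finset.abs_sum_le_sum_abs _ _) ?_
      refine le_trans (Finset.sum_le_sum hFn) ?_
      rw [← Finset.mul_sum]
      refine mul_le_mul_of_nonneg_left ?_ hηpos.le
      refine Finset.sum_le_sum_of_subset_of_nonneg ?_ fun i _ _ => hw i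
      intro i hi
      simp only [Finset.mem_Icc, Finset.mem_range] at hi ⊢
      omega
    calc |∑ i ∈ Finset.Icc 2 n, (F n i - G i)| / n
        ≤ (η * ∑ i ∈ Finset.range (n+1), w i) / n := by gcongr
      _ = η * ((∑ i ∈ Finset.range (n+1), w i) / n) := by ring
      _ ≤ η * (|W|+1) := mul_le_mul_of_nonneg_left hWn.le hηpos.le
      _ ≤ (ρ / 2 / (|W|+1)) * (|W|+1) := by
          gcongr; exact min_le_right _ _
      _ = ρ/2 := by field_simp
      _ < ρ := by linarith
  have := hd.add hG'
  rw [zero_add] at this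
  exact this.congr fun n => by ring

lemma prod_pert (p q a b η : ℝ) (h0 : 0 < η) (h1 : η ≤ 1) (hp : |p - a| ≤ η)
    (hq : |q - b| ≤ η) : |p * q - a * b| ≤ η * (2 + a^2 + b^2) := by
  have e1 : p*q - a*b = (p-a)*(q-b) + (p-a)*b + a*(q-b) := by ring
  rw [e1]
  have t1 : |(p-a)*(q-b)| ≤ η * 1 := by
    rw [abs_mul]; exact mul_le_mul hp (hq.trans h1) (abs_nonneg _) h0.le
  have t2 : |(p-a)*b| ≤ η * |b| := by
    rw [abs_mul]; exact mul_le_mul_of_nonneg_right hp (abs_nonneg _)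
  have t3 : |a*(q-b)| ≤ η * |a| := by
    rw [abs_mul, mul_comm]; exact mul_le_mul_of_nonneg_right hq (abs_nonneg _)
  have t4 := abs_add_le ((p-a)*(q-b) + (p-a)*b) (a*(q-b))
  have t5 := abs_add_le ((p-a)*(q-b)) ((p-a)*b)
  have t6 : 1 + |b| + |a| ≤ 2 + a^2 + b^2 := by
    rw [← sq_abs a, ← sq_abs b]
    nlinarith [sq_nonneg (|a| - 1/2), sq_nonneg (|b| - 1/2)]
  have t7 := mul_le_mul_of_nonneg_left t6 h0.le
  linarith

lemma ratio_lim (φ s : ℝ) (hs : 0 < s) (hφ : |φ| < 1) (u e : ℤ → ℝ) (r : ℕ → ℕ → ℝ)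
    (hrec : ∀ i, e i = φ * e (i-1) + u i)
    (hV : Tendsto (fun n : ℕ => (∑ i ∈ Finset.range n, (u i)^2) / n) atTop (𝓝 s))
    (hC : ∀ k : ℕ, 1 ≤ k →
      Tendsto (fun n : ℕ => (∑ i ∈ Finset.range n, u i * u (i-k)) / n) atTop (𝓝 0))
    (hr : ∀ η : ℝ, 0 < η → ∀ᶠ n : ℕ in atTop, ∀ i : ℕ, 1 ≤ i → i ≤ n → |r n i - e i| ≤ η) :
    Tendsto (fun n : ℕ => (∑ i ∈ Finset.Icc 2 n, r n i * r n (i-1)) /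
      (∑ i ∈ Finset.Icc 2 n, (r n i)^2)) atTop (𝓝 φ) := by
  obtain ⟨h1, h2, h3⟩ := path_lim φ s hφ u e hrec hV hC
  have hsq : φ^2 < 1 := by rw [← sq_abs]; nlinarith [abs_nonneg φ]
  have hL : 0 < s / (1-φ^2) := div_pos hs (by linarith)
  set L := s / (1-φ^2)
  have hone : Tendsto (fun n : ℕ => (∑ i ∈ Finset.range n, (2:ℝ)) / n) atTop (𝓝 2) := by
    refine tendsto_const_nhds.congr' ?_
    filter_upwards [eventually_gt_atTop 0] with n hn
    have hn' : (n:ℝ) ≠ 0 := by positivity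
    simp only [Finset.sum_const, Finset.card_range, nsmul_eq_mul]
    field_simp
  have hN : Tendsto (fun n : ℕ => (∑ i ∈ Finset.Icc 2 n, r n i * r n (i-1)) / n) atTop
      (𝓝 (φ * L)) := by
    refine sum_pert (fun n i => r n i * r n (i-1)) (fun i => e i * e ((i:ℤ)-1))
      (fun i => 2 + (e i)^2 + (e ((i:ℤ)-1))^2) _ (2+L+L) (fun i => by positivity) ?_ h3 ?_
    · intro η h0 h1
      filter_upwards [hr η h0] with n hn i hi
      rw [Finset.mem_Icc] at hi
      refine prod_pert _ _ _ _ η h0 h1 (hn i (by omega) (by omega)) ?_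
      have := hn (i-1) (by omega) (by omega)
      rwa [Nat.cast_sub (by omega), Nat.cast_one] at this
    · refine ((hone.add h1).add h2).congr fun n => ?_
      rw [Finset.sum_add_distrib, Finset.sum_add_distrib]; ring
  have hD : Tendsto (fun n : ℕ => (∑ i ∈ Finset.Icc 2 n, (r n i)^2) / n) atTop (𝓝 L) := by
    refine sum_pert (fun n i => (r n i)^2) (fun i => (e i)^2)
      (fun i => 2 + (e i)^2 + (e i)^2) _ (2+L+L) (fun i => by positivity) ?_ h1 ?_
    · intro η h0 h1
      filter_upwards [hr η h0] with n hn i hi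
      rw [Finset.mem_Icc] at hi
      have := hn i (by omega) (by omega)
      simp only [sq]
      have h := prod_pert _ _ _ _ η h0 h1 this this
      simpa only [sq] using h
    · refine ((hone.add h1).add h1).congr fun n => ?_
      rw [Finset.sum_add_distrib, Finset.sum_add_distrib]; ring
  have h := hN.div hD hL.ne'
  rw [mul_div_assoc, div_self hL.ne', mul_one] at h
  refine h.congr' ?_
  filter_upwards [eventually_gt_atTop 0] with n hn
  have hn' : (n:ℝ) ≠ 0 := by positivity
  simp only [Pi.div_apply]
  rw [div_div_div_cancel_right₀ hn']

/-- Splitting averages along residue classes. -/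
lemma class_avg (p : ℕ) (hp : 0 < p) (f : ℕ → ℝ)
    (h : ∀ r < p, Tendsto (fun m : ℕ => (∑ l ∈ Finset.range m, f (r + p*l)) / m) atTop (𝓝 0)) :
    Tendsto (fun n : ℕ => (∑ i ∈ Finset.range n, f i) / n) atTop (𝓝 0) := by
  have hsplit : ∀ n : ℕ, ∑ i ∈ Finset.range n, f i = ∑ r ∈ Finset.range p,
      ∑ l ∈ Finset.range ((n + p - 1 - r)/p), f (r + p*l) := by
    intro n
    rw [Finset.sum_sigma']
    refine Finset.sum_bij' (fun i _ => (⟨i % p, i / p⟩ : Sigma fun _ : ℕ => ℕ))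
      (fun a _ => a.1 + p * a.2) ?_ ?_ ?_ ?_ ?_
    · intro i hi
      simp only [Finset.mem_sigma, Finset.mem_range] at hi ⊢
      have h1 := Nat.mod_lt i hp
      refine ⟨h1, ?_⟩
      have h2 := Nat.mod_add_div i p
      rw [Nat.lt_iff_add_one_le, Nat.le_div_iff_mul_le hp]
      have h3 : (i/p+1)*p = p * (i/p) + p := by ring
      omega
    · rintro ⟨r, l⟩ ha
      simp only [Finset.mem_sigma, Finset.mem_range] at ha ⊢
      obtain ⟨h1, h2⟩ := ha
      rw [Nat.lt_iff_add_one_le, Nat.le_div_iff_mul_le hp] at h2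
      have h3 : (l+1)*p = p * l + p := by ring
      omega
    · intro i hi
      exact Nat.mod_add_div i p
    · rintro ⟨r, l⟩ ha
      simp only [Finset.mem_sigma, Finset.mem_range] at ha ⊢
      have h1 : (r + p*l) % p = r := by rw [Nat.add_mul_mod_self_left, Nat.mod_eq_of_lt ha.1]
      have h2 : (r + p*l) / p = l := by
        rw [Nat.add_mul_div_left _ _ hp, Nat.div_eq_of_lt ha.1, zero_add]
      rw [h1, h2]
    · intro i hi
      rw [Nat.mod_add_div]
  have hcl : ∀ r ∈ Finset.range p, Tendsto (fun n : ℕ =>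
      (∑ l ∈ Finset.range ((n + p - 1 - r)/p), f (r + p*l)) / n) atTop (𝓝 0) := by
    intro r hr
    rw [Finset.mem_range] at hr
    have hm : Tendsto (fun n : ℕ => (n + p - 1 - r)/p) atTop atTop := by
      refine tendsto_atTop.2 fun b => ?_
      filter_upwards [eventually_ge_atTop (b*p)] with n hn
      rw [Nat.le_div_iff_mul_le hp]; omega
    have hc := (h r hr).comp hm
    refine squeeze_zero_norm' ?_ (by simpa using hc.norm)
    filter_upwards [eventually_gt_atTop 0, hm.eventually (eventually_gt_atTop 0)] with n hn hmn
    simp only [Real.norm_eq_abs, abs_div, Nat.abs_cast]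
    refine div_le_div_of_nonneg_left (abs_nonneg _) (by exact_mod_cast hmn) ?_
    norm_cast
    rw [Nat.div_le_iff_le_mul_add_pred hp]
    have : n ≤ p * n := Nat.le_mul_of_pos_left n hp
    omega
  have := tendsto_finsetSum _ hcl
  simp only [Finset.sum_const_zero] at this
  refine this.congr fun n => ?_
  rw [hsplit, Finset.sum_div]

section Prob

variable {Ω : Type*} [MeasurableSpace Ω] {μ : Measure Ω} [IsProbabilityMeasure μ]

lemma slln_sq (U : ℤ → Ω → ℝ) (hUmeas : ∀ j, Measurable (U j)) (hUindep : iIndepFun U μ)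
    (hUident : ∀ j, μ.map (U j) = μ.map (U 0)) (h2 : Integrable (fun ω => (U 0 ω)^2) μ) :
    ∀ᵐ ω ∂μ, Tendsto (fun n : ℕ => (∑ i ∈ Finset.range n, (U (i:ℤ) ω)^2) / n) atTop
      (𝓝 (∫ ω, (U 0 ω)^2 ∂μ)) := by
  have hid : ∀ j, IdentDistrib (U j) (U 0) μ μ := fun j =>
    ⟨(hUmeas j).aemeasurable, (hUmeas 0).aemeasurable, hUident j⟩
  have hsq : Measurable (fun t : ℝ => t^2) := by fun_prop
  have h := strong_law_ae_real (μ := μ) (fun (i:ℕ) ω => (U (i:ℤ) ω)^2) (by simpa using h2)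
    (fun i j hij => (hUindep.indepFun (i := (i:ℤ)) (j := (j:ℤ))
      (by exact_mod_cast hij)).comp hsq hsq)
    (fun i => by simpa [Function.comp_def] using (hid (i:ℤ)).comp hsq)
  simpa using h

lemma slln_cross (U : ℤ → Ω → ℝ) (hUmeas : ∀ j, Measurable (U j)) (hUindep : iIndepFun U μ)
    (hUident : ∀ j, μ.map (U j) = μ.map (U 0)) (h1 : Integrable (U 0) μ)
    (hmean : ∫ ω, U 0 ω ∂μ = 0) (k : ℕ) (hk : 1 ≤ k) :
    ∀ᵐ ω ∂μ, Tendsto (fun n : ℕ =>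
      (∑ i ∈ Finset.range n, U (i:ℤ) ω * U ((i:ℤ)-k) ω) / n) atTop (𝓝 0) := by
  have hid : ∀ i j, IdentDistrib (U i) (U j) μ μ := fun i j =>
    ⟨(hUmeas i).aemeasurable, (hUmeas j).aemeasurable, (hUident i).trans (hUident j).symm⟩
  have hint : ∀ j, Integrable (U j) μ := fun j => (hid 0 j).integrable_snd h1
  have hmul : Measurable (fun t : ℝ × ℝ => t.1 * t.2) := by fun_prop
  have hpair : ∀ i : ℤ, IndepFun (U i) (U (i-k)) μ := fun i => hUindep.indepFun (by omega)
  have hcl : ∀ r : ℕ, ∀ᵐ ω ∂μ, Tendsto (fun m : ℕ =>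
      (∑ l ∈ Finset.range m, U ((r + (k+1)*l : ℕ):ℤ) ω * U (((r + (k+1)*l : ℕ):ℤ)-k) ω) / m)
        atTop (𝓝 0) := by
    intro r
    have h := strong_law_ae_real (μ := μ)
      (fun (l:ℕ) ω => U ((r + (k+1)*l : ℕ):ℤ) ω * U (((r + (k+1)*l : ℕ):ℤ)-k) ω)
      ((hpair _).integrable_mul (hint _) (hint _))
      (fun i j hij => by
        have key : ∀ a b : ℤ, a ≠ b → (k+1)*a - (k+1)*b ≠ 0 ∧ (k+1)*a - (k+1)*b ≠ k ∧
            (k+1)*a - (k+1)*b ≠ -k := by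
          intro a b hab
          have hk' : (1:ℤ) ≤ k := by exact_mod_cast hk
          rcases lt_or_gt_of_ne hab with h | h
          · have : a - b ≤ -1 := by omega
            refine ⟨?_, ?_, ?_⟩ <;> intro hh <;> nlinarith
          · have : 1 ≤ a - b := by omega
            refine ⟨?_, ?_, ?_⟩ <;> intro hh <;> nlinarith
        have h3 := key i j (by exact_mod_cast hij)
        exact (hUindep.indepFun_prodMk_prodMk hUmeas
          ((r + (k+1)*i : ℕ):ℤ) (((r + (k+1)*i : ℕ):ℤ)-k)
          ((r + (k+1)*j : ℕ):ℤ) (((r + (k+1)*j : ℕ):ℤ)-k)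
          (by push_cast; omega) (by push_cast; omega) (by push_cast; omega)
          (by push_cast; omega)).comp hmul hmul)
      (fun i => ((hid _ _).prodMk (hid _ _) (hpair _) (hpair _)).comp hmul)
    have hE : ∫ ω, U ((r + (k+1)*0 : ℕ):ℤ) ω * U (((r + (k+1)*0 : ℕ):ℤ)-k) ω ∂μ = 0 := by
      rw [(hpair _).integral_fun_mul_eq_mul_integral (hint _).aestronglyMeasurable
        (hint _).aestronglyMeasurable, (hid _ 0).integral_eq, hmean, zero_mul]
    rw [hE] at h
    exact h
  filter_upwards [ae_all_iff.2 hcl] with ω hω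
  exact class_avg (k+1) (by omega) (fun i => U (i:ℤ) ω * U ((i:ℤ)-k) ω) fun r _ => hω r

end Prob

lemma rec_of_hasSum (φ : ℝ) (u e : ℤ → ℝ)
    (h : ∀ i : ℤ, HasSum (fun j : ℕ => φ ^ j * u (i - (j : ℤ))) (e i)) (i : ℤ) :
    e i = φ * e (i-1) + u i := by
  have h1 := (hasSum_nat_add_iff' 1).2 (h i)
  have h2 := (h (i-1)).mul_left φ
  have hfun : (fun n : ℕ => φ ^ (n + 1) * u (i - ((n + 1 : ℕ) : ℤ)))
      = fun j : ℕ => φ * (φ ^ j * u (i - 1 - (j : ℤ))) := by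
    funext j
    push_cast
    rw [show i - ((j:ℤ)+1) = i - 1 - j by ring]; ring
  rw [hfun] at h1
  have h3 := h1.unique h2
  simp at h3
  linarith

lemma log_unif (Δ xm xM : ℝ) (hxm : 0 < xm) (hxM : 0 < xM) (x : ℝ → ℝ)
    (hxrange : ∀ w ∈ Icc (0 : ℝ) Δ, x w ∈ Ioo (-xm) xM)
    (γ₀ : ℝ) (hγ₀ : γ₀ ∈ Ioo (-(1 / xM)) (1 / xm)) (γ : ℕ → ℝ)
    (hγ : Tendsto γ atTop (𝓝 γ₀)) (η : ℝ) (hη : 0 < η) :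
    ∀ᶠ n : ℕ in atTop, ∀ w ∈ Icc (0:ℝ) Δ,
      |Real.log (1 + γ₀ * x w) - Real.log (1 + γ n * x w)| < η := by
  have hc : ∃ c : ℝ, 0 < c ∧ ∀ w ∈ Icc (0:ℝ) Δ, c ≤ 1 + γ₀ * x w := by
    have a1 : 0 < 1 - γ₀ * xm := by
      have := (lt_div_iff₀ hxm).1 hγ₀.2; linarith
    have a2 : 0 < 1 + γ₀ * xM := by
      have := hγ₀.1
      rw [← neg_div, div_lt_iff₀ hxM] at this; linarith
    refine ⟨min (1 - γ₀ * xm) (1 + γ₀ * xM), lt_min a1 a2, fun w hw => ?_⟩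
    obtain ⟨b1, b2⟩ := hxrange w hw
    rcases le_total 0 γ₀ with h | h
    · exact (min_le_left _ _).trans (by nlinarith)
    · exact (min_le_right _ _).trans (by nlinarith)
  obtain ⟨c, hc0, hc⟩ := hc
  have hcont : Tendsto Real.log (𝓝 1) (𝓝 0) := by
    simpa using (Real.continuousAt_log one_ne_zero).tendsto
  obtain ⟨δ, hδ, hlog⟩ := Metric.tendsto_nhds_nhds.1 hcont η hη
  have hm : 0 < min δ 1 := by positivity
  set X := xm + xM with hX
  have hX0 : 0 < X := by positivity
  filter_upwards [Metric.tendsto_nhds.1 hγ (min δ 1 * c / X) (by positivity)] with n hn w hw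
  have hcw := hc w hw
  obtain ⟨b1, b2⟩ := hxrange w hw
  have hxX : |x w| < X := by rw [abs_lt]; constructor <;> linarith
  have hpos : 0 < 1 + γ₀ * x w := lt_of_lt_of_le hc0 hcw
  rw [Real.dist_eq, lt_div_iff₀ hX0] at hn
  have hq : (1 + γ n * x w) / (1 + γ₀ * x w) - 1 = (γ n - γ₀) * x w / (1 + γ₀ * x w) := by
    rw [div_sub_one hpos.ne']; congr 1; ring
  have hlt : |(1 + γ n * x w) / (1 + γ₀ * x w) - 1| < min δ 1 := by
    rw [hq, abs_div, abs_of_pos hpos, div_lt_iff₀ hpos, abs_mul]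
    have t1 : |γ n - γ₀| * |x w| ≤ |γ n - γ₀| * X := by gcongr
    have t2 : min δ 1 * c ≤ min δ 1 * (1 + γ₀ * x w) := by gcongr
    linarith
  have hrpos : 0 < (1 + γ n * x w) / (1 + γ₀ * x w) := by
    have := (abs_lt.1 (hlt.trans_le (min_le_right _ _))).1; linarith
  have hnum : 0 < 1 + γ n * x w := by
    by_contra hcon
    push Not at hcon
    exact absurd hrpos (not_lt.2 (div_nonpos_of_nonpos_of_nonneg hcon hpos.le))
  have := hlog (x := (1 + γ n * x w) / (1 + γ₀ * x w)) (by
    rw [Real.dist_eq]; exact hlt.trans_le (min_le_left _ _))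
  rw [Real.dist_eq, sub_zero, Real.log_div hnum.ne' hpos.ne'] at this
  rwa [abs_sub_comm]

/-- Theorem 4(i): if `γ̃ₙ → γ₀` a.s. and
`sup_{t∈[0,A]} |log g̃ₙ(t) - log g₀(t)| → 0` a.s., then the autoregression-coefficient
estimator `φ̃ₙ` built from the residuals converges to `φ` almost surely. -/
theorem stmt15
    {Ω : Type*} [MeasurableSpace Ω] (μ : Measure Ω) [IsProbabilityMeasure μ]
    (Δ A xm xM : ℝ) (hΔ : 0 < Δ) (hA : 0 < A) (hxm : 0 < xm) (hxM : 0 < xM)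
    (x z : ℝ → ℝ)
    (hxcont : ContinuousOn x (Icc 0 Δ))
    (hxrange : ∀ w ∈ Icc (0 : ℝ) Δ, x w ∈ Ioo (-xm) xM)
    (hzcont : ContinuousOn z (Icc 0 Δ))
    (hzrange : ∀ w ∈ Icc (0 : ℝ) Δ, z w ∈ Icc 0 A)
    (hzmono : StrictMonoOn z (Icc 0 Δ))
    (U : ℤ → Ω → ℝ) (hUmeas : ∀ j, Measurable (U j))
    (hUindep : iIndepFun U μ)
    (hUident : ∀ j, μ.map (U j) = μ.map (U 0))
    (σ : ℝ) (hσ : 0 < σ)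
    (hUmean : ∫ ω, U 0 ω ∂μ = 0)
    (hUvar : ∫ ω, (U 0 ω) ^ 2 ∂μ = σ ^ 2)
    (hU8 : Integrable (fun ω => (U 0 ω) ^ 8) μ)
    (φ : ℝ) (hφ0 : φ ≠ 0) (hφ1 : |φ| < 1)
    (ε : ℤ → Ω → ℝ) (hεmeas : ∀ i, Measurable (ε i))
    (hεsum : ∀ᵐ ω ∂μ, ∀ i : ℤ, HasSum (fun j : ℕ => φ ^ j * U (i - (j : ℤ)) ω) (ε i ω))
    (γ₀ : ℝ) (hγ₀ : γ₀ ∈ Ioo (-(1 / xM)) (1 / xm))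
    (g₀ : ℝ → ℝ) (c : ℝ) (hc : 0 < c)
    (hg₀lb : ∀ t ∈ Icc (0 : ℝ) A, c ≤ g₀ t)
    (hg₀cont : ContinuousOn g₀ (Icc 0 A))
    (hg₀anti : AntitoneOn g₀ (Icc 0 A))
    (γtil : ℕ → Ω → ℝ)
    (hγtilmem : ∀ n ω, γtil n ω ∈ Icc (-(1 / xM)) (1 / xm))
    (hγtilconv : ∀ᵐ ω ∂μ, Tendsto (fun n : ℕ => γtil n ω) atTop (𝓝 γ₀))
    (gtil : ℕ → Ω → ℝ → ℝ)
    (hgtilpos : ∀ n ω, ∀ t ∈ Icc (0 : ℝ) A, 0 < gtil n ω t)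
    (hgtilcont : ∀ n ω, ContinuousOn (gtil n ω) (Icc 0 A))
    (hgtilconv : ∀ᵐ ω ∂μ, ∀ e > (0 : ℝ), ∃ N : ℕ, ∀ n ≥ N, ∀ t ∈ Icc (0 : ℝ) A,
      |Real.log (gtil n ω t) - Real.log (g₀ t)| < e)
    :
    ∀ᵐ ω ∂μ, Tendsto
      (fun n : ℕ => phiTil Δ γ₀ x z g₀ ε (γtil n ω) (gtil n ω) n ω)
      atTop (𝓝 φ) := by
  have hb : ∀ t : ℝ, |t| ≤ 1 + t^8 ∧ t^2 ≤ 1 + t^8 := by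
    intro t
    have h2 : t^2 ≤ 1 + t^8 - 1/4 := by
      nlinarith [sq_nonneg (t^2 - 1/2), sq_nonneg (t^4 - 1/2), sq_nonneg (t^2), sq_nonneg (t^4)]
    refine ⟨?_, by linarith⟩
    have := sq_abs t
    nlinarith [sq_nonneg (|t| - 1/2)]
  have hdom : Integrable (fun ω => 1 + (U 0 ω)^8) μ := (integrable_const 1).add hU8
  have hI1 : Integrable (U 0) μ := hdom.mono' (hUmeas 0).aestronglyMeasurable
    (Eventually.of_forall fun ω => (hb _).1)
  have hI2 : Integrable (fun ω => (U 0 ω)^2) μ := hdom.mono'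
    ((hUmeas 0).pow_const 2).aestronglyMeasurable
    (Eventually.of_forall fun ω => by
      rw [Real.norm_eq_abs, abs_of_nonneg (sq_nonneg _)]; exact (hb _).2)
  have hV := slln_sq U hUmeas hUindep hUident hI2
  have hC : ∀ᵐ ω ∂μ, ∀ k : ℕ, 1 ≤ k → Tendsto (fun n : ℕ =>
      (∑ i ∈ Finset.range n, U (i:ℤ) ω * U ((i:ℤ)-k) ω) / n) atTop (𝓝 0) := by
    rw [ae_all_iff]
    intro k
    by_cases hk : 1 ≤ k
    · filter_upwards [slln_cross U hUmeas hUindep hUident hI1 hUmean k hk] with ω hω _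
      exact hω
    · exact Eventually.of_forall fun ω h => absurd h hk
  filter_upwards [hV, hC, hεsum, hγtilconv, hgtilconv] with ω hVω hCω hεω hγω hgω
  rw [hUvar] at hVω
  refine ratio_lim φ (σ^2) (by positivity) hφ1 (fun i => U i ω) (fun i => ε i ω)
    (fun n i => resid Δ γ₀ x z g₀ ε (γtil n ω) (gtil n ω) n i ω)
    (rec_of_hasSum φ (fun i => U i ω) (fun i => ε i ω) hεω) hVω hCω ?_
  intro η hη
  obtain ⟨N, hN⟩ := hgω (η/2) (by linarith)
  filter_upwards [log_unif Δ xm xM hxm hxM x hxrange γ₀ hγ₀ (fun n => γtil n ω) hγω (η/2)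
    (by linarith), eventually_ge_atTop N] with n hn hnN i hi1 hin
  have hn0 : (0:ℝ) < n := by exact_mod_cast (by omega : 0 < n)
  have hin' : (i:ℝ) ≤ n := by exact_mod_cast hin
  have hw : (i:ℝ) * Δ / n ∈ Icc (0:ℝ) Δ := by
    refine ⟨by positivity, ?_⟩
    rw [div_le_iff₀ hn0]
    nlinarith
  have h1 := abs_lt.1 (hn _ hw)
  have h2 := abs_lt.1 (hN n hnN _ (hzrange _ hw))
  unfold resid
  rw [abs_le]
  constructor <;> linarith [h1.1, h1.2, h2.1, h2.2]
end

section
/- (Theorem 4(ii)) Let γ̃_n be random elements of Γ with γ̃_n → γ₀ almost surely, and let g̃_n be random positive continuous functions on [0,A] with sup_{t∈[0,A]} |log g̃_n(t) − log g₀(t)| → 0 almost surely (as guaranteed by Theorem 3). Define the residuals ε̃ᵢ = yᵢ − log(1+γ̃_n·xᵢ) − log g̃_n(zᵢ) for i=1,…,n, the estimator φ̃_n = [Σ_{i=2}^n ε̃ᵢ·ε̃ᵢ₋₁] / [Σ_{i=2}^n ε̃ᵢ²], and the innovation variance estimator σ̃_n² = (1/n)·Σ_{i=2}^n (ε̃ᵢ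 − φ̃_n·ε̃ᵢ₋₁)². Then σ̃_n² converges to σ² almost surely as n→∞. -/
open MeasureTheory ProbabilityTheory Filter Set Topology

/-- The innovation-variance estimator `σ̃ₙ² = (1/n) ∑_{i=2}^n (ε̃ᵢ - φ̃ₙ ε̃ᵢ₋₁)²`. -/
noncomputable def sigmaTilSq {Ω : Type*} (Δ γ₀ : ℝ) (x z g₀ : ℝ → ℝ) (ε : ℤ → Ω → ℝ)
    (γt : ℝ) (gt : ℝ → ℝ) (n : ℕ) (ω : Ω) : ℝ :=
  (1 / (n : ℝ)) * ∑ i ∈ Finset.Icc 2 n,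
    (resid Δ γ₀ x z g₀ ε γt gt n i ω -
      phiTil Δ γ₀ x z g₀ ε γt gt n ω * resid Δ γ₀ x z g₀ ε γt gt n (i - 1) ω) ^ 2


theorem contr_aux (u δ : ℕ → ℝ) (q : ℝ) (hq0 : 0 ≤ q) (hq : q < 1) (hu : ∀ n, 0 ≤ u n)
    (h : ∀ n, u (n+1) ≤ q * u n + δ n) (hδ : Tendsto δ atTop (𝓝 0)) :
    Tendsto u atTop (𝓝 0) := by
  rw [Metric.tendsto_atTop]
  intro e he
  have h1 : ∀ᶠ n in atTop, δ n < (e/2) * (1-q) :=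
    hδ.eventually_lt_const (by have : 0 < 1 - q := by linarith
                               positivity)
  obtain ⟨N, hN⟩ := eventually_atTop.1 h1
  have h2 : ∀ k, u (N+k) ≤ q^k * u N + e/2 := by
    intro k
    induction k with
    | zero => simp; linarith
    | succ k ih =>
      have h3 := h (N+k)
      have h4 := hN (N+k) (by omega)
      have h5 := mul_le_mul_of_nonneg_left ih hq0
      rw [← add_assoc, pow_succ]
      nlinarith
  have h6 : Tendsto (fun k => q^k * u N) atTop (𝓝 0) := by
    simpa using (tendsto_pow_atTop_nhds_zero_of_lt_one hq0 hq).mul_const (u N)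
  obtain ⟨K, hK⟩ := eventually_atTop.1 (h6.eventually_lt_const (half_pos he))
  refine ⟨N+K, fun n hn => ?_⟩
  obtain ⟨k, rfl⟩ := Nat.exists_eq_add_of_le (show N ≤ n by omega)
  have := h2 k
  have := hK k (by omega)
  rw [Real.dist_eq, sub_zero, abs_of_nonneg (hu _)]
  linarith

theorem cs_aux (s : ℕ → Finset ℕ) (f q : ℕ → ℕ → ℝ) (F : ℝ)
    (hf : Tendsto (fun n : ℕ => (∑ i ∈ s n, f n i ^ 2) / (n:ℝ)) atTop (𝓝 F))
    (hq : Tendsto (fun n : ℕ => (∑ i ∈ s n, q n i ^ 2) / (n:ℝ)) atTop (𝓝 0)) :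
    Tendsto (fun n : ℕ => (∑ i ∈ s n, f n i * q n i) / (n:ℝ)) atTop (𝓝 0) := by
  have h0 : Tendsto (fun n : ℕ => Real.sqrt (((∑ i ∈ s n, f n i ^ 2) / (n:ℝ)) *
      ((∑ i ∈ s n, q n i ^ 2) / (n:ℝ)))) atTop (𝓝 0) := by
    have := (hf.mul hq).sqrt
    simpa using this
  refine squeeze_zero_norm (fun n => ?_) h0
  rw [Real.norm_eq_abs]
  apply Real.abs_le_sqrt
  rw [div_pow, div_mul_div_comm, ← sq]
  gcongr
  exact Finset.sum_mul_sq_le_sq_mul_sq _ _ _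

theorem pert_aux (s : ℕ → Finset ℕ) (f g p q : ℕ → ℕ → ℝ) (l F G : ℝ)
    (hl : Tendsto (fun n : ℕ => (∑ i ∈ s n, f n i * g n i) / (n:ℝ)) atTop (𝓝 l))
    (hf : Tendsto (fun n : ℕ => (∑ i ∈ s n, f n i ^ 2) / (n:ℝ)) atTop (𝓝 F))
    (hg : Tendsto (fun n : ℕ => (∑ i ∈ s n, g n i ^ 2) / (n:ℝ)) atTop (𝓝 G))
    (hp : Tendsto (fun n : ℕ => (∑ i ∈ s n, p n i ^ 2) / (n:ℝ)) atTop (𝓝 0))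
    (hq : Tendsto (fun n : ℕ => (∑ i ∈ s n, q n i ^ 2) / (n:ℝ)) atTop (𝓝 0)) :
    Tendsto (fun n : ℕ => (∑ i ∈ s n, (f n i + p n i) * (g n i + q n i)) / (n:ℝ))
      atTop (𝓝 l) := by
  have h := ((hl.add (cs_aux s f q F hf hq)).add (cs_aux s g p G hg hp)).add
    (cs_aux s p q 0 hp hq)
  simp only [add_zero] at h
  refine h.congr fun n => ?_
  rw [← add_div, ← add_div, ← add_div, ← Finset.sum_add_distrib, ← Finset.sum_add_distrib,
    ← Finset.sum_add_distrib]
  congr 1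
  exact Finset.sum_congr rfl fun i _ => by ring

theorem reidx (h : ℕ → ℝ) (h0 : h 0 = 0) (n : ℕ) :
    ∑ i ∈ Finset.Icc 2 n, h (i-1) = ∑ k ∈ Finset.range n, h k := by
  induction n with
  | zero => simp
  | succ n ih =>
    rcases Nat.eq_zero_or_pos n with rfl | hn
    · simp [h0]
    · rw [Finset.sum_Icc_succ_top (by omega), ih, Finset.sum_range_succ]; simp

theorem det_T (φ σ : ℝ) (hφ1 : |φ| < 1) (e v : ℕ → ℝ) (he0 : e 0 = 0)
    (he : ∀ n, e (n+1) = φ * e n + v n)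
    (hv : Tendsto (fun n : ℕ => (∑ k ∈ Finset.range n, v k ^ 2) / (n:ℝ)) atTop (𝓝 (σ^2)))
    (hc : Tendsto (fun n : ℕ => (∑ k ∈ Finset.range n, e k * v k) / (n:ℝ)) atTop (𝓝 0)) :
    Tendsto (fun n : ℕ => (∑ k ∈ Finset.range n, e k ^ 2) / (n:ℝ)) atTop
      (𝓝 (σ^2/(1-φ^2))) := by
  have hq : φ^2 < 1 := by rw [← sq_abs]; nlinarith [abs_nonneg φ]
  set L := σ^2/(1-φ^2) with hL
  have hL' : L * (1-φ^2) = σ^2 := by rw [hL]; field_simp [show (1-φ^2) ≠ 0 by linarith]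
  set T := fun n : ℕ => ∑ k ∈ Finset.range n, e k ^ 2 with hT
  have hrec : ∀ n, T (n+1) = φ^2 * T n + 2*φ*(∑ k ∈ Finset.range n, e k * v k) +
      ∑ k ∈ Finset.range n, v k ^ 2 := by
    intro n
    simp only [hT]
    rw [Finset.sum_range_succ', he0, Finset.mul_sum, Finset.mul_sum, ← Finset.sum_add_distrib,
      ← Finset.sum_add_distrib]
    simp only [ne_eq, OfNat.ofNat_ne_zero, not_false_eq_true, zero_pow, add_zero]
    exact Finset.sum_congr rfl fun i _ => by rw [he]; ring
  set δ := fun n : ℕ => 2*φ*((∑ k ∈ Finset.range n, e k * v k)/(n:ℝ)) +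
      (∑ k ∈ Finset.range n, v k ^ 2)/(n:ℝ) - σ^2 - L / n with hδ
  have hδ0 : Tendsto δ atTop (𝓝 0) := by
    have := (((hc.const_mul (2*φ)).add hv).sub_const (σ^2)).sub
      (tendsto_const_div_atTop_nhds_zero_nat L)
    simpa using this
  have key : Tendsto (fun n : ℕ => |T n / n - L|) atTop (𝓝 0) := by
    rw [← tendsto_add_atTop_iff_nat 1]
    refine contr_aux _ (fun n => |δ (n+1)|) (φ^2) (sq_nonneg _) hq (fun n => abs_nonneg _) ?_ ?_
    · intro n
      have hm : (0:ℝ) < (n:ℝ) + 1 := by positivity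
      have h1 : T (n+1+1) - ((n:ℝ)+1+1) * L = ((n:ℝ)+1) *
          (φ^2 * (T (n+1) / ((n:ℝ)+1) - L) + δ (n+1)) := by
        rw [hrec (n+1)]
        simp only [hδ]
        push_cast
        field_simp
        linear_combination (-((n:ℝ)+1)) * hL'
      have h2 : T (n+1+1) / ((n+1+1 : ℕ):ℝ) - L = (((n:ℝ)+1)/((n:ℝ)+1+1)) *
          (φ^2 * (T (n+1) / ((n:ℝ)+1) - L) + δ (n+1)) := by
        rw [div_mul_eq_mul_div, ← h1]
        push_cast
        field_simp
      rw [h2, abs_mul]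
      have h3 : |((n:ℝ)+1)/((n:ℝ)+1+1)| ≤ 1 := by
        rw [abs_of_nonneg (by positivity), div_le_one (by positivity)]
        linarith
      refine (mul_le_of_le_one_left (abs_nonneg _) h3).trans ((abs_add_le _ _).trans ?_)
      rw [abs_mul, abs_of_nonneg (sq_nonneg φ)]
      push_cast
      exact le_rfl
    · simpa using ((tendsto_add_atTop_iff_nat 1).2 hδ0).abs
  have := (tendsto_zero_iff_abs_tendsto_zero _).2 key
  simpa using this.add_const L

theorem det_main_s16 (φ σ : ℝ) (hφ1 : |φ| < 1) (hσ : 0 < σ) (e v : ℕ → ℝ) (he0 : e 0 = 0)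
    (he : ∀ n, e (n+1) = φ * e n + v n)
    (hv : Tendsto (fun n : ℕ => (∑ k ∈ Finset.range n, v k ^ 2) / (n:ℝ)) atTop (𝓝 (σ^2)))
    (hc : Tendsto (fun n : ℕ => (∑ k ∈ Finset.range n, e k * v k) / (n:ℝ)) atTop (𝓝 0))
    (r : ℕ → ℕ → ℝ)
    (hr : Tendsto (fun n : ℕ => (∑ i ∈ Finset.Icc 1 n, (r n i - e i) ^ 2) / (n:ℝ))
      atTop (𝓝 0)) :
    Tendsto (fun n : ℕ => (1 / (n:ℝ)) * ∑ i ∈ Finset.Icc 2 n, (r n i -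
      ((∑ i ∈ Finset.Icc 2 n, r n i * r n (i-1)) / (∑ i ∈ Finset.Icc 2 n, r n i ^ 2))
        * r n (i-1)) ^ 2) atTop (𝓝 (σ^2)) := by
  have hT := det_T φ σ hφ1 e v he0 he hv hc
  have hq : φ^2 < 1 := by rw [← sq_abs]; nlinarith [abs_nonneg φ]
  set L := σ^2/(1-φ^2) with hL
  have hL' : L * (1-φ^2) = σ^2 := by rw [hL]; field_simp [show (1-φ^2) ≠ 0 by linarith]
  have hLpos : 0 < L := div_pos (by positivity) (by linarith)
  have e1 : Tendsto (fun n : ℕ => (∑ i ∈ Finset.Icc 2 n, e (i-1) ^ 2) / (n:ℝ)) atTop (𝓝 L) := by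
    refine hT.congr fun n => ?_
    rw [← reidx (fun k => e k ^ 2) (by simp [he0])]
  have e2 : Tendsto (fun n : ℕ => (∑ i ∈ Finset.Icc 2 n, e i * e (i-1)) / (n:ℝ)) atTop
      (𝓝 (φ * L)) := by
    have h := (hT.const_mul φ).add hc
    rw [add_zero] at h
    refine h.congr fun n => ?_
    have h1 : ∑ i ∈ Finset.Icc 2 n, e i * e (i-1) = ∑ k ∈ Finset.range n, e (k+1) * e k := by
      rw [← reidx (fun k => e (k+1) * e k) (by simp [he0])]
      refine Finset.sum_congr rfl fun i hi => ?_
      have := (Finset.mem_Icc.1 hi).1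
      -- align the shifted index
      rw [Nat.sub_add_cancel (by omega)]
    rw [h1, ← mul_div_assoc, ← add_div, Finset.mul_sum, ← Finset.sum_add_distrib]
    congr 1
    exact Finset.sum_congr rfl fun i _ => by rw [he]; ring
  have e3 : Tendsto (fun n : ℕ => (∑ i ∈ Finset.Icc 2 n, e i ^ 2) / (n:ℝ)) atTop (𝓝 L) := by
    have h := (((hT.const_mul (φ^2)).add (hc.const_mul (2*φ))).add hv).sub
      (tendsto_const_div_atTop_nhds_zero_nat (e 1 ^ 2))
    have h0 : φ^2 * L + 2 * φ * 0 + σ^2 - 0 = L := by linear_combination -hL'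
    rw [h0] at h
    refine h.congr' ?_
    filter_upwards [eventually_ge_atTop 1] with n hn
    have h1 : ∑ i ∈ Finset.Icc 2 n, e i ^ 2 = ∑ k ∈ Finset.range n, e (k+1) ^ 2 - e 1 ^ 2 := by
      clear h
      induction n, hn using Nat.le_induction with
      | base => simp
      | succ n hn ih =>
        rw [Finset.sum_Icc_succ_top (by omega), ih, Finset.sum_range_succ]; ring
    rw [h1, ← mul_div_assoc, ← mul_div_assoc, ← add_div, ← add_div, ← sub_div, Finset.mul_sum,
      Finset.mul_sum, ← Finset.sum_add_distrib, ← Finset.sum_add_distrib]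
    congr 2
    exact Finset.sum_congr rfl fun i _ => by rw [he]; ring
  have p1 : Tendsto (fun n : ℕ => (∑ i ∈ Finset.Icc 2 n, (r n i - e i) ^ 2) / (n:ℝ))
      atTop (𝓝 0) := by
    refine squeeze_zero (fun n => by positivity) (fun n => ?_) hr
    gcongr
    omega
  have p2 : Tendsto (fun n : ℕ => (∑ i ∈ Finset.Icc 2 n, (r n (i-1) - e (i-1)) ^ 2) / (n:ℝ))
      atTop (𝓝 0) := by
    refine squeeze_zero (fun n => by positivity) (fun n => ?_) hr
    gcongr
    rw [← Finset.sum_image (f := fun i => (r n i - e i) ^ 2) (g := fun i => i - 1)]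
    · refine Finset.sum_le_sum_of_subset_of_nonneg ?_ fun _ _ _ => sq_nonneg _
      intro i hi
      simp only [Finset.mem_image, Finset.mem_Icc] at hi ⊢
      omega
    · intro i hi j hj h
      simp only [Finset.coe_Icc, Set.mem_Icc] at hi hj h
      omega
  have A := pert_aux (fun n => Finset.Icc 2 n) (fun _ i => e i) (fun _ i => e i)
    (fun n i => r n i - e i) (fun n i => r n i - e i) L L L
    (by simpa only [← sq] using e3) e3 e3 p1 p1
  have B := pert_aux (fun n => Finset.Icc 2 n) (fun _ i => e i) (fun _ i => e (i-1))
    (fun n i => r n i - e i) (fun n i => r n (i-1) - e (i-1)) (φ * L) L L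
    e2 e3 e1 p1 p2
  have A' := pert_aux (fun n => Finset.Icc 2 n) (fun _ i => e (i-1)) (fun _ i => e (i-1))
    (fun n i => r n (i-1) - e (i-1)) (fun n i => r n (i-1) - e (i-1)) L L L
    (by simpa only [← sq] using e1) e1 e1 p2 p2
  simp only [add_sub_cancel, ← sq] at A B A'
  have P : Tendsto (fun n : ℕ => (∑ i ∈ Finset.Icc 2 n, r n i * r n (i-1)) /
      (∑ i ∈ Finset.Icc 2 n, r n i ^ 2)) atTop (𝓝 φ) := by
    have h := B.div A hLpos.ne'
    rw [mul_div_cancel_right₀ _ hLpos.ne'] at h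
    refine h.congr' ?_
    filter_upwards [eventually_ge_atTop 1] with n hn
    exact div_div_div_cancel_right₀ (by positivity) _ _
  have h := (A.sub ((P.const_mul 2).mul B)).add ((P.pow 2).mul A')
  have h0 : L - 2 * φ * (φ * L) + φ^2 * L = σ^2 := by linear_combination hL'
  rw [h0] at h
  refine h.congr fun n => ?_
  set p := (∑ i ∈ Finset.Icc 2 n, r n i * r n (i-1)) / (∑ i ∈ Finset.Icc 2 n, r n i ^ 2)
  have h1 : ∑ i ∈ Finset.Icc 2 n, (r n i - p * r n (i-1)) ^ 2 =
      ∑ i ∈ Finset.Icc 2 n, r n i ^ 2 - 2 * p * ∑ i ∈ Finset.Icc 2 n, r n i * r n (i-1)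
        + p^2 * ∑ i ∈ Finset.Icc 2 n, r n (i-1) ^ 2 := by
    rw [Finset.mul_sum, Finset.mul_sum, ← Finset.sum_sub_distrib, ← Finset.sum_add_distrib]
    exact Finset.sum_congr rfl fun i _ => by ring
  rw [h1]
  ring

/-- The mean square deviation tends to zero. -/
theorem ms_aux (φ C : ℝ) (hφ1 : |φ| < 1) (ρ : ℕ → ℕ → ℝ)
    (h : ∀ d > (0:ℝ), ∃ N : ℕ, ∀ n ≥ N, ∀ i ∈ Finset.Icc 1 n, |ρ n i - C * φ^i| < d) :
    Tendsto (fun n : ℕ => (∑ i ∈ Finset.Icc 1 n, ρ n i ^ 2) / (n:ℝ)) atTop (𝓝 0) := by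
  have hq : φ^2 < 1 := by rw [← sq_abs]; nlinarith [abs_nonneg φ]
  have h1 : Tendsto (fun n : ℕ => (∑ i ∈ Finset.Icc 1 n, (ρ n i - C * φ^i) ^ 2) / (n:ℝ))
      atTop (𝓝 0) := by
    rw [Metric.tendsto_atTop]
    intro d hd
    obtain ⟨N, hN⟩ := h (Real.sqrt (d/2)) (by positivity)
    refine ⟨N+1, fun n hn => ?_⟩
    rw [Real.dist_eq, sub_zero, abs_of_nonneg (by positivity)]
    have hn0 : (0:ℝ) < n := by exact_mod_cast (by omega : 0 < n)
    rw [div_lt_iff₀ hn0]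
    have : ∑ i ∈ Finset.Icc 1 n, (ρ n i - C * φ^i) ^ 2 ≤ ∑ i ∈ Finset.Icc 1 n, d/2 := by
      refine Finset.sum_le_sum fun i hi => ?_
      have h2 := (hN n (by omega) i hi).le
      rw [← sq_abs]
      calc _ ≤ (Real.sqrt (d/2))^2 := by gcongr
        _ = d/2 := Real.sq_sqrt (by positivity)
    simp at this
    nlinarith
  have h2 : Tendsto (fun n : ℕ => (∑ i ∈ Finset.Icc 1 n, (C * φ^i) ^ 2) / (n:ℝ))
      atTop (𝓝 0) := by
    refine squeeze_zero (fun n => by positivity) (fun n => ?_)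
      (tendsto_const_div_atTop_nhds_zero_nat (C^2 * (1-φ^2)⁻¹))
    gcongr
    simp only [mul_pow, ← Finset.mul_sum]
    gcongr
    have hs := hasSum_geometric_of_lt_one (sq_nonneg φ) hq
    refine le_trans (le_of_eq ?_) (sum_le_hasSum (Finset.Icc 1 n) (fun i _ => by positivity) hs)
    exact Finset.sum_congr rfl fun i _ => by rw [← pow_mul, ← pow_mul, mul_comm]
  have h3 := (h1.const_mul 2).add (h2.const_mul 2)
  simp only [mul_zero, add_zero] at h3
  refine squeeze_zero (fun n => by positivity) (fun n => ?_) h3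
  rw [← mul_div_assoc, ← mul_div_assoc, ← add_div, Finset.mul_sum, Finset.mul_sum,
    ← Finset.sum_add_distrib]
  gcongr with i hi
  nlinarith [sq_nonneg (ρ n i - 2 * (C * φ^i))]

/-- Kronecker-type lemma. -/
theorem kron_aux (a : ℕ → ℝ) (l : ℝ)
    (h : Tendsto (fun n => ∑ k ∈ Finset.range n, a k / ((k:ℝ)+1)) atTop (𝓝 l)) :
    Tendsto (fun n : ℕ => (∑ k ∈ Finset.range n, a k) / (n:ℝ)) atTop (𝓝 0) := by
  set M := fun n => ∑ k ∈ Finset.range n, a k / ((k:ℝ)+1) with hM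
  have h1 : ∀ n : ℕ, ∑ k ∈ Finset.range n, a k = n * M n - ∑ k ∈ Finset.range n, M k := by
    intro n
    induction n with
    | zero => simp
    | succ n ih =>
      rw [Finset.sum_range_succ, ih, Finset.sum_range_succ]
      have : M (n+1) = M n + a n / ((n:ℝ)+1) := Finset.sum_range_succ _ _
      rw [this]
      push_cast
      field_simp
      ring
  have h2 := h.sub h.cesaro
  rw [sub_self] at h2
  refine h2.congr' ?_
  filter_upwards [eventually_ge_atTop 1] with n hn
  have hn0 : (0:ℝ) < n := by exact_mod_cast hn
  rw [h1 n]
  field_simp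

theorem log_aux (a b d : ℝ) (hd : 0 < d) (ha : d ≤ a) (hb : d ≤ b) :
    |Real.log a - Real.log b| ≤ |a - b| / d := by
  have key : ∀ a b : ℝ, d ≤ a → d ≤ b → Real.log a - Real.log b ≤ |a - b| / d := by
    intro a b ha hb
    have hb0 : 0 < b := by linarith
    have ha0 : 0 < a := by linarith
    rw [← Real.log_div ha0.ne' hb0.ne']
    refine (Real.log_le_sub_one_of_pos (by positivity)).trans ?_
    have : a / b - 1 = (a - b) / b := by field_simp
    rw [this]
    calc (a-b)/b ≤ |a-b| / b := by gcongr; exact le_abs_self _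
      _ ≤ _ := by gcongr
  rw [abs_le]
  constructor
  · have := key b a hb ha
    rw [abs_sub_comm] at this
    linarith
  · exact key a b ha hb

theorem unif_log (Δ xm xM γ₀ : ℝ) (hxm : 0 < xm) (hxM : 0 < xM) (x : ℝ → ℝ)
    (hxrange : ∀ w ∈ Icc (0 : ℝ) Δ, x w ∈ Ioo (-xm) xM)
    (hγ₀ : γ₀ ∈ Ioo (-(1 / xM)) (1 / xm)) (γ : ℕ → ℝ) (hγ : Tendsto γ atTop (𝓝 γ₀))
    (d : ℝ) (hd : 0 < d) : ∃ N : ℕ, ∀ n ≥ N, ∀ w ∈ Icc (0:ℝ) Δ,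
      |Real.log (1 + γ₀ * x w) - Real.log (1 + γ n * x w)| < d := by
  obtain ⟨c, hc, hcx⟩ : ∃ c > 0, ∀ w ∈ Icc (0:ℝ) Δ, c ≤ 1 + γ₀ * x w := by
    have h1 : 0 < 1 + γ₀ * xM := by
      have := mul_lt_mul_of_pos_right hγ₀.1 hxM
      field_simp at this
      linarith
    have h2 : 0 < 1 - γ₀ * xm := by
      have := mul_lt_mul_of_pos_right hγ₀.2 hxm
      field_simp at this
      linarith
    refine ⟨min (1 + γ₀ * xM) (1 - γ₀ * xm), lt_min h1 h2, fun w hw => ?_⟩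
    have := hxrange w hw
    rcases le_total 0 γ₀ with h | h
    · refine (min_le_right _ _).trans ?_
      nlinarith [this.1]
    · refine (min_le_left _ _).trans ?_
      nlinarith [this.2]
  set X := xm + xM
  have hX : 0 < X := by positivity
  have hxX : ∀ w ∈ Icc (0:ℝ) Δ, |x w| ≤ X := by
    intro w hw
    have := hxrange w hw
    rw [abs_le]
    constructor <;> simp only [X] <;> linarith [this.1, this.2]
  have hm : 0 < min (c/2) (d * (c/2) / 2) := by positivity
  obtain ⟨N, hN⟩ := Metric.tendsto_atTop.1 hγ (min (c/2) (d * (c/2) / 2) / X) (by positivity)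
  refine ⟨N, fun n hn w hw => ?_⟩
  have h3 := hN n hn
  rw [Real.dist_eq, lt_div_iff₀ hX] at h3
  have h4 : |(1 + γ₀ * x w) - (1 + γ n * x w)| < min (c/2) (d * (c/2) / 2) := by
    have : (1 + γ₀ * x w) - (1 + γ n * x w) = -((γ n - γ₀) * x w) := by ring
    rw [this, abs_neg, abs_mul]
    exact (mul_le_mul_of_nonneg_left (hxX w hw) (abs_nonneg _)).trans_lt h3
  have h5 := h4.trans_le (min_le_left _ _)
  have h6 := h4.trans_le (min_le_right _ _)
  have h7 := hcx w hw
  refine (log_aux _ _ (c/2) (by positivity) (by linarith) ?_).trans_lt ?_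
  · have := (abs_lt.1 h5).2
    linarith
  · rw [div_lt_iff₀ (by positivity)]
    have : 0 < d * (c/2) := by positivity
    linarith

theorem orth_step {Ω : Type*} [MeasurableSpace Ω] (μ : Measure Ω) [IsProbabilityMeasure μ]
    (f g w : Ω → ℝ) (s : ℝ) (hf : MemLp f 2 μ) (hg : MemLp g 2 μ) (hw : MemLp w 2 μ)
    (ind1 : IndepFun (fun ω => f ω * g ω) w μ) (ind2 : IndepFun g w μ)
    (hw0 : ∫ ω, w ω ∂μ = 0) (hw2 : ∫ ω, w ω ^ 2 ∂μ = s) :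
    MemLp (fun ω => g ω * w ω) 2 μ ∧ MemLp (fun ω => f ω + g ω * w ω) 2 μ ∧
    ∫ ω, (f ω + g ω * w ω) ^ 2 ∂μ = ∫ ω, f ω ^ 2 ∂μ + s * ∫ ω, g ω ^ 2 ∂μ := by
  have ind3 : IndepFun (fun ω => g ω ^ 2) (fun ω => w ω ^ 2) μ :=
    ind2.comp (φ := fun t : ℝ => t ^ 2) (ψ := fun t : ℝ => t ^ 2) (by fun_prop) (by fun_prop)
  have hgw : MemLp (fun ω => g ω * w ω) 2 μ := by
    refine (memLp_two_iff_integrable_sq (hg.1.mul hw.1)).2 ?_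
    refine (ind3.integrable_mul hg.integrable_sq hw.integrable_sq).congr ?_
    exact ae_of_all _ fun ω => by simp [mul_pow]
  refine ⟨hgw, hf.add hgw, ?_⟩
  have i1 : ∫ ω, g ω ^ 2 * w ω ^ 2 ∂μ = (∫ ω, g ω ^ 2 ∂μ) * s := by
    rw [← hw2]
    exact ind3.integral_mul_eq_mul_integral (hg.1.pow 2) (hw.1.pow 2)
  have i2 : ∫ ω, (f ω * g ω) * w ω ∂μ = 0 := by
    have := ind1.integral_mul_eq_mul_integral (hf.1.mul hg.1) hw.1
    rw [hw0, mul_zero] at this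
    exact this
  have j1 : Integrable (fun ω => g ω ^ 2 * w ω ^ 2) μ :=
    ind3.integrable_mul hg.integrable_sq hw.integrable_sq
  have j2 : Integrable (fun ω => (f ω * g ω) * w ω) μ :=
    ind1.integrable_mul (hf.integrable_mul hg) (hw.integrable (by norm_num))
  calc ∫ ω, (f ω + g ω * w ω) ^ 2 ∂μ
      = ∫ ω, (f ω ^ 2 + g ω ^ 2 * w ω ^ 2 + 2 * ((f ω * g ω) * w ω)) ∂μ := by
        congr 1; ext ω; ring
    _ = _ := by
        rw [integral_add (f := fun ω => f ω ^ 2 + g ω ^ 2 * w ω ^ 2)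
          (hf.integrable_sq.add j1) (j2.const_mul 2),
          integral_add hf.integrable_sq j1, integral_const_mul, i1, i2]
        ring

/-- The AR(1) recursion started at zero. -/
noncomputable def arZ {Ω : Type*} (φ : ℝ) (V : ℕ → Ω → ℝ) : ℕ → Ω → ℝ
  | 0 => fun _ => 0
  | n+1 => fun ω => φ * arZ φ V n ω + V n ω

/-- The strict-past filtration. -/
def pastF {Ω : Type*} [mΩ : MeasurableSpace Ω] (V : ℕ → Ω → ℝ) (hV : ∀ n, Measurable (V n)) :
    Filtration ℕ mΩ where
  seq n := ⨆ k ∈ Set.Iio n, MeasurableSpace.comap (V k) inferInstance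
  mono' := fun _ _ hij => biSup_mono fun _ hk => lt_of_lt_of_le hk hij
  le' := fun _ => iSup₂_le fun k _ => (hV k).comap_le

theorem mart_lln {Ω : Type*} [mΩ : MeasurableSpace Ω] (μ : Measure Ω) [IsProbabilityMeasure μ]
    (V : ℕ → Ω → ℝ) (hV : ∀ n, Measurable (V n)) (hind : iIndepFun V μ)
    (hV2 : ∀ n, MemLp (V n) 2 μ) (σ φ : ℝ) (hφ1 : |φ| < 1)
    (h0 : ∀ n, ∫ ω, V n ω ∂μ = 0) (h2 : ∀ n, ∫ ω, V n ω ^ 2 ∂μ = σ ^ 2) :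
    ∀ᵐ ω ∂μ, Tendsto (fun n : ℕ => (∑ k ∈ Finset.range n, arZ φ V k ω * V k ω) / (n:ℝ))
      atTop (𝓝 0) := by
  have hq : φ^2 < 1 := by rw [← sq_abs]; nlinarith [abs_nonneg φ]
  set e := arZ φ V with he
  have hes : ∀ n, e (n+1) = fun ω => φ * e n ω + V n ω := fun n => rfl
  set F := pastF V hV with hF
  have hVF : ∀ n, Measurable[F (n+1)] (V n) := by
    intro n
    apply Measurable.of_comap_le
    exact le_iSup₂_of_le (f := fun k (_ : k ∈ Set.Iio (n+1)) =>
      MeasurableSpace.comap (V k) inferInstance) n (Nat.lt_succ_self n) le_rfl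
  have hIndep : ∀ n, Indep (F n) (MeasurableSpace.comap (V n) inferInstance) μ := by
    intro n
    have h := indep_iSup_of_disjoint (fun k => (hV k).comap_le)
      ((iIndepFun_iff_iIndep _ _ _).1 hind) (S := Set.Iio n) (T := {n}) (by simp)
    simp only [Set.mem_singleton_iff, iSup_iSup_eq_left] at h
    exact h
  have hIF : ∀ n (f : Ω → ℝ), Measurable[F n] f → IndepFun f (V n) μ := by
    intro n f hf
    rw [IndepFun_iff_Indep]
    exact indep_of_indep_of_le_left (hIndep n) hf.comap_le
  have heF : ∀ n, Measurable[F n] (e n) := by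
    intro n
    induction n with
    | zero => exact measurable_const
    | succ n ih =>
      rw [hes]
      exact ((ih.mono (F.mono (Nat.le_succ n)) le_rfl).const_mul φ).add (hVF n)
  set K := σ^2/(1-φ^2) with hK
  have hK0 : 0 ≤ K := div_nonneg (sq_nonneg _) (by linarith)
  have hK' : K * (1-φ^2) = σ^2 := by rw [hK]; field_simp [show (1-φ^2) ≠ 0 by linarith]
  have he2 : ∀ n, MemLp (e n) 2 μ ∧ ∫ ω, e n ω ^ 2 ∂μ ≤ K := by
    intro n
    induction n with
    | zero =>
      have : e 0 = fun _ => (0:ℝ) := rfl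
      rw [this]
      exact ⟨memLp_const 0, by simpa using hK0⟩
    | succ n ih =>
      have hm : Measurable[F n] (fun ω => φ * e n ω * 1) := ((heF n).const_mul φ).mul_const 1
      obtain ⟨_, h4, h5⟩ := orth_step μ (fun ω => φ * e n ω) (fun _ => 1) (V n) (σ^2)
        (ih.1.const_mul φ) (memLp_const 1) (hV2 n) (hIF n _ hm) (hIF n _ measurable_const)
        (h0 n) (h2 n)
      simp only [one_mul] at h4 h5
      refine ⟨h4, ?_⟩
      rw [hes]
      simp only
      rw [h5]
      simp only [mul_pow, integral_const_mul]
      simp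
      nlinarith [ih.2, sq_nonneg φ]
  set M : ℕ → Ω → ℝ := fun n ω => ∑ k ∈ Finset.range n, (e k ω * V k ω) / ((k:ℝ)+1) with hM
  have hMs : ∀ n, M (n+1) = fun ω => M n ω + (e n ω / ((n:ℝ)+1)) * V n ω := by
    intro n; ext ω
    simp only [hM, Finset.sum_range_succ]
    ring
  have hMF : ∀ n, Measurable[F n] (M n) := by
    intro n
    induction n with
    | zero =>
      have : M 0 = fun _ => (0:ℝ) := by ext; simp [hM]
      rw [this]; exact measurable_const
    | succ n ih =>
      rw [hMs]
      exact (ih.mono (F.mono (Nat.le_succ n)) le_rfl).add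
        ((((heF n).mono (F.mono (Nat.le_succ n)) le_rfl).div_const _).mul (hVF n))
  have hM2 : ∀ n, MemLp (M n) 2 μ ∧
      ∫ ω, M n ω ^ 2 ∂μ ≤ σ^2 * K * ∑ k ∈ Finset.range n, 1/((k:ℝ)+1)^2 ∧
      MemLp (fun ω => (e n ω / ((n:ℝ)+1)) * V n ω) 2 μ := by
    intro n
    have step : ∀ n, MemLp (M n) 2 μ → _ := fun n hMn =>
      orth_step μ (M n) (fun ω => e n ω / ((n:ℝ)+1)) (V n) (σ^2) hMn
        (by simpa only [div_eq_inv_mul] using (he2 n).1.const_mul (((n:ℝ)+1)⁻¹)) (hV2 n)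
        (hIF n _ ((hMF n).mul ((heF n).div_const _))) (hIF n _ ((heF n).div_const _)) (h0 n) (h2 n)
    suffices h : MemLp (M n) 2 μ ∧
      ∫ ω, M n ω ^ 2 ∂μ ≤ σ^2 * K * ∑ k ∈ Finset.range n, 1/((k:ℝ)+1)^2 from
      ⟨h.1, h.2, (step n h.1).1⟩
    induction n with
    | zero =>
      have : M 0 = fun _ => (0:ℝ) := by ext; simp [hM]
      rw [this]
      exact ⟨memLp_const 0, by simp⟩
    | succ n ih =>
      obtain ⟨_, h4, h5⟩ := step n ih.1
      rw [hMs]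
      refine ⟨h4, ?_⟩
      simp only
      rw [h5, Finset.sum_range_succ, mul_add]
      refine add_le_add ih.2 ?_
      simp only [div_pow, integral_div]
      rw [mul_assoc]
      gcongr
      rw [mul_one_div]
      gcongr
      exact (he2 n).2
  have hmart : Martingale M F μ := by
    refine martingale_of_condExp_sub_eq_zero_nat (fun n => (hMF n).stronglyMeasurable)
      (fun n => (hM2 n).1.integrable (by norm_num)) fun n => ?_
    have hd : M (n+1) - M n = (fun ω => e n ω / ((n:ℝ)+1)) * V n := by
      rw [hMs]; ext ω; simp
    rw [hd]
    have hint : Integrable ((fun ω => e n ω / ((n:ℝ)+1)) * V n) μ :=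
      (hM2 n).2.2.integrable (by norm_num)
    have h6 := condExp_mul_of_stronglyMeasurable_left (m := F n) (μ := μ)
      ((heF n).div_const ((n:ℝ)+1)).stronglyMeasurable hint ((hV2 n).integrable (by norm_num))
    have h7 := condExp_indep_eq (μ := μ) (f := V n) (hV n).comap_le (F.le n)
      (Measurable.stronglyMeasurable (comap_measurable (V n))) (hIndep n).symm
    filter_upwards [h6, h7] with ω h6 h7
    rw [h6, Pi.mul_apply, h7, h0 n]
    simp
  obtain ⟨R, hR⟩ : ∃ R : ℝ, ∀ n, ∫ ω, M n ω ^ 2 ∂μ ≤ R := by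
    have hs : Summable (fun k : ℕ => 1/((k:ℝ)+1)^2) := by
      have := (summable_nat_add_iff 1).2 (Real.summable_one_div_nat_pow.2 (by norm_num : 1 < 2))
      simpa using this
    refine ⟨σ^2 * K * ∑' k : ℕ, 1/((k:ℝ)+1)^2, fun n => (hM2 n).2.1.trans ?_⟩
    gcongr
    exact hs.sum_le_tsum _ fun _ _ => by positivity
  have hbdd : ∀ n, eLpNorm (M n) 1 μ ≤ ((R + 1).toNNReal : ENNReal) := by
    intro n
    have hi := (hM2 n).1.integrable (q := 2) (by norm_num)
    rw [eLpNorm_one_eq_lintegral_enorm, ← ofReal_integral_norm_eq_lintegral_enorm hi]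
    apply ENNReal.ofReal_le_ofReal
    have : ∫ ω, ‖M n ω‖ ∂μ ≤ ∫ ω, (M n ω ^ 2 + 1) ∂μ := by
      refine integral_mono hi.norm ((hM2 n).1.integrable_sq.add (integrable_const 1)) fun ω => ?_
      simp only [Real.norm_eq_abs]
      rw [← sq_abs]
      nlinarith [sq_nonneg (|M n ω| - 1), sq_nonneg (|M n ω|)]
    rw [integral_add (hM2 n).1.integrable_sq (integrable_const 1)] at this
    simp at this
    have := hR n
    simp at *
    linarith
  filter_upwards [hmart.submartingale.exists_ae_tendsto_of_bdd hbdd] with ω ⟨l, hl⟩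
  exact kron_aux (fun k => e k ω * V k ω) l hl

/-- Theorem 4(ii): if `γ̃ₙ → γ₀` a.s. and
`sup_{t∈[0,A]} |log g̃ₙ(t) - log g₀(t)| → 0` a.s., then the innovation-variance estimator
`σ̃ₙ²` converges to `σ²` almost surely. -/
theorem stmt16
    {Ω : Type*} [MeasurableSpace Ω] (μ : Measure Ω) [IsProbabilityMeasure μ]
    (Δ A xm xM : ℝ) (hΔ : 0 < Δ) (hA : 0 < A) (hxm : 0 < xm) (hxM : 0 < xM)
    (x z : ℝ → ℝ)
    (hxcont : ContinuousOn x (Icc 0 Δ))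
    (hxrange : ∀ w ∈ Icc (0 : ℝ) Δ, x w ∈ Ioo (-xm) xM)
    (hzcont : ContinuousOn z (Icc 0 Δ))
    (hzrange : ∀ w ∈ Icc (0 : ℝ) Δ, z w ∈ Icc 0 A)
    (hzmono : StrictMonoOn z (Icc 0 Δ))
    (U : ℤ → Ω → ℝ) (hUmeas : ∀ j, Measurable (U j))
    (hUindep : iIndepFun U μ)
    (hUident : ∀ j, μ.map (U j) = μ.map (U 0))
    (σ : ℝ) (hσ : 0 < σ)
    (hUmean : ∫ ω, U 0 ω ∂μ = 0)
    (hUvar : ∫ ω, (U 0 ω) ^ 2 ∂μ = σ ^ 2)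
    (hU8 : Integrable (fun ω => (U 0 ω) ^ 8) μ)
    (φ : ℝ) (hφ0 : φ ≠ 0) (hφ1 : |φ| < 1)
    (ε : ℤ → Ω → ℝ) (hεmeas : ∀ i, Measurable (ε i))
    (hεsum : ∀ᵐ ω ∂μ, ∀ i : ℤ, HasSum (fun j : ℕ => φ ^ j * U (i - (j : ℤ)) ω) (ε i ω))
    (γ₀ : ℝ) (hγ₀ : γ₀ ∈ Ioo (-(1 / xM)) (1 / xm))
    (g₀ : ℝ → ℝ) (c : ℝ) (hc : 0 < c)
    (hg₀lb : ∀ t ∈ Icc (0 : ℝ) A, c ≤ g₀ t)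
    (hg₀cont : ContinuousOn g₀ (Icc 0 A))
    (hg₀anti : AntitoneOn g₀ (Icc 0 A))
    (γtil : ℕ → Ω → ℝ)
    (hγtilmem : ∀ n ω, γtil n ω ∈ Icc (-(1 / xM)) (1 / xm))
    (hγtilconv : ∀ᵐ ω ∂μ, Tendsto (fun n : ℕ => γtil n ω) atTop (𝓝 γ₀))
    (gtil : ℕ → Ω → ℝ → ℝ)
    (hgtilpos : ∀ n ω, ∀ t ∈ Icc (0 : ℝ) A, 0 < gtil n ω t)
    (hgtilcont : ∀ n ω, ContinuousOn (gtil n ω) (Icc 0 A))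
    (hgtilconv : ∀ᵐ ω ∂μ, ∀ e > (0 : ℝ), ∃ N : ℕ, ∀ n ≥ N, ∀ t ∈ Icc (0 : ℝ) A,
      |Real.log (gtil n ω t) - Real.log (g₀ t)| < e)
    :
    ∀ᵐ ω ∂μ, Tendsto
      (fun n : ℕ => sigmaTilSq Δ γ₀ x z g₀ ε (γtil n ω) (gtil n ω) n ω)
      atTop (𝓝 (σ ^ 2)) := by
  -- finite second moments and the shifted innovations
  have hident : ∀ j, IdentDistrib (U j) (U 0) μ μ := fun j =>
    ⟨(hUmeas j).aemeasurable, (hUmeas 0).aemeasurable, hUident j⟩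
  have hsq : Integrable (fun ω => (U 0 ω) ^ 2) μ := by
    refine Integrable.mono' (hU8.add (integrable_const 1)) ((hUmeas 0).pow_const 2).aestronglyMeasurable
      (ae_of_all _ fun ω => ?_)
    rw [Real.norm_eq_abs, abs_of_nonneg (sq_nonneg _)]
    simp only [Pi.add_apply]
    nlinarith [sq_nonneg ((U 0 ω)^4 - 1/2), sq_nonneg ((U 0 ω)^2 - 1/2), sq_nonneg (U 0 ω ^ 2)]
  have hL2 : MemLp (U 0) 2 μ :=
    (memLp_two_iff_integrable_sq (hUmeas 0).aestronglyMeasurable).2 hsq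
  set V : ℕ → Ω → ℝ := fun n => U ((n:ℤ) + 1) with hVdef
  have hVmeas : ∀ n, Measurable (V n) := fun n => hUmeas _
  have hVind : iIndepFun V μ :=
    hUindep.precomp (g := fun n : ℕ => (n:ℤ) + 1) (fun a b h => by simpa using h)
  have hVid : ∀ n, IdentDistrib (V n) (U 0) μ μ := fun n => hident _
  have hV2 : ∀ n, MemLp (V n) 2 μ := fun n => (hVid n).symm.memLp_snd hL2
  have hVmean : ∀ n, ∫ ω, V n ω ∂μ = 0 := fun n => by rw [(hVid n).integral_eq, hUmean]
  have hVidsq : ∀ n, IdentDistrib (fun ω => V n ω ^ 2) (fun ω => U 0 ω ^ 2) μ μ := fun n =>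
    (hVid n).comp (u := fun t : ℝ => t ^ 2) (by fun_prop)
  have hVvar : ∀ n, ∫ ω, V n ω ^ 2 ∂μ = σ ^ 2 := fun n => by rw [(hVidsq n).integral_eq, hUvar]
  have hslln := strong_law_ae_real (μ := μ) (fun n ω => V n ω ^ 2) (hV2 0).integrable_sq
    (fun i j hij => (hVind.indepFun hij).comp (φ := fun t : ℝ => t ^ 2) (ψ := fun t : ℝ => t ^ 2)
      (by fun_prop) (by fun_prop))
    (fun i => (hVidsq i).trans (hVidsq 0).symm)
  simp only [hVvar 0] at hslln
  have hcross := mart_lln μ V hVmeas hVind hV2 σ φ hφ1 hVmean hVvar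
  filter_upwards [hslln, hcross, hεsum, hγtilconv, hgtilconv] with ω h1 h2 h3 h4 h5
  have hrec : ∀ n : ℕ, ε ((n:ℤ)+1) ω = φ * ε (n:ℤ) ω + V n ω := by
    intro n
    have ha := h3 ((n:ℤ)+1)
    have hb := (h3 (n:ℤ)).mul_left φ
    have hc' := (hasSum_nat_add_iff' 1).2 ha
    have hfun : (fun i : ℕ => φ * (φ ^ i * U ((n:ℤ) - (i:ℤ)) ω)) =
        fun j : ℕ => φ ^ (j + 1) * U ((n:ℤ) + 1 - ((j + 1 : ℕ) : ℤ)) ω := by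
      funext j
      push_cast
      rw [show (n:ℤ) + 1 - ((j:ℤ) + 1) = n - j by ring]
      ring
    rw [hfun] at hb
    have := hc'.unique hb
    simp at this
    simp only [hVdef]
    linarith
  have hdiff : ∀ n : ℕ, ε (n:ℤ) ω = arZ φ V n ω + ε 0 ω * φ ^ n := by
    intro n
    induction n with
    | zero => simp [arZ]
    | succ n ih =>
      push_cast
      rw [hrec, ih]
      simp only [arZ]
      ring
  refine det_main_s16 φ σ hφ1 hσ (fun n => arZ φ V n ω) (fun n => V n ω) rfl (fun n => rfl) h1 h2
    (fun n i => resid Δ γ₀ x z g₀ ε (γtil n ω) (gtil n ω) n i ω) ?_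
  refine ms_aux φ (ε 0 ω) hφ1 _ fun d hd => ?_
  obtain ⟨N1, hN1⟩ := unif_log Δ xm xM γ₀ hxm hxM x hxrange hγ₀ (fun n => γtil n ω) h4 (d/2)
    (half_pos hd)
  obtain ⟨N2, hN2⟩ := h5 (d/2) (half_pos hd)
  refine ⟨max N1 N2, fun n hn i hi => ?_⟩
  rw [Finset.mem_Icc] at hi
  have hn0 : (0:ℝ) < n := by exact_mod_cast (by omega : 0 < n)
  have hin : (i:ℝ) ≤ n := by exact_mod_cast hi.2
  have hw : (i:ℝ) * Δ / n ∈ Icc (0:ℝ) Δ := by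
    refine ⟨by positivity, ?_⟩
    rw [div_le_iff₀ hn0]
    nlinarith
  have b1 := hN1 n (le_trans (le_max_left _ _) hn) _ hw
  have b2 := hN2 n (le_trans (le_max_right _ _) hn) _ (hzrange _ hw)
  simp only [resid]
  rw [hdiff i]
  rw [abs_lt] at b1 b2 ⊢
  constructor <;> linarith [b1.1, b1.2, b2.1, b2.2]
end
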